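/- Drift in eccentricity, mutual inclination and node of the second planet. Consider the Newtonian 4-body problem with masses m_0,m_1,m_2,m_3 > 0 satisfying m_0 ≠ m_1. For every N ∈ ℕ, every itinerary e_2^0,…,e_2^N ∈ (0,1), θ_{23}^0,…,θ_{23}^N ∈ (0,π), h_2^0,…,h_2^N ∈ ℝ/2πℤ, and every δ > 0, there exist a collision-free solution of Newton's equations and times t_0 < t_1 < ⋯ < t_N at which E_2 < 0, C_2 and C_3 are nonzero and (C_2^{(1)}, C_2^{(2)}) ≠ (0,0), such that |e_2(t_k) − e_2^k| ≤ δ, |θ_{23}(t_k) − θ_{23}^k| ≤ δ, and dist(h_2(t_k), h_2^k) ≤ δ on ℝ/2πℤ, for all k = 0,1,…,N. -/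

import Mathlib

noncomputable section

open Real Filter Set
open scoped BigOperators RealInnerProductSpace Topology

/-- Vectors in physical space `ℝ³`, with the Euclidean norm. -/
abbrev V3 : Type := EuclideanSpace ℝ (Fin 3)

/-- The cross product on `ℝ³`. -/
def cross3 (a b : V3) : V3 :=
  (WithLp.equiv 2 (Fin 3 → ℝ)).symm
    ![a 1 * b 2 - a 2 * b 1, a 2 * b 0 - a 0 * b 2, a 0 * b 1 - a 1 * b 0]

/-- `x`, with velocity `v`, is a collision-free solution of the Newtonian 4-body problem
with masses `m` on the set of times `I`. -/
def IsFourBodySolution (m : Fin 4 → ℝ) (I : Set ℝ) (x v : Fin 4 → ℝ → V3) : Prop :=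
  (∀ t ∈ I, ∀ i j : Fin 4, i ≠ j → x i t ≠ x j t) ∧
  (∀ j : Fin 4, ∀ t ∈ I, HasDerivAt (x j) (v j t) t) ∧
  (∀ j : Fin 4, ∀ t ∈ I, HasDerivAt (v j)
      (∑ i ∈ Finset.univ.filter (fun i => i ≠ j),
        (m i / ‖x i t - x j t‖ ^ 3) • (x i t - x j t)) t)

def Mtot1 (m : Fin 4 → ℝ) : ℝ := m 0 + m 1
def Mtot2 (m : Fin 4 → ℝ) : ℝ := m 0 + m 1 + m 2
def Mtot3 (m : Fin 4 → ℝ) : ℝ := m 0 + m 1 + m 2 + m 3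
def mu1 (m : Fin 4 → ℝ) : ℝ := m 0 * m 1 / Mtot1 m
def mu2 (m : Fin 4 → ℝ) : ℝ := Mtot1 m * m 2 / Mtot2 m
def mu3 (m : Fin 4 → ℝ) : ℝ := Mtot2 m * m 3 / Mtot3 m
def sig01 (m : Fin 4 → ℝ) : ℝ := m 0 / Mtot1 m
def sig11 (m : Fin 4 → ℝ) : ℝ := m 1 / Mtot1 m
def sig02 (m : Fin 4 → ℝ) : ℝ := m 0 / Mtot2 m
def sig12 (m : Fin 4 → ℝ) : ℝ := m 1 / Mtot2 m
def sig22 (m : Fin 4 → ℝ) : ℝ := m 2 / Mtot2 m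

/-- Jacobi positions. -/
def jq1 (pos : Fin 4 → V3) : V3 := pos 1 - pos 0
def jq2 (m : Fin 4 → ℝ) (pos : Fin 4 → V3) : V3 := pos 2 - sig01 m • pos 0 - sig11 m • pos 1
def jq3 (m : Fin 4 → ℝ) (pos : Fin 4 → V3) : V3 :=
  pos 3 - sig02 m • pos 0 - sig12 m • pos 1 - sig22 m • pos 2

/-- Linear momenta `y j = m j • ẋ j`. -/
def lmom (m : Fin 4 → ℝ) (vel : Fin 4 → V3) (j : Fin 4) : V3 := m j • vel j

/-- Jacobi momenta. -/
def jp1 (m : Fin 4 → ℝ) (vel : Fin 4 → V3) : V3 :=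
  lmom m vel 1 + sig11 m • lmom m vel 2 + sig11 m • lmom m vel 3
def jp2 (m : Fin 4 → ℝ) (vel : Fin 4 → V3) : V3 := lmom m vel 2 + sig22 m • lmom m vel 3
def jp3 (m : Fin 4 → ℝ) (vel : Fin 4 → V3) : V3 := lmom m vel 3

/-- Kepler energies of the three fictitious bodies. -/
def kepE1 (m : Fin 4 → ℝ) (pos vel : Fin 4 → V3) : ℝ :=
  ‖jp1 m vel‖ ^ 2 / (2 * mu1 m) - mu1 m * Mtot1 m / ‖jq1 pos‖
def kepE2 (m : Fin 4 → ℝ) (pos vel : Fin 4 → V3) : ℝ :=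
  ‖jp2 m vel‖ ^ 2 / (2 * mu2 m) - mu2 m * Mtot2 m / ‖jq2 m pos‖
def kepE3 (m : Fin 4 → ℝ) (pos vel : Fin 4 → V3) : ℝ :=
  ‖jp3 m vel‖ ^ 2 / (2 * mu3 m) - mu3 m * Mtot3 m / ‖jq3 m pos‖

/-- Semimajor axes. -/
def sma1 (m : Fin 4 → ℝ) (pos vel : Fin 4 → V3) : ℝ :=
  -(mu1 m * Mtot1 m) / (2 * kepE1 m pos vel)
def sma2 (m : Fin 4 → ℝ) (pos vel : Fin 4 → V3) : ℝ :=
  -(mu2 m * Mtot2 m) / (2 * kepE2 m pos vel)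
def sma3 (m : Fin 4 → ℝ) (pos vel : Fin 4 → V3) : ℝ :=
  -(mu3 m * Mtot3 m) / (2 * kepE3 m pos vel)

/-- Circular angular momenta `L j = μ j √(M j a j)`. -/
def Lact1 (m : Fin 4 → ℝ) (pos vel : Fin 4 → V3) : ℝ :=
  mu1 m * Real.sqrt (Mtot1 m * sma1 m pos vel)
def Lact2 (m : Fin 4 → ℝ) (pos vel : Fin 4 → V3) : ℝ :=
  mu2 m * Real.sqrt (Mtot2 m * sma2 m pos vel)
def Lact3 (m : Fin 4 → ℝ) (pos vel : Fin 4 → V3) : ℝ :=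
  mu3 m * Real.sqrt (Mtot3 m * sma3 m pos vel)

/-- Angular momenta `C j = q j × p j`. -/
def angC1 (m : Fin 4 → ℝ) (pos vel : Fin 4 → V3) : V3 := cross3 (jq1 pos) (jp1 m vel)
def angC2 (m : Fin 4 → ℝ) (pos vel : Fin 4 → V3) : V3 := cross3 (jq2 m pos) (jp2 m vel)
def angC3 (m : Fin 4 → ℝ) (pos vel : Fin 4 → V3) : V3 := cross3 (jq3 m pos) (jp3 m vel)

/-- Eccentricities `e j = √(1 - ‖C j‖²/L j²)`. -/
def ecc1 (m : Fin 4 → ℝ) (pos vel : Fin 4 → V3) : ℝ :=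
  Real.sqrt (1 - ‖angC1 m pos vel‖ ^ 2 / (Lact1 m pos vel) ^ 2)
def ecc2 (m : Fin 4 → ℝ) (pos vel : Fin 4 → V3) : ℝ :=
  Real.sqrt (1 - ‖angC2 m pos vel‖ ^ 2 / (Lact2 m pos vel) ^ 2)
def ecc3 (m : Fin 4 → ℝ) (pos vel : Fin 4 → V3) : ℝ :=
  Real.sqrt (1 - ‖angC3 m pos vel‖ ^ 2 / (Lact3 m pos vel) ^ 2)

/-- The normalised angular momentum of planet 2, `C̃₂ = C₂ / L₂`. -/
def nAngC2 (m : Fin 4 → ℝ) (pos vel : Fin 4 → V3) : V3 :=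
  (Lact2 m pos vel)⁻¹ • angC2 m pos vel

/-- Deprit actions. -/
def dGamma1 (m : Fin 4 → ℝ) (pos vel : Fin 4 → V3) : ℝ := ‖angC1 m pos vel‖
def dGamma2 (m : Fin 4 → ℝ) (pos vel : Fin 4 → V3) : ℝ := ‖angC2 m pos vel‖
def dGamma3 (m : Fin 4 → ℝ) (pos vel : Fin 4 → V3) : ℝ := ‖angC3 m pos vel‖
def dPsi1 (m : Fin 4 → ℝ) (pos vel : Fin 4 → V3) : ℝ := ‖angC1 m pos vel + angC2 m pos vel‖
def dPsi2 (m : Fin 4 → ℝ) (pos vel : Fin 4 → V3) : ℝ :=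
  ‖angC1 m pos vel + angC2 m pos vel + angC3 m pos vel‖

/-- Configuration of the system at time `t`. -/
def posAt (x : Fin 4 → ℝ → V3) (t : ℝ) : Fin 4 → V3 := fun i => x i t

/-- The mutual inclination `θ₂₃ ∈ [0,π]` of planets 2 and 3, defined by
`cos θ₂₃ = ⟨C₂,C₃⟩/(‖C₂‖‖C₃‖)`. -/
def incl23 (m : Fin 4 → ℝ) (pos vel : Fin 4 → V3) : ℝ :=
  Real.arccos (⟪angC2 m pos vel, angC3 m pos vel⟫ /
    (‖angC2 m pos vel‖ * ‖angC3 m pos vel‖))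

/-- The longitude of the node of planet 2, `h₂ ∈ ℝ/2πℤ`: the argument of the planar vector
`(−C₂⁽²⁾, C₂⁽¹⁾)`. -/
def node2 (m : Fin 4 → ℝ) (pos vel : Fin 4 → V3) : Real.Angle :=
  ((Complex.arg ⟨-(angC2 m pos vel 1), angC2 m pos vel 0⟩ : ℝ) : Real.Angle)

/-!
Pair body `2` with body `0` and body `3` with body `1` in two tight binaries, which in turn move
about each other on a much wider orbit. All three relative motions start at the apocentre of a
nearly rectilinear Kepler ellipse, with a small angular momentum that keeps them away from
collisions; the tides are so weak that angular momentum and Laplace–Runge–Lenz vector stay nearly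
constant for as many revolutions as desired. Between two close passages the radial velocity of such
a motion takes every prescribed small value away from the attracting centre. As the three periods
are widely separated, the three radial velocities can be prescribed simultaneously, once for each
entry of the itinerary.

In units of the wide orbit the binaries then contribute nothing to the Jacobi positions of planets
`2` and `3`, but their velocities contribute freely chosen terms `τ` and `g ν` to the Jacobi
momenta, along a direction tilted by `g²` out of the horizontal plane; here `g` is the initial speed
of the wide orbit, whose radial velocity is `-κ g`. As `g → 0⁺`, `τ` determines the eccentricity of
planet `2`, the horizontal part of `C₂`, of size `g²`, has the direction of `(κ, 1)` up to sign,
which gives the node, and `g⁻¹ C₃` tends to a multiple of `(0, -c, ν)` with `c > 0`, which gives the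
mutual inclination with the nearly vertical `C₂`.
-/

/-! ### The cross product -/

@[simp] lemma cross3_zero_coord (a b : V3) : cross3 a b 0 = a 1 * b 2 - a 2 * b 1 := rfl
@[simp] lemma cross3_one_coord (a b : V3) : cross3 a b 1 = a 2 * b 0 - a 0 * b 2 := rfl
@[simp] lemma cross3_two_coord (a b : V3) : cross3 a b 2 = a 0 * b 1 - a 1 * b 0 := rfl

lemma V3.ext {a b : V3} (h0 : a 0 = b 0) (h1 : a 1 = b 1) (h2 : a 2 = b 2) : a = b := by
  ext i
  fin_cases i <;> assumption

lemma V3.inner_eq (a b : V3) : ⟪a, b⟫ = a 0 * b 0 + a 1 * b 1 + a 2 * b 2 := by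
  simp [PiLp.inner_apply, Fin.sum_univ_three]
  ring

lemma V3.norm_sq (a : V3) : ‖a‖ ^ 2 = a 0 ^ 2 + a 1 ^ 2 + a 2 ^ 2 := by
  rw [EuclideanSpace.real_norm_sq_eq, Fin.sum_univ_three]

lemma V3.abs_apply_le (a : V3) (i : Fin 3) : |a i| ≤ ‖a‖ := by
  simpa using PiLp.norm_apply_le a i

lemma V3.norm_le_sum (a : V3) : ‖a‖ ≤ |a 0| + |a 1| + |a 2| := by
  refine abs_le_of_sq_le_sq' ?_ (by positivity) |>.2
  rw [V3.norm_sq, ← sq_abs (a 0), ← sq_abs (a 1), ← sq_abs (a 2)]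
  nlinarith [mul_nonneg (abs_nonneg (a 0)) (abs_nonneg (a 1)),
    mul_nonneg (abs_nonneg (a 0)) (abs_nonneg (a 2)),
    mul_nonneg (abs_nonneg (a 1)) (abs_nonneg (a 2))]

lemma cross3_add_left (a b c : V3) : cross3 (a + b) c = cross3 a c + cross3 b c := by
  apply V3.ext <;> simp <;> ring

lemma cross3_add_right (a b c : V3) : cross3 a (b + c) = cross3 a b + cross3 a c := by
  apply V3.ext <;> simp <;> ring

lemma cross3_sub_left (a b c : V3) : cross3 (a - b) c = cross3 a c - cross3 b c := by
  apply V3.ext <;> simp <;> ring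

lemma cross3_sub_right (a b c : V3) : cross3 a (b - c) = cross3 a b - cross3 a c := by
  apply V3.ext <;> simp <;> ring

lemma cross3_smul_left (s : ℝ) (a b : V3) : cross3 (s • a) b = s • cross3 a b := by
  apply V3.ext <;> simp <;> ring

lemma cross3_smul_right (s : ℝ) (a b : V3) : cross3 a (s • b) = s • cross3 a b := by
  apply V3.ext <;> simp <;> ring

lemma cross3_self (a : V3) : cross3 a a = 0 := by
  apply V3.ext <;> simp <;> ring

lemma cross3_cross3 (a b c : V3) :
    cross3 a (cross3 b c) = ⟪a, c⟫ • b - ⟪a, b⟫ • c := by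
  apply V3.ext <;> simp [V3.inner_eq] <;> ring

lemma inner_cross3_self_left (a b : V3) : ⟪a, cross3 a b⟫ = 0 := by
  simp only [V3.inner_eq, cross3_zero_coord, cross3_one_coord, cross3_two_coord]
  ring

lemma inner_cross3_self_right (a b : V3) : ⟪b, cross3 a b⟫ = 0 := by
  simp only [V3.inner_eq, cross3_zero_coord, cross3_one_coord, cross3_two_coord]
  ring

lemma norm_cross3_sq (a b : V3) : ‖cross3 a b‖ ^ 2 = ‖a‖ ^ 2 * ‖b‖ ^ 2 - ⟪a, b⟫ ^ 2 := by
  simp only [V3.norm_sq, V3.inner_eq, cross3_zero_coord, cross3_one_coord, cross3_two_coord]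
  ring

lemma norm_cross3_le (a b : V3) : ‖cross3 a b‖ ≤ ‖a‖ * ‖b‖ := by
  refine abs_le_of_sq_le_sq' ?_ (by positivity) |>.2
  rw [norm_cross3_sq]
  nlinarith [sq_nonneg ⟪a, b⟫]

/-- The cross product as a continuous bilinear map. -/
def cross3CLM : V3 →L[ℝ] V3 →L[ℝ] V3 :=
  LinearMap.mkContinuous₂
    (LinearMap.mk₂ ℝ cross3 cross3_add_left cross3_smul_left cross3_add_right
      (fun s a b => cross3_smul_right s a b)) 1
    (fun a b => by simpa using norm_cross3_le a b)

lemma hasDerivAt_cross3 {a b : ℝ → V3} {a' b' : V3} {t : ℝ}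
    (ha : HasDerivAt a a' t) (hb : HasDerivAt b b' t) :
    HasDerivAt (fun s => cross3 (a s) (b s)) (cross3 (a t) b' + cross3 a' (b t)) t :=
  cross3CLM.hasDerivAt_of_bilinear (fun _ => ha) (fun _ => hb)

/-! ### Existence of solutions -/

section SoftKepler

variable {E : Type*} [NormedAddCommGroup E] {r : ℝ}

lemma inv_max_norm_le (hr : 0 < r) (x : E) : (max ‖x‖ r)⁻¹ ≤ r⁻¹ :=
  inv_anti₀ hr (le_max_right _ _)

lemma norm_mul_inv_max_norm_le (hr : 0 < r) (x : E) : ‖x‖ * (max ‖x‖ r)⁻¹ ≤ 1 := by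
  rw [← div_eq_mul_inv, div_le_one (lt_max_of_lt_right hr)]
  exact le_max_left _ _

lemma abs_inv_max_norm_sub_le (hr : 0 < r) (x y : E) :
    |(max ‖x‖ r)⁻¹ - (max ‖y‖ r)⁻¹| ≤ (max ‖x‖ r)⁻¹ * (max ‖y‖ r)⁻¹ * ‖x - y‖ := by
  have hx : 0 < max ‖x‖ r := lt_max_of_lt_right hr
  have hy : 0 < max ‖y‖ r := lt_max_of_lt_right hr
  have h : |max ‖y‖ r - max ‖x‖ r| ≤ ‖x - y‖ := by
    refine (abs_max_sub_max_le_abs _ _ _).trans ?_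
    rw [abs_sub_comm]
    exact abs_norm_sub_norm_le x y
  rw [inv_sub_inv hx.ne' hy.ne', abs_div, abs_of_pos (mul_pos hx hy), div_eq_inv_mul, mul_inv]
  gcongr

variable [NormedSpace ℝ E]

/-- The Kepler field `x / ‖x‖³`, softened inside the ball of radius `r` so as to be bounded and
globally Lipschitz. -/
def softKepler (r : ℝ) (x : E) : E := ((max ‖x‖ r)⁻¹ ^ 3) • x

lemma softKepler_of_le {x : E} (h : r ≤ ‖x‖) : softKepler r x = (1 / ‖x‖ ^ 3) • x := by
  rw [softKepler, max_eq_left h, inv_pow, one_div]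

lemma norm_softKepler_le (hr : 0 < r) (x : E) : ‖softKepler r x‖ ≤ r⁻¹ ^ 2 := by
  have h := norm_mul_inv_max_norm_le hr x
  have h' := inv_max_norm_le hr x
  rw [softKepler, norm_smul, Real.norm_eq_abs, abs_of_nonneg (by positivity)]
  calc (max ‖x‖ r)⁻¹ ^ 3 * ‖x‖ = (max ‖x‖ r)⁻¹ ^ 2 * (‖x‖ * (max ‖x‖ r)⁻¹) := by ring
    _ ≤ r⁻¹ ^ 2 * 1 := by gcongr
    _ = r⁻¹ ^ 2 := mul_one _

lemma norm_softKepler_sub_le (hr : 0 < r) (x y : E) :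
    ‖softKepler r x - softKepler r y‖ ≤ 4 * r⁻¹ ^ 3 * ‖x - y‖ := by
  set a := (max ‖x‖ r)⁻¹ with ha
  set b := (max ‖y‖ r)⁻¹ with hb
  have ha0 : 0 ≤ a := by positivity
  have har : a ≤ r⁻¹ := inv_max_norm_le hr x
  have hbr : b ≤ r⁻¹ := inv_max_norm_le hr y
  have hab : |a - b| ≤ a * b * ‖x - y‖ := abs_inv_max_norm_sub_le hr x y
  have hyb : ‖y‖ * b ≤ 1 := norm_mul_inv_max_norm_le hr y
  have hcubes : |a ^ 3 - b ^ 3| * ‖y‖ ≤ 3 * r⁻¹ ^ 3 * ‖x - y‖ := by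
    have hfac : a ^ 3 - b ^ 3 = (a ^ 2 + a * b + b ^ 2) * (a - b) := by ring
    rw [hfac, abs_mul, abs_of_nonneg (by positivity)]
    calc (a ^ 2 + a * b + b ^ 2) * |a - b| * ‖y‖
        ≤ (r⁻¹ ^ 2 + r⁻¹ * r⁻¹ + r⁻¹ ^ 2) * (a * b * ‖x - y‖) * ‖y‖ := by gcongr
      _ = 3 * r⁻¹ ^ 2 * a * ‖x - y‖ * (‖y‖ * b) := by ring
      _ ≤ 3 * r⁻¹ ^ 2 * r⁻¹ * ‖x - y‖ * 1 := by gcongr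
      _ = 3 * r⁻¹ ^ 3 * ‖x - y‖ := by ring
  calc ‖softKepler r x - softKepler r y‖ = ‖a ^ 3 • (x - y) + (a ^ 3 - b ^ 3) • y‖ := by
        simp only [softKepler, ← ha, ← hb]
        congr 1
        module
    _ ≤ a ^ 3 * ‖x - y‖ + |a ^ 3 - b ^ 3| * ‖y‖ := by
        refine (norm_add_le _ _).trans ?_
        rw [norm_smul, norm_smul, Real.norm_eq_abs, Real.norm_eq_abs,
          abs_of_nonneg (pow_nonneg ha0 3)]
    _ ≤ r⁻¹ ^ 3 * ‖x - y‖ + 3 * r⁻¹ ^ 3 * ‖x - y‖ := by gcongr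
    _ = 4 * r⁻¹ ^ 3 * ‖x - y‖ := by ring

lemma norm_kepler_sub_le (hr : 0 < r) {x y : E} (hx : r ≤ ‖x‖) (hy : r ≤ ‖y‖) :
    ‖(1 / ‖x‖ ^ 3) • x - (1 / ‖y‖ ^ 3) • y‖ ≤ 4 * r⁻¹ ^ 3 * ‖x - y‖ := by
  rw [← softKepler_of_le hx, ← softKepler_of_le hy]
  exact norm_softKepler_sub_le hr x y

end SoftKepler

section SecondOrder

variable {E : Type*} [NormedAddCommGroup E] [NormedSpace ℝ E]

lemma norm_slowed_field_le {G : E → E} {L c R : ℝ} (hc : 0 < c) (hL : ∀ x, ‖G x‖ ≤ L)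
    (hR : c⁻¹ * L ≤ 2 * c * R) {p p₀ : E × E} (hp₀ : ‖p₀.2‖ ≤ R) (hp : dist p p₀ ≤ R) :
    ‖(c • p.2, c⁻¹ • G p.1)‖ ≤ 2 * c * R := by
  have hp2 : ‖p.2‖ ≤ ‖p₀.2‖ + R := norm_le_norm_add_const_of_dist_le ((le_max_right _ _).trans hp)
  refine max_le ?_ ?_
  · rw [norm_smul, Real.norm_of_nonneg hc.le]
    nlinarith
  · rw [norm_smul, Real.norm_of_nonneg (by positivity)]
    exact (mul_le_mul_of_nonneg_left (hL _) (by positivity)).trans hR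

/-- Slowing the velocity down by the length of the time interval makes the first order field grow
slowly enough for Picard–Lindelöf to reach the end of the interval in one step. -/
lemma exists_solution_second_order [CompleteSpace E] {G : E → E} {K L : NNReal}
    (hG : LipschitzWith K G) (hL : ∀ x, ‖G x‖ ≤ L) (x₀ v₀ : E) {T : ℝ} (hT : 0 ≤ T) :
    ∃ x v : ℝ → E, x 0 = x₀ ∧ v 0 = v₀ ∧
      ∀ t ∈ Icc 0 T, HasDerivAt x (v t) t ∧ HasDerivAt v (G (x t)) t := by
  obtain ⟨τ, hτ⟩ : ∃ τ : NNReal, (τ : ℝ) = T + 1 := ⟨⟨T + 1, by positivity⟩, rfl⟩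
  have hτ0 : (0 : ℝ) < τ := by rw [hτ]; positivity
  set c : ℝ := (2 * τ)⁻¹ with hc
  have hc0 : 0 < c := by positivity
  let F : E × E → E × E := fun p => (c • p.2, c⁻¹ • G p.1)
  have hF : LipschitzWith (max (‖c‖₊ * 1) (‖c⁻¹‖₊ * (K * 1))) F :=
    ((lipschitzWith_smul c).comp .prod_snd).prodMk
      ((lipschitzWith_smul c⁻¹).comp (hG.comp .prod_fst))
  let R : NNReal := ‖c⁻¹ • v₀‖₊ + 2 * τ ^ 2 * L
  have hR : (R : ℝ) = ‖c⁻¹ • v₀‖ + 2 * τ ^ 2 * L := by simp [R]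
  have hτL : (0 : ℝ) ≤ 2 * τ ^ 2 * L := by positivity
  have hRL : c⁻¹ * L ≤ 2 * c * R := by
    rw [← div_le_iff₀' (by positivity), hR, hc]
    refine le_of_eq_of_le ?_ (le_add_of_nonneg_left (norm_nonneg _))
    field_simp
  have h0 : (0 : ℝ) ∈ Icc (-1) (T + 1) := ⟨by norm_num, by linarith⟩
  have hPL : IsPicardLindelof (fun _ => F) (⟨0, h0⟩ : Icc (-1) (T + 1)) (x₀, c⁻¹ • v₀) R 0
      (R / τ) (max (‖c‖₊ * 1) (‖c⁻¹‖₊ * (K * 1))) := by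
    refine .of_time_independent (fun p hp => ?_) hF.lipschitzOnWith ?_
    · refine (norm_slowed_field_le hc0 hL hRL (by linarith) hp).trans_eq ?_
      rw [hc, NNReal.coe_div]
      field_simp
    · rw [sub_zero, zero_sub, neg_neg, max_eq_left (by linarith), ← hτ, NNReal.coe_div,
        div_mul_cancel₀ _ hτ0.ne', NNReal.coe_zero, sub_zero]
  obtain ⟨α, hα0, hα⟩ := hPL.exists_eq_forall_mem_Icc_hasDerivWithinAt₀
  refine ⟨fun t => (α t).1, fun t => c • (α t).2, by simp [hα0], by simp [hα0, hc0.ne'],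
    fun t ht => ?_⟩
  have hαt : HasDerivAt α (F (α t)) t :=
    (hα t ⟨by linarith [ht.1], by linarith [ht.2]⟩).hasDerivAt
      (Icc_mem_nhds (by linarith [ht.1]) (by linarith [ht.2]))
  have hv : HasDerivAt (fun s => (α s).2) (c⁻¹ • G (α t).1) t := hαt.snd
  exact ⟨hαt.fst, (hv.const_smul c).congr_deriv (smul_inv_smul₀ hc0.ne' _)⟩

end SecondOrder

section SoftNewton

variable {ι : Type*} [Fintype ι] {E : Type*} [NormedAddCommGroup E] [NormedSpace ℝ E] {r : ℝ}
  {m : ι → ℝ}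

/-- Newton's accelerations for the masses `m`, with the forces softened at distances below `r`. -/
def softNewton (m : ι → ℝ) (r : ℝ) (p : ι → E) (j : ι) : E :=
  ∑ i, m i • softKepler r (p i - p j)

lemma norm_softNewton_le (hm : ∀ i, 0 ≤ m i) (hr : 0 < r) (p : ι → E) :
    ‖softNewton m r p‖ ≤ (∑ i, m i) * r⁻¹ ^ 2 := by
  have hM : 0 ≤ ∑ i, m i := Finset.sum_nonneg fun i _ => hm i
  refine (pi_norm_le_iff_of_nonneg (by positivity)).2 fun j => ?_
  rw [Finset.sum_mul]
  refine norm_sum_le_of_le _ fun i _ => ?_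
  rw [norm_smul, Real.norm_of_nonneg (hm i)]
  exact mul_le_mul_of_nonneg_left (norm_softKepler_le hr _) (hm i)

lemma norm_softNewton_sub_le (hm : ∀ i, 0 ≤ m i) (hr : 0 < r) (p q : ι → E) :
    ‖softNewton m r p - softNewton m r q‖ ≤ (∑ i, m i) * (8 * r⁻¹ ^ 3) * ‖p - q‖ := by
  have hM : 0 ≤ ∑ i, m i := Finset.sum_nonneg fun i _ => hm i
  refine (pi_norm_le_iff_of_nonneg (by positivity)).2 fun j => ?_
  rw [Pi.sub_apply, softNewton, softNewton, ← Finset.sum_sub_distrib, Finset.sum_mul,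
    Finset.sum_mul]
  refine norm_sum_le_of_le _ fun i _ => ?_
  have hpq : ‖p i - p j - (q i - q j)‖ ≤ 2 * ‖p - q‖ := by
    rw [sub_sub_sub_comm, two_mul]
    exact (norm_sub_le _ _).trans (add_le_add (norm_le_pi_norm (p - q) i)
      (norm_le_pi_norm (p - q) j))
  rw [← smul_sub, norm_smul, Real.norm_of_nonneg (hm i), mul_assoc]
  refine mul_le_mul_of_nonneg_left ?_ (hm i)
  calc _ ≤ 4 * r⁻¹ ^ 3 * ‖p i - p j - (q i - q j)‖ := norm_softKepler_sub_le hr _ _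
    _ ≤ 4 * r⁻¹ ^ 3 * (2 * ‖p - q‖) := by gcongr
    _ = 8 * r⁻¹ ^ 3 * ‖p - q‖ := by ring

lemma exists_softNewton_solution [CompleteSpace E] (hm : ∀ i, 0 ≤ m i) (hr : 0 < r)
    (x₀ v₀ : ι → E) {T : ℝ} (hT : 0 ≤ T) :
    ∃ x v : ℝ → ι → E, x 0 = x₀ ∧ v 0 = v₀ ∧
      ∀ t ∈ Icc 0 T, HasDerivAt x (v t) t ∧ HasDerivAt v (softNewton m r (x t)) t := by
  have hM : 0 ≤ ∑ i, m i := Finset.sum_nonneg fun i _ => hm i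
  refine exists_solution_second_order (K := ((∑ i, m i) * (8 * r⁻¹ ^ 3)).toNNReal)
    (L := ((∑ i, m i) * r⁻¹ ^ 2).toNNReal) (.of_dist_le' fun p q => ?_) (fun p => ?_) x₀ v₀ hT
  · simpa only [dist_eq_norm] using norm_softNewton_sub_le hm hr p q
  · rw [Real.coe_toNNReal _ (by positivity)]
    exact norm_softNewton_le hm hr p

end SoftNewton

lemma forall_neg_of_bootstrap {ι : Type*} [Finite ι] {T : ℝ} {φ : ι → ℝ → ℝ}
    (hφ : ∀ i, ∀ t ∈ Icc 0 T, ContinuousAt (φ i) t) (h0 : ∀ i, φ i 0 < 0)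
    (hstep : ∀ t ∈ Icc 0 T, (∀ s ∈ Icc 0 t, ∀ i, φ i s ≤ 0) → ∀ i, φ i t < 0) :
    ∀ t ∈ Icc 0 T, ∀ i, φ i t < 0 := by
  by_contra! hne
  set B := {t | t ∈ Icc 0 T ∧ ∃ i, 0 ≤ φ i t}
  have hBne : B.Nonempty := hne
  have hBbdd : BddBelow B := ⟨0, fun t ht => ht.1.1⟩
  set τ := sInf B
  have hτ0 : 0 ≤ τ := le_csInf hBne fun t ht => ht.1.1
  have hτT : τ ≤ T := by
    obtain ⟨b, hb⟩ := hBne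
    exact (csInf_le hBbdd hb).trans hb.1.2
  have hlt : ∀ s ∈ Ico 0 τ, ∀ i, φ i s < 0 := fun s hs i => by
    by_contra! hφs
    exact not_le.2 hs.2 (csInf_le hBbdd ⟨⟨hs.1, hs.2.le.trans hτT⟩, i, hφs⟩)
  have hle : ∀ s ∈ Icc 0 τ, ∀ i, φ i s ≤ 0 := fun s hs i => by
    rcases hs.2.lt_or_eq with hsτ | rfl
    · exact (hlt s ⟨hs.1, hsτ⟩ i).le
    rcases hτ0.eq_or_lt with h | h
    · exact h ▸ (h0 i).le
    · refine le_of_tendsto ((hφ i τ ⟨hτ0, hτT⟩).tendsto.mono_left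
        (nhdsWithin_le_nhds (s := Iio τ))) ?_
      filter_upwards [Ioo_mem_nhdsLT h] with s hs using (hlt s ⟨hs.1.le, hs.2⟩ i).le
  have hev : ∀ᶠ s in 𝓝 τ, ∀ i, φ i s < 0 := eventually_all.2 fun i =>
    (hφ i τ ⟨hτ0, hτT⟩).eventually_lt_const (hstep τ ⟨hτ0, hτT⟩ hle i)
  obtain ⟨l, u, hlu, hsub⟩ := mem_nhds_iff_exists_Ioo_subset.1 hev
  obtain ⟨c, hc, hcu⟩ := exists_lt_of_csInf_lt hBne hlu.2
  obtain ⟨i, hi⟩ := hc.2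
  exact not_lt.2 hi (hsub ⟨hlu.1.trans_le (csInf_le hBbdd hc), hcu⟩ i)

/-! ### Perturbed Kepler motions -/

section Derivatives

variable {E : Type*} [NormedAddCommGroup E] [InnerProductSpace ℝ E] {r u : ℝ → E} {u' f : E}
  {t : ℝ}

lemma norm_image_sub_le_of_hasDerivAt {F : Type*} [NormedAddCommGroup F] [NormedSpace ℝ F]
    {φ φ' : ℝ → F} {a b C : ℝ} (hφ : ∀ t ∈ Icc a b, HasDerivAt φ (φ' t) t)
    (hC : ∀ t ∈ Icc a b, ‖φ' t‖ ≤ C) {t : ℝ} (ht : t ∈ Icc a b) :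
    ‖φ t - φ a‖ ≤ C * (t - a) :=
  norm_image_sub_le_of_norm_deriv_le_segment' (fun s hs => (hφ s hs).hasDerivWithinAt)
    (fun s hs => hC s (Ico_subset_Icc_self hs)) t ht

lemma mul_sub_le_image_sub_of_hasDerivAt {φ φ' : ℝ → ℝ} {a b C : ℝ} (hab : a ≤ b)
    (hφ : ∀ t ∈ Icc a b, HasDerivAt φ (φ' t) t) (hC : ∀ t ∈ Icc a b, C ≤ φ' t) :
    C * (b - a) ≤ φ b - φ a := by
  refine (convex_Icc a b).mul_sub_le_image_sub_of_le_deriv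
    (fun t ht => (hφ t ht).continuousAt.continuousWithinAt)
    (fun t ht => (hφ t (interior_subset ht)).differentiableAt.differentiableWithinAt)
    (fun t ht => ?_) a (left_mem_Icc.2 hab) b (right_mem_Icc.2 hab) hab
  rw [(hφ t (interior_subset ht)).deriv]
  exact hC t (interior_subset ht)

lemma hasDerivAt_inv_norm (hr : HasDerivAt r u' t) (h0 : r t ≠ 0) :
    HasDerivAt (fun s => 1 / ‖r s‖) (-(⟪r t, u'⟫ / ‖r t‖ ^ 3)) t := by
  have hnorm : ‖r t‖ ≠ 0 := norm_ne_zero_iff.2 h0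
  have h := (hr.norm_sq.sqrt (pow_ne_zero 2 hnorm)).inv (by positivity)
  simp only [Real.sqrt_sq (norm_nonneg _)] at h
  simp only [one_div]
  refine h.congr_deriv ?_
  field_simp

lemma hasDerivAt_radial (hr : HasDerivAt r (u t) t)
    (hu : HasDerivAt u (-(1 / ‖r t‖ ^ 3) • r t + f) t) (h0 : r t ≠ 0) :
    HasDerivAt (fun s => ⟪r s, u s⟫) (‖u t‖ ^ 2 - 1 / ‖r t‖ + ⟪r t, f⟫) t := by
  have hnorm : ‖r t‖ ≠ 0 := norm_ne_zero_iff.2 h0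
  refine (hr.inner ℝ hu).congr_deriv ?_
  simp only [inner_add_right, inner_smul_right, real_inner_self_eq_norm_sq]
  field_simp
  ring

lemma hasDerivAt_vel_sq (hu : HasDerivAt u (-(1 / ‖r t‖ ^ 3) • r t + f) t) :
    HasDerivAt (fun s => ‖u s‖ ^ 2) (2 * ⟪u t, f⟫ - 2 * (⟪r t, u t⟫ / ‖r t‖ ^ 3)) t := by
  refine hu.norm_sq.congr_deriv ?_
  rw [inner_add_right, inner_smul_right, real_inner_comm (r t)]
  ring

lemma hasDerivAt_keplerEnergy (hr : HasDerivAt r (u t) t)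
    (hu : HasDerivAt u (-(1 / ‖r t‖ ^ 3) • r t + f) t) (h0 : r t ≠ 0) :
    HasDerivAt (fun s => ‖u s‖ ^ 2 / 2 - 1 / ‖r s‖) ⟪u t, f⟫ t := by
  refine (((hasDerivAt_vel_sq hu).div_const 2).sub (hasDerivAt_inv_norm hr h0)).congr_deriv ?_
  ring

/-- The Laplace–Runge–Lenz vector of a Kepler motion with gravitational parameter `1`: it points to
the pericentre, and its norm is the eccentricity. -/
def lrlVec (r u : E) : E := (‖u‖ ^ 2 - 1 / ‖r‖) • r - ⟪r, u⟫ • u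

lemma hasDerivAt_lrlVec (hr : HasDerivAt r (u t) t)
    (hu : HasDerivAt u (-(1 / ‖r t‖ ^ 3) • r t + f) t) (h0 : r t ≠ 0) :
    HasDerivAt (fun s => lrlVec (r s) (u s))
      ((2 * ⟪u t, f⟫) • r t - ⟪r t, f⟫ • u t - ⟪r t, u t⟫ • f) t := by
  refine ((((hasDerivAt_vel_sq hu).sub (hasDerivAt_inv_norm hr h0)).smul hr).sub
    ((hasDerivAt_radial hr hu h0).smul hu)).congr_deriv ?_
  simp only [Pi.sub_apply]
  module

end Derivatives

lemma hasDerivAt_angMom {r u : ℝ → V3} {f : V3} {t c : ℝ} (hr : HasDerivAt r (u t) t)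
    (hu : HasDerivAt u (c • r t + f) t) :
    HasDerivAt (fun s => cross3 (r s) (u s)) (cross3 (r t) f) t := by
  refine (hasDerivAt_cross3 hr hu).congr_deriv ?_
  rw [cross3_self, cross3_add_right, cross3_smul_right, cross3_self, smul_zero, zero_add, add_zero]

lemma norm_angMom_sq {r u : V3} (hr : r ≠ 0) :
    ‖cross3 r u‖ ^ 2 = ‖r‖ + ⟪r, lrlVec r u⟫ := by
  have hr : ‖r‖ ≠ 0 := norm_ne_zero_iff.2 hr
  rw [norm_cross3_sq, lrlVec, inner_sub_right, inner_smul_right, inner_smul_right,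
    real_inner_self_eq_norm_sq]
  field_simp
  ring

lemma inv_norm_smul_eq_cross3_sub_lrlVec (r u : V3) :
    (1 / ‖r‖) • r = cross3 u (cross3 r u) - lrlVec r u := by
  rw [cross3_cross3, lrlVec, real_inner_self_eq_norm_sq, real_inner_comm]
  module

/-- `r`, with velocity `u`, is a perturbed Kepler motion on `[0, T]` with perturbing
acceleration `f` of size at most `ε`, starting at an apocentre in the unit direction `d`
with a small velocity `g • e`, and subject to a priori bounds. The total effect `ε T` of the
perturbation is at most `κ g`, so that `κ` bounds the relative change of the angular momentum. -/
structure PertKepler (r u f : ℝ → V3) (d e : V3) (g κ ε T : ℝ) : Prop where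
  pos_deriv : ∀ t ∈ Icc 0 T, HasDerivAt r (u t) t
  vel_deriv : ∀ t ∈ Icc 0 T, HasDerivAt u (-(1 / ‖r t‖ ^ 3) • r t + f t) t
  ne_zero : ∀ t ∈ Icc 0 T, r t ≠ 0
  force_le : ∀ t ∈ Icc 0 T, ‖f t‖ ≤ ε
  pos_le : ∀ t ∈ Icc 0 T, ‖r t‖ ≤ 2
  vel_le : ∀ t ∈ Icc 0 T, ‖u t‖ ≤ 6 / g
  pos_zero : r 0 = d
  vel_zero : u 0 = g • e
  norm_dir : ‖d‖ = 1
  norm_vel_dir : ‖e‖ = 1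
  inner_dir : ⟪d, e⟫ = 0
  g_pos : 0 < g
  g_le : g ≤ 1 / 100
  kappa_nonneg : 0 ≤ κ
  kappa_le : κ ≤ 1 / 10000
  eps_le : ε ≤ 1 / 100
  eps_mul_le : ε * T ≤ κ * g

namespace PertKepler

variable {r u f : ℝ → V3} {d e : V3} {g κ ε T : ℝ}

lemma force_mul_time_le (H : PertKepler r u f d e g κ ε T) {t C : ℝ} (ht : t ∈ Icc 0 T)
    (hC : 0 ≤ C) : C * ε * (t - 0) ≤ C * (κ * g) := by
  have hε : 0 ≤ ε := (norm_nonneg _).trans (H.force_le t ht)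
  rw [sub_zero, mul_assoc]
  exact mul_le_mul_of_nonneg_left ((mul_le_mul_of_nonneg_left ht.2 hε).trans H.eps_mul_le) hC

lemma angMom_sub_le (H : PertKepler r u f d e g κ ε T) {t : ℝ} (ht : t ∈ Icc 0 T) :
    ‖cross3 (r t) (u t) - g • cross3 d e‖ ≤ 2 * κ * g := by
  have h := norm_image_sub_le_of_hasDerivAt (C := 2 * ε)
    (fun s hs => hasDerivAt_angMom (H.pos_deriv s hs) (H.vel_deriv s hs))
    (fun s hs => (norm_cross3_le _ _).trans
      (mul_le_mul (H.pos_le s hs) (H.force_le s hs) (norm_nonneg _) zero_le_two)) ht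
  rw [H.pos_zero, H.vel_zero, cross3_smul_right] at h
  linarith [H.force_mul_time_le ht (C := 2) zero_le_two]

lemma energy_sub_le (H : PertKepler r u f d e g κ ε T) {t : ℝ} (ht : t ∈ Icc 0 T) :
    |‖u t‖ ^ 2 / 2 - 1 / ‖r t‖ - (g ^ 2 / 2 - 1)| ≤ 6 * κ := by
  have hg := H.g_pos
  have h := norm_image_sub_le_of_hasDerivAt (C := 6 / g * ε)
    (fun s hs => hasDerivAt_keplerEnergy (H.pos_deriv s hs) (H.vel_deriv s hs) (H.ne_zero s hs))
    (fun s hs => (norm_inner_le_norm _ _).trans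
      (mul_le_mul (H.vel_le s hs) (H.force_le s hs) (norm_nonneg _) (by positivity))) ht
  rw [H.pos_zero, H.vel_zero, H.norm_dir, norm_smul, H.norm_vel_dir, Real.norm_eq_abs,
    Real.norm_eq_abs, mul_one, sq_abs, div_one] at h
  calc _ ≤ 6 / g * ε * (t - 0) := h
    _ ≤ 6 / g * (κ * g) := H.force_mul_time_le ht (by positivity)
    _ = 6 * κ := by field_simp

lemma norm_lrlVec_deriv_le (H : PertKepler r u f d e g κ ε T) {t : ℝ} (ht : t ∈ Icc 0 T) :
    ‖(2 * ⟪u t, f t⟫) • r t - ⟪r t, f t⟫ • u t - ⟪r t, u t⟫ • f t‖ ≤ 48 / g * ε := by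
  have hg := H.g_pos
  have huf := mul_le_mul_of_nonneg_right (norm_inner_le_norm (𝕜 := ℝ) (u t) (f t))
    (norm_nonneg (r t))
  have hrf := mul_le_mul_of_nonneg_right (norm_inner_le_norm (𝕜 := ℝ) (r t) (f t))
    (norm_nonneg (u t))
  have hru := mul_le_mul_of_nonneg_right (norm_inner_le_norm (𝕜 := ℝ) (r t) (u t))
    (norm_nonneg (f t))
  have hprod : ‖r t‖ * (‖u t‖ * ‖f t‖) ≤ 2 * (6 / g * ε) :=
    mul_le_mul (H.pos_le t ht) (mul_le_mul (H.vel_le t ht) (H.force_le t ht) (norm_nonneg _)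
      (by positivity)) (by positivity) zero_le_two
  refine (norm_sub_le _ _).trans ((add_le_add_left (norm_sub_le _ _) _).trans ?_)
  rw [norm_smul, norm_smul, norm_smul, norm_mul, Real.norm_ofNat]
  calc _ ≤ 4 * (‖r t‖ * (‖u t‖ * ‖f t‖)) := by linarith
    _ ≤ 4 * (2 * (6 / g * ε)) := by gcongr
    _ = 48 / g * ε := by ring

lemma lrlVec_sub_le (H : PertKepler r u f d e g κ ε T) {t : ℝ} (ht : t ∈ Icc 0 T) :
    ‖lrlVec (r t) (u t) - (g ^ 2 - 1) • d‖ ≤ 48 * κ := by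
  have hg := H.g_pos
  have h := norm_image_sub_le_of_hasDerivAt
    (fun s hs => hasDerivAt_lrlVec (H.pos_deriv s hs) (H.vel_deriv s hs) (H.ne_zero s hs))
    (fun s hs => H.norm_lrlVec_deriv_le hs) ht
  have hzero : lrlVec (r 0) (u 0) = (g ^ 2 - 1) • d := by
    rw [lrlVec, H.pos_zero, H.vel_zero, H.norm_dir, norm_smul, H.norm_vel_dir, Real.norm_eq_abs,
      mul_one, sq_abs, div_one, inner_smul_right, H.inner_dir, mul_zero, zero_smul, sub_zero]
  rw [hzero] at h
  calc _ ≤ 48 / g * ε * (t - 0) := h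
    _ ≤ 48 / g * (κ * g) := H.force_mul_time_le ht (by positivity)
    _ = 48 * κ := by field_simp

lemma norm_cross3_dir (H : PertKepler r u f d e g κ ε T) : ‖cross3 d e‖ = 1 := by
  rw [← sq_eq_sq₀ (norm_nonneg _) zero_le_one, norm_cross3_sq, H.norm_dir, H.norm_vel_dir,
    H.inner_dir]
  norm_num

lemma norm_angMom_mem_Icc (H : PertKepler r u f d e g κ ε T) {t : ℝ} (ht : t ∈ Icc 0 T) :
    ‖cross3 (r t) (u t)‖ ∈ Icc ((1 - 2 * κ) * g) ((1 + 2 * κ) * g) := by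
  have h := (abs_norm_sub_norm_le _ _).trans (H.angMom_sub_le ht)
  rw [norm_smul, H.norm_cross3_dir, Real.norm_eq_abs, abs_of_pos H.g_pos, mul_one, abs_le] at h
  constructor <;> linarith

lemma abs_norm_angMom_sq_sub_le (H : PertKepler r u f d e g κ ε T) {t : ℝ} (ht : t ∈ Icc 0 T) :
    |‖cross3 (r t) (u t)‖ ^ 2 - g ^ 2| ≤ κ := by
  have hg := H.g_pos
  have hg1 := H.g_le
  have hk := H.kappa_le
  have hk0 := H.kappa_nonneg
  obtain ⟨hlow, hup⟩ := H.norm_angMom_mem_Icc ht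
  have hdiff : |‖cross3 (r t) (u t)‖ - g| ≤ 2 * κ * g := by
    rw [abs_le]
    constructor <;> linarith
  have hsum : ‖cross3 (r t) (u t)‖ + g ≤ 3 * g := by nlinarith
  calc _ = (‖cross3 (r t) (u t)‖ + g) * |‖cross3 (r t) (u t)‖ - g| := by
        rw [sq_sub_sq, abs_mul, abs_of_nonneg (by positivity)]
    _ ≤ 3 * g * (2 * κ * g) := by gcongr
    _ = κ * (6 * g ^ 2) := by ring
    _ ≤ κ * 1 := by gcongr; nlinarith
    _ = κ := mul_one κ

lemma norm_pos_le (H : PertKepler r u f d e g κ ε T) {t : ℝ} (ht : t ∈ Icc 0 T) :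
    ‖r t‖ ≤ 51 / 50 := by
  have hr : 0 < ‖r t‖ := norm_pos_iff.2 (H.ne_zero t ht)
  have henergy := (abs_le.1 (H.energy_sub_le ht)).2
  have hinv : 50 / 51 ≤ 1 / ‖r t‖ := by
    nlinarith [sq_nonneg ‖u t‖, H.g_pos, H.g_le, H.kappa_le]
  rw [le_div_iff₀ hr] at hinv
  linarith

lemma le_norm_pos (H : PertKepler r u f d e g κ ε T) {t : ℝ} (ht : t ∈ Icc 0 T) :
    g ^ 2 / 3 ≤ ‖r t‖ := by
  have hg := H.g_pos
  have hk := H.kappa_le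
  have hlrl : ‖lrlVec (r t) (u t)‖ ≤ 21 / 20 := by
    have h := norm_le_norm_sub_add (lrlVec (r t) (u t)) ((g ^ 2 - 1) • d)
    rw [norm_smul, H.norm_dir, Real.norm_eq_abs, abs_of_neg (by nlinarith [H.g_le])] at h
    nlinarith [H.lrlVec_sub_le ht]
  have hangMom : 9 / 10 * g ^ 2 ≤ ‖cross3 (r t) (u t)‖ ^ 2 := by
    calc 9 / 10 * g ^ 2 ≤ (1 - 2 * κ) ^ 2 * g ^ 2 := by gcongr; nlinarith
      _ = ((1 - 2 * κ) * g) ^ 2 := (mul_pow _ _ _).symm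
      _ ≤ _ := pow_le_pow_left₀ (mul_nonneg (by linarith) hg.le) (H.norm_angMom_mem_Icc ht).1 2
  have hinner : ⟪r t, lrlVec (r t) (u t)⟫ ≤ ‖r t‖ * (21 / 20) :=
    (real_inner_le_norm _ _).trans (by gcongr)
  rw [norm_angMom_sq (H.ne_zero t ht)] at hangMom
  nlinarith

lemma norm_vel_sq_le (H : PertKepler r u f d e g κ ε T) {t : ℝ} (ht : t ∈ Icc 0 T) :
    ‖u t‖ ^ 2 ≤ 2 / ‖r t‖ - 19 / 10 := by
  have henergy := (abs_le.1 (H.energy_sub_le ht)).2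
  have htwo : 2 / ‖r t‖ = 2 * (1 / ‖r t‖) := by ring
  nlinarith [H.g_pos, H.g_le, H.kappa_le]

lemma norm_vel_le_of_le_norm_pos (H : PertKepler r u f d e g κ ε T) {t ρ V : ℝ}
    (ht : t ∈ Icc 0 T) (hρ : 0 < ρ) (hr : ρ ≤ ‖r t‖) (hV : 0 ≤ V) (hρV : 2 / ρ ≤ V ^ 2) :
    ‖u t‖ ≤ V := by
  refine le_of_sq_le_sq ?_ hV
  have h := div_le_div_of_nonneg_left zero_le_two hρ hr
  linarith [H.norm_vel_sq_le ht]

lemma norm_vel_lt (H : PertKepler r u f d e g κ ε T) {t : ℝ} (ht : t ∈ Icc 0 T) :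
    ‖u t‖ < 6 / g := by
  have hg := H.g_pos
  refine (H.norm_vel_le_of_le_norm_pos ht (V := 5 / (2 * g)) (by positivity) (H.le_norm_pos ht)
    (by positivity) ?_).trans_lt ?_
  · rw [div_le_iff₀ (by positivity)]
    field_simp
    norm_num
  · rw [div_lt_div_iff₀ (by positivity) hg]
    linarith

lemma radial_sq_le (H : PertKepler r u f d e g κ ε T) {t : ℝ} (ht : t ∈ Icc 0 T) :
    ⟪r t, u t⟫ ^ 2 ≤ 2 * ‖r t‖ := by
  have hr : 0 < ‖r t‖ := norm_pos_iff.2 (H.ne_zero t ht)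
  calc ⟪r t, u t⟫ ^ 2 ≤ (‖r t‖ * ‖u t‖) ^ 2 := by
        rw [← sq_abs]
        exact pow_le_pow_left₀ (abs_nonneg _) (abs_real_inner_le_norm _ _) 2
    _ = ‖r t‖ ^ 2 * ‖u t‖ ^ 2 := mul_pow _ _ _
    _ ≤ ‖r t‖ ^ 2 * (2 / ‖r t‖) := by gcongr; linarith [H.norm_vel_sq_le ht]
    _ = 2 * ‖r t‖ := by field_simp

lemma abs_inner_dir_le (H : PertKepler r u f d e g κ ε T) (w : V3) : |⟪w, d⟫| ≤ ‖w‖ := by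
  simpa only [H.norm_dir, mul_one] using abs_real_inner_le_norm w d

lemma norm_pos_sub_le_inner_dir (H : PertKepler r u f d e g κ ε T) {t : ℝ} (ht : t ∈ Icc 0 T) :
    ‖r t‖ - 1 / 100 ≤ ⟪r t, d⟫ := by
  have hg := H.g_pos
  have hg1 := H.g_le
  have hk := H.kappa_le
  have hr := H.norm_pos_le ht
  set A := lrlVec (r t) (u t) with hA
  have hdecomp : ⟪r t, A⟫ = ⟪r t, A - (g ^ 2 - 1) • d⟫ + (g ^ 2 - 1) * ⟪r t, d⟫ := by
    rw [inner_sub_right, inner_smul_right]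
    ring
  have herr : -(51 / 50 * (48 * κ)) ≤ ⟪r t, A - (g ^ 2 - 1) • d⟫ := by
    refine (neg_le_neg ?_).trans (abs_le.1 (abs_real_inner_le_norm _ _)).1
    exact mul_le_mul hr (H.lrlVec_sub_le ht) (norm_nonneg _) (by norm_num)
  have hangMom : ‖cross3 (r t) (u t)‖ ^ 2 ≤ (1 / 50) ^ 2 := by
    refine pow_le_pow_left₀ (norm_nonneg _) ((H.norm_angMom_mem_Icc ht).2.trans ?_) 2
    nlinarith
  have hg2 : g ^ 2 ≤ 1 / 10000 := by nlinarith
  rw [norm_angMom_sq (H.ne_zero t ht), ← hA, hdecomp] at hangMom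
  nlinarith [abs_le.1 (H.abs_inner_dir_le (r t)), sq_nonneg g]

lemma exists_norm_gt (H : PertKepler r u f d e g κ ε T) {a : ℝ} (ha : 0 ≤ a) (haT : a + 5 ≤ T) :
    ∃ t ∈ Icc a (a + 5), 2 / 5 < ‖r t‖ := by
  by_contra! hsmall
  have hsub : ∀ t ∈ Icc a (a + 5), t ∈ Icc 0 T := fun t ht => ⟨ha.trans ht.1, ht.2.trans haT⟩
  have hradial : ∀ t ∈ Icc a (a + 5), |⟪r t, u t⟫| < 1 := fun t ht => by
    rw [← sq_lt_one_iff_abs_lt_one]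
    linarith [H.radial_sq_le (hsub t ht), hsmall t ht]
  have hderiv : ∀ t ∈ Icc a (a + 5), 2 / 5 ≤ ‖u t‖ ^ 2 - 1 / ‖r t‖ + ⟪r t, f t⟫ := by
    intro t ht
    have henergy := (abs_le.1 (H.energy_sub_le (hsub t ht))).1
    have hinv : 5 / 2 ≤ 1 / ‖r t‖ := by
      rw [le_div_iff₀ (norm_pos_iff.2 (H.ne_zero t (hsub t ht)))]
      linarith [hsmall t ht]
    have hforce : ‖r t‖ * ‖f t‖ ≤ 2 / 5 * (1 / 100) :=
      mul_le_mul (hsmall t ht) ((H.force_le t (hsub t ht)).trans H.eps_le) (norm_nonneg _)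
        (by norm_num)
    nlinarith [H.kappa_le, sq_nonneg g, (abs_le.1 (abs_real_inner_le_norm (r t) (f t))).1]
  have hab : a ≤ a + 5 := by linarith
  have hgrowth := mul_sub_le_image_sub_of_hasDerivAt hab
    (fun t ht => hasDerivAt_radial (H.pos_deriv t (hsub t ht)) (H.vel_deriv t (hsub t ht))
      (H.ne_zero t (hsub t ht))) hderiv
  linarith [(abs_lt.1 (hradial a (left_mem_Icc.2 hab))).1,
    (abs_lt.1 (hradial (a + 5) (right_mem_Icc.2 hab))).2]

lemma hasDerivAt_neg_inner_vel_dir (H : PertKepler r u f d e g κ ε T) {t : ℝ}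
    (ht : t ∈ Icc 0 T) :
    HasDerivAt (fun s => -⟪u s, d⟫) (1 / ‖r t‖ ^ 3 * ⟪r t, d⟫ - ⟪f t, d⟫) t := by
  refine ((H.vel_deriv t ht).inner ℝ (hasDerivAt_const t d)).neg.congr_deriv ?_
  rw [inner_zero_right, inner_add_left, real_inner_smul_left]
  ring

lemma exists_norm_lt (H : PertKepler r u f d e g κ ε T) {a : ℝ} (ha : 0 ≤ a)
    (haT : a + 50 ≤ T) : ∃ t ∈ Icc a (a + 50), ‖r t‖ < 1 / 5 := by
  by_contra! hlarge
  have hsub : ∀ t ∈ Icc a (a + 50), t ∈ Icc 0 T := fun t ht => ⟨ha.trans ht.1, ht.2.trans haT⟩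
  have hvel : ∀ t ∈ Icc a (a + 50), |⟪u t, d⟫| ≤ 33 / 10 := fun t ht =>
    (H.abs_inner_dir_le _).trans <| H.norm_vel_le_of_le_norm_pos (hsub t ht) (by norm_num)
      (hlarge t ht) (by norm_num) (by norm_num)
  have hderiv : ∀ t ∈ Icc a (a + 50), 7 / 50 ≤ 1 / ‖r t‖ ^ 3 * ⟪r t, d⟫ - ⟪f t, d⟫ := by
    intro t ht
    have hpos : 0 < ‖r t‖ := norm_pos_iff.2 (H.ne_zero t (hsub t ht))
    have hforce := ((H.abs_inner_dir_le _).trans (H.force_le t (hsub t ht))).trans H.eps_le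
    have hinv : (4 / 5 : ℝ) ≤ 1 / ‖r t‖ ^ 3 := by
      rw [le_div_iff₀ (by positivity)]
      have hcube := pow_le_pow_left₀ hpos.le (H.norm_pos_le (hsub t ht)) 3
      linarith
    have hinner : (19 / 100 : ℝ) ≤ ⟪r t, d⟫ := by
      linarith [hlarge t ht, H.norm_pos_sub_le_inner_dir (hsub t ht)]
    have hattr : (4 / 5 : ℝ) * (19 / 100) ≤ 1 / ‖r t‖ ^ 3 * ⟪r t, d⟫ := by gcongr
    linarith [(abs_le.1 hforce).2]
  have hab : a ≤ a + 50 := by linarith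
  have hgrowth := mul_sub_le_image_sub_of_hasDerivAt hab
    (fun t ht => H.hasDerivAt_neg_inner_vel_dir (hsub t ht)) hderiv
  linarith [(abs_le.1 (hvel a (left_mem_Icc.2 hab))).2,
    (abs_le.1 (hvel (a + 50) (right_mem_Icc.2 hab))).1]

/-- The event is the maximum of `s ↦ ⟪r s, d⟫ - c * s` between two passages close to the
attracting centre. -/
lemma exists_inner_vel_eq_of_norm_lt (H : PertKepler r u f d e g κ ε T) {c t₁ t₂ t₃ : ℝ}
    (hc : |c| ≤ 1 / 2100) (h0 : 0 ≤ t₁) (h12 : t₁ ≤ t₂) (h23 : t₂ ≤ t₃) (h3T : t₃ ≤ T)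
    (h13 : t₃ - t₁ ≤ 105) (h₁ : ‖r t₁‖ < 1 / 5) (h₂ : 2 / 5 < ‖r t₂‖) (h₃ : ‖r t₃‖ < 1 / 5) :
    ∃ t ∈ Icc t₁ t₃, ⟪u t, d⟫ = c ∧ 1 / 4 ≤ ‖r t‖ := by
  have hsub : ∀ t ∈ Icc t₁ t₃, t ∈ Icc 0 T := fun t ht => ⟨h0.trans ht.1, ht.2.trans h3T⟩
  have hderiv : ∀ t ∈ Icc t₁ t₃, HasDerivAt (fun s => ⟪r s, d⟫ - c * s) (⟪u t, d⟫ - c) t := by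
    intro t ht
    refine (((H.pos_deriv t (hsub t ht)).inner ℝ (hasDerivAt_const t d)).sub
      ((hasDerivAt_id t).const_mul c)).congr_deriv ?_
    rw [inner_zero_right, zero_add, mul_one]
  have ht₂ : t₂ ∈ Icc t₁ t₃ := ⟨h12, h23⟩
  obtain ⟨τ, hτ, hmax⟩ := isCompact_Icc.exists_isMaxOn (nonempty_Icc.2 (h12.trans h23))
    (fun t ht => (hderiv t ht).continuousAt.continuousWithinAt)
  have hle : ∀ t, ⟪r t, d⟫ ≤ ‖r t‖ := fun t => (abs_le.1 (H.abs_inner_dir_le (r t))).2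
  have hshift : |c * (τ - t₂)| ≤ 1 / 2100 * 105 := by
    rw [abs_mul]
    refine mul_le_mul hc ?_ (abs_nonneg _) (by norm_num)
    rw [abs_le]
    constructor <;> linarith [hτ.1, hτ.2]
  have hinner : 1 / 4 ≤ ⟪r τ, d⟫ := by
    have hcomp : ⟪r t₂, d⟫ - c * t₂ ≤ ⟪r τ, d⟫ - c * τ := hmax ht₂
    linarith [(abs_le.1 hshift).1, H.norm_pos_sub_le_inner_dir (hsub t₂ ht₂)]
  have hne₁ : t₁ ≠ τ := by rintro rfl; linarith [hle t₁]
  have hne₃ : τ ≠ t₃ := by rintro rfl; linarith [hle τ]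
  have hcrit := (hmax.isLocalMax (Icc_mem_nhds (lt_of_le_of_ne hτ.1 hne₁)
    (lt_of_le_of_ne hτ.2 hne₃))).hasDerivAt_eq_zero (hderiv τ hτ)
  exact ⟨τ, hτ, sub_eq_zero.1 hcrit, hinner.trans (hle τ)⟩

lemma exists_inner_vel_eq (H : PertKepler r u f d e g κ ε T) {a c : ℝ} (ha : 0 ≤ a)
    (haT : a + 105 ≤ T) (hc : |c| ≤ 1 / 2100) :
    ∃ t ∈ Icc a (a + 105), ⟪u t, d⟫ = c ∧ 1 / 4 ≤ ‖r t‖ := by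
  obtain ⟨t₁, ht₁, h₁⟩ := H.exists_norm_lt ha (by linarith)
  obtain ⟨t₂, ht₂, h₂⟩ := H.exists_norm_gt (a := a + 50) (by linarith) (by linarith)
  obtain ⟨t₃, ht₃, h₃⟩ := H.exists_norm_lt (a := a + 55) (by linarith) (by linarith)
  obtain ⟨t, ht, hevent⟩ := H.exists_inner_vel_eq_of_norm_lt hc (ha.trans ht₁.1)
    (ht₁.2.trans ht₂.1) (by linarith [ht₂.2, ht₃.1]) (by linarith [ht₃.2])
    (by linarith [ht₁.1, ht₃.2]) h₁ h₂ h₃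
  exact ⟨t, ⟨ht₁.1.trans ht.1, by linarith [ht.2, ht₃.2]⟩, hevent⟩

lemma norm_vel_le_three (H : PertKepler r u f d e g κ ε T) {t : ℝ} (ht : t ∈ Icc 0 T)
    (hr : 1 / 4 ≤ ‖r t‖) : ‖u t‖ ≤ 3 :=
  H.norm_vel_le_of_le_norm_pos ht (by norm_num) hr (by norm_num) (by norm_num)

/-- Conservation of the angular momentum and of the Laplace–Runge–Lenz vector determines the
direction of the position from the velocity. -/
lemma norm_unit_pos_sub_le (H : PertKepler r u f d e g κ ε T) {t : ℝ} (ht : t ∈ Icc 0 T)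
    (hr : 1 / 4 ≤ ‖r t‖) :
    ‖(1 / ‖r t‖) • r t - (g • cross3 (u t) (cross3 d e) + (1 - g ^ 2) • d)‖ ≤ 49 * κ := by
  have hangMom : ‖cross3 (u t) (cross3 (r t) (u t) - g • cross3 d e)‖ ≤ 3 * (2 * κ * g) :=
    (norm_cross3_le _ _).trans (mul_le_mul (H.norm_vel_le_three ht hr) (H.angMom_sub_le ht)
      (norm_nonneg _) (by norm_num))
  calc _ = ‖cross3 (u t) (cross3 (r t) (u t) - g • cross3 d e)
        - (lrlVec (r t) (u t) - (g ^ 2 - 1) • d)‖ := by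
        rw [inv_norm_smul_eq_cross3_sub_lrlVec _ (u t), cross3_sub_right, cross3_smul_right]
        congr 1
        module
    _ ≤ 3 * (2 * κ * g) + 48 * κ :=
      (norm_sub_le _ _).trans (add_le_add hangMom (H.lrlVec_sub_le ht))
    _ ≤ 49 * κ := by nlinarith [H.g_le, H.kappa_nonneg]

lemma norm_unit_pos_sub_dir_le (H : PertKepler r u f d e g κ ε T) {t : ℝ} (ht : t ∈ Icc 0 T)
    (hr : 1 / 4 ≤ ‖r t‖) : ‖(1 / ‖r t‖) • r t - d‖ ≤ 4 * g + 49 * κ := by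
  have hg := H.g_pos
  have hcross : ‖g • cross3 (u t) (cross3 d e)‖ ≤ g * 3 := by
    rw [norm_smul, Real.norm_eq_abs, abs_of_pos hg]
    gcongr
    simpa only [H.norm_cross3_dir, mul_one] using
      (norm_cross3_le (u t) (cross3 d e)).trans
        (mul_le_mul_of_nonneg_right (H.norm_vel_le_three ht hr) (norm_nonneg _))
  have hshrink : ‖g ^ 2 • d‖ ≤ g := by
    rw [norm_smul, H.norm_dir, mul_one, Real.norm_eq_abs, abs_of_nonneg (sq_nonneg g)]
    nlinarith [H.g_le]
  calc _ = ‖((1 / ‖r t‖) • r t - (g • cross3 (u t) (cross3 d e) + (1 - g ^ 2) • d))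
        + (g • cross3 (u t) (cross3 d e) - g ^ 2 • d)‖ := by congr 1; module
    _ ≤ 49 * κ + (g * 3 + g) := (norm_add_le _ _).trans (add_le_add (H.norm_unit_pos_sub_le ht hr)
        ((norm_sub_le _ _).trans (add_le_add hcross hshrink)))
    _ = 4 * g + 49 * κ := by ring

lemma norm_vel_sub_le (H : PertKepler r u f d e g κ ε T) {t : ℝ} (ht : t ∈ Icc 0 T)
    (hr : 1 / 4 ≤ ‖r t‖) : ‖u t - ⟪u t, d⟫ • d‖ ≤ 17 * g + 150 * κ := by
  have hg := H.g_pos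
  have hnorm : ‖u t - ⟪u t, d⟫ • d‖ = ‖cross3 d (u t)‖ := by
    rw [← sq_eq_sq₀ (norm_nonneg _) (norm_nonneg _), norm_sub_sq_real, norm_smul,
      inner_smul_right, norm_cross3_sq, H.norm_dir, Real.norm_eq_abs, mul_one, sq_abs,
      real_inner_comm d (u t)]
    ring
  have hturn : ‖cross3 ((1 / ‖r t‖) • r t - d) (u t)‖ ≤ (4 * g + 49 * κ) * 3 :=
    (norm_cross3_le _ _).trans (mul_le_mul (H.norm_unit_pos_sub_dir_le ht hr)
      (H.norm_vel_le_three ht hr) (norm_nonneg _) (by linarith [H.kappa_nonneg]))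
  have hangMom : ‖(1 / ‖r t‖) • cross3 (r t) (u t)‖ ≤ 4 * ((1 + 2 * κ) * g) := by
    rw [norm_smul, Real.norm_eq_abs, abs_of_nonneg (by positivity)]
    refine mul_le_mul ?_ (H.norm_angMom_mem_Icc ht).2 (norm_nonneg _) (by norm_num)
    rw [div_le_iff₀ (by linarith)]
    linarith
  calc _ = ‖(1 / ‖r t‖) • cross3 (r t) (u t) - cross3 ((1 / ‖r t‖) • r t - d) (u t)‖ := by
        rw [hnorm, cross3_sub_left, cross3_smul_left, sub_sub_cancel]
    _ ≤ 4 * ((1 + 2 * κ) * g) + (4 * g + 49 * κ) * 3 :=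
        (norm_sub_le _ _).trans (add_le_add hangMom hturn)
    _ ≤ 17 * g + 150 * κ := by nlinarith [H.g_le, H.kappa_le, H.kappa_nonneg]

lemma le_norm_pos_of_le (H : PertKepler r u f d e g κ ε T) {a t : ℝ} (ha : 0 ≤ a) (hat : a ≤ t)
    (htT : t ≤ T) (hw : t - a ≤ 1 / 200) (hr : 1 / 4 ≤ ‖r a‖) : 1 / 5 ≤ ‖r t‖ := by
  have hsub : ∀ s ∈ Icc a t, s ∈ Icc 0 T := fun s hs => ⟨ha.trans hs.1, hs.2.trans htT⟩
  have h := norm_image_sub_le_of_hasDerivAt (C := 3)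
    (fun s hs => (H.pos_deriv s (hsub s hs)).norm_sq) (fun s hs => by
      refine abs_le_of_sq_le_sq ?_ (by norm_num)
      nlinarith [H.radial_sq_le (hsub s hs), H.norm_pos_le (hsub s hs)]) (right_mem_Icc.2 hat)
  rw [Real.norm_eq_abs, abs_le] at h
  nlinarith [norm_nonneg (r t)]

lemma norm_drift_le (H : PertKepler r u f d e g κ ε T) {a t : ℝ} (ha : 0 ≤ a) (hat : a ≤ t)
    (htT : t ≤ T) (hw : t - a ≤ 1 / 200) (hr : 1 / 4 ≤ ‖r a‖) :
    ‖r t - r a‖ ≤ 4 * (t - a) ∧ ‖u t - u a‖ ≤ 26 * (t - a) := by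
  have hsub : ∀ s ∈ Icc a t, s ∈ Icc 0 T := fun s hs => ⟨ha.trans hs.1, hs.2.trans htT⟩
  have hlow : ∀ s ∈ Icc a t, 1 / 5 ≤ ‖r s‖ := fun s hs =>
    H.le_norm_pos_of_le ha hs.1 (hs.2.trans htT) (by linarith [hs.2]) hr
  refine ⟨norm_image_sub_le_of_hasDerivAt (fun s hs => H.pos_deriv s (hsub s hs))
    (fun s hs => H.norm_vel_le_of_le_norm_pos (hsub s hs) (by norm_num) (hlow s hs) (by norm_num)
      (by norm_num)) (right_mem_Icc.2 hat),
    norm_image_sub_le_of_hasDerivAt (fun s hs => H.vel_deriv s (hsub s hs))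
    (fun s hs => ?_) (right_mem_Icc.2 hat)⟩
  have hpos : 0 < ‖r s‖ := by linarith [hlow s hs]
  have hattr : ‖-(1 / ‖r s‖ ^ 3) • r s‖ ≤ 25 := by
    rw [norm_smul, norm_neg, Real.norm_eq_abs, abs_of_nonneg (by positivity)]
    calc 1 / ‖r s‖ ^ 3 * ‖r s‖ = 1 / ‖r s‖ ^ 2 := by field_simp
      _ ≤ 25 := by
        rw [div_le_iff₀ (by positivity)]
        nlinarith [hlow s hs]
  exact (norm_add_le _ _).trans (by linarith [H.force_le s (hsub s hs), H.eps_le])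

lemma norm_cross3_dir_unit_pos_le (H : PertKepler r u f d e g κ ε T) {t : ℝ} (ht : t ∈ Icc 0 T)
    (hr : 1 / 4 ≤ ‖r t‖) :
    ‖cross3 d ((1 / ‖r t‖) • r t)‖ ≤ |⟪u t, d⟫| * g + 49 * κ := by
  set frame := g • cross3 (u t) (cross3 d e) + (1 - g ^ 2) • d with hframe
  have hcross : cross3 d frame = -(g * ⟪u t, d⟫) • cross3 d e := by
    rw [hframe, cross3_add_right, cross3_smul_right, cross3_smul_right, cross3_self, cross3_cross3,
      inner_cross3_self_left, real_inner_comm]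
    module
  calc ‖cross3 d ((1 / ‖r t‖) • r t)‖
      = ‖cross3 d frame + cross3 d ((1 / ‖r t‖) • r t - frame)‖ := by
        rw [cross3_sub_right, add_sub_cancel]
    _ ≤ |⟪u t, d⟫| * g + 1 * (49 * κ) := by
        refine (norm_add_le _ _).trans (add_le_add (le_of_eq ?_) ((norm_cross3_le _ _).trans ?_))
        · rw [hcross, norm_smul, H.norm_cross3_dir, norm_neg, norm_mul, Real.norm_eq_abs,
            Real.norm_eq_abs, abs_of_pos H.g_pos]
          ring
        · rw [H.norm_dir]
          exact mul_le_mul_of_nonneg_left (H.norm_unit_pos_sub_le ht hr) zero_le_one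
    _ = _ := by rw [one_mul]

lemma norm_pos_sub_inner_dir_le (H : PertKepler r u f d e g κ ε T) {t B : ℝ} (ht : t ∈ Icc 0 T)
    (hr : 1 / 4 ≤ ‖r t‖) (hu : |⟪u t, d⟫| ≤ B * g) :
    ‖r t‖ - ⟪r t, d⟫ ≤ 51 / 50 * (2 * B ^ 2 * g ^ 4 + κ) := by
  have hg := H.g_pos
  have hk := H.kappa_le
  have hk0 := H.kappa_nonneg
  have hpos : 0 < ‖r t‖ := by linarith
  set w := (1 / ‖r t‖) • r t with hw
  have hrw : r t = ‖r t‖ • w := by rw [hw, smul_smul, mul_one_div_cancel hpos.ne', one_smul]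
  have hw_norm : ‖w‖ = 1 := by
    rw [hw, norm_smul, Real.norm_eq_abs, abs_of_pos (by positivity), one_div_mul_cancel hpos.ne']
  have hsq : ‖cross3 d w‖ ^ 2 ≤ 2 * B ^ 2 * g ^ 4 + κ := by
    calc ‖cross3 d w‖ ^ 2 ≤ (B * g * g + 49 * κ) ^ 2 := by
          gcongr
          exact (H.norm_cross3_dir_unit_pos_le ht hr).trans (by gcongr)
      _ ≤ 2 * (B * g * g) ^ 2 + 2 * (49 * κ) ^ 2 := by
          nlinarith [sq_nonneg (B * g * g - 49 * κ)]
      _ ≤ _ := by nlinarith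
  have hdiff : 9 / 10 ≤ ⟪w, d⟫ := by
    have h := (H.abs_inner_dir_le (w - d)).trans (H.norm_unit_pos_sub_dir_le ht hr)
    rw [inner_sub_left, real_inner_self_eq_norm_sq, H.norm_dir, abs_le] at h
    linarith [H.g_le]
  rw [norm_cross3_sq, H.norm_dir, hw_norm, real_inner_comm] at hsq
  have hle_one : ⟪w, d⟫ ≤ 1 := hw_norm ▸ (abs_le.1 (H.abs_inner_dir_le w)).2
  calc ‖r t‖ - ⟪r t, d⟫ = ‖r t‖ * (1 - ⟪w, d⟫) := by
        conv_lhs => rw [hrw, real_inner_smul_left, ← hrw]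
        ring
    _ ≤ 51 / 50 * (2 * B ^ 2 * g ^ 4 + κ) := by
        refine mul_le_mul (H.norm_pos_le ht) ?_ (by linarith) (by norm_num)
        nlinarith

lemma sq_mul_abs_norm_pos_sub_one_le (H : PertKepler r u f d e g κ ε T) {t B : ℝ}
    (ht : t ∈ Icc 0 T) (hr : 1 / 4 ≤ ‖r t‖) (hu : |⟪u t, d⟫| ≤ B * g) :
    g ^ 2 * |‖r t‖ - 1| ≤ 4 * B ^ 2 * g ^ 4 + 62 * κ := by
  have hg := H.g_pos
  have hk0 := H.kappa_nonneg
  set A := lrlVec (r t) (u t)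
  have hinner : |⟪r t, A - (g ^ 2 - 1) • d⟫| ≤ 51 / 50 * (48 * κ) :=
    (abs_real_inner_le_norm _ _).trans
      (mul_le_mul (H.norm_pos_le ht) (H.lrlVec_sub_le ht) (norm_nonneg _) (by norm_num))
  have hsplit : g ^ 2 * (‖r t‖ - 1) = (‖cross3 (r t) (u t)‖ ^ 2 - g ^ 2)
      - (1 - g ^ 2) * (‖r t‖ - ⟪r t, d⟫) - ⟪r t, A - (g ^ 2 - 1) • d⟫ := by
    rw [norm_angMom_sq (H.ne_zero t ht), inner_sub_right, inner_smul_right]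
    ring
  have hdefect0 : 0 ≤ ‖r t‖ - ⟪r t, d⟫ := sub_nonneg.2 (abs_le.1 (H.abs_inner_dir_le (r t))).2
  have hdefect : (1 - g ^ 2) * (‖r t‖ - ⟪r t, d⟫) ≤ 51 / 50 * (2 * B ^ 2 * g ^ 4 + κ) :=
    (mul_le_of_le_one_left hdefect0 (by nlinarith)).trans (H.norm_pos_sub_inner_dir_le ht hr hu)
  have hdefect_nonneg : 0 ≤ (1 - g ^ 2) * (‖r t‖ - ⟪r t, d⟫) :=
    mul_nonneg (by nlinarith [H.g_le]) hdefect0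
  have habs : g ^ 2 * |‖r t‖ - 1| = |g ^ 2 * (‖r t‖ - 1)| := by
    rw [abs_mul, abs_of_nonneg (sq_nonneg g)]
  rw [habs, hsplit, abs_le]
  obtain ⟨hangMom, hangMom'⟩ := abs_le.1 (H.abs_norm_angMom_sq_sub_le ht)
  constructor <;> linarith [abs_le.1 hinner]

lemma abs_inner_dir_sub_one_le (H : PertKepler r u f d e g κ ε T) {t B : ℝ}
    (ht : t ∈ Icc 0 T) (hr : 1 / 4 ≤ ‖r t‖) (hu : |⟪u t, d⟫| ≤ B * g) :
    |⟪r t, d⟫ - 1| ≤ 8 * B ^ 2 * g ^ 2 + 100 * κ / g ^ 2 := by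
  have hg := H.g_pos
  have hg2 : g ^ 2 ≤ 1 := pow_le_one₀ hg.le (by linarith [H.g_le])
  have hk0 := H.kappa_nonneg
  have hradius := H.sq_mul_abs_norm_pos_sub_one_le ht hr hu
  have hdefect := H.norm_pos_sub_inner_dir_le ht hr hu
  have hdefect0 : 0 ≤ ‖r t‖ - ⟪r t, d⟫ := sub_nonneg.2 (abs_le.1 (H.abs_inner_dir_le (r t))).2
  have htri : |⟪r t, d⟫ - 1| ≤ |‖r t‖ - 1| + (‖r t‖ - ⟪r t, d⟫) := by
    have h := abs_sub (‖r t‖ - 1) (‖r t‖ - ⟪r t, d⟫)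
    rwa [abs_of_nonneg hdefect0, sub_sub_sub_cancel_left, ← neg_sub, neg_sub] at h
  have heq : 8 * B ^ 2 * g ^ 2 + 100 * κ / g ^ 2 = (8 * B ^ 2 * g ^ 4 + 100 * κ) / g ^ 2 := by
    field_simp
  rw [heq, le_div_iff₀ (by positivity)]
  calc |⟪r t, d⟫ - 1| * g ^ 2
      ≤ g ^ 2 * |‖r t‖ - 1| + g ^ 2 * (‖r t‖ - ⟪r t, d⟫) := by
        rw [mul_comm, ← mul_add]
        gcongr
    _ ≤ (4 * B ^ 2 * g ^ 4 + 62 * κ) + 51 / 50 * (2 * B ^ 2 * g ^ 4 + κ) :=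
        add_le_add hradius ((mul_le_of_le_one_left hdefect0 hg2).trans hdefect)
    _ ≤ 8 * B ^ 2 * g ^ 4 + 100 * κ := by nlinarith [mul_nonneg (sq_nonneg B) (pow_nonneg hg.le 4)]

lemma abs_inner_pos_add_le (H : PertKepler r u f d e g κ ε T) {t : ℝ} {w : V3}
    (ht : t ∈ Icc 0 T) (hr : 1 / 4 ≤ ‖r t‖) (hw : ‖w‖ = 1) (hdw : ⟪d, w⟫ = 0) :
    |⟪r t, w⟫ + ‖r t‖ * (g * ⟪u t, d⟫ * ⟪e, w⟫)| ≤ 50 * κ := by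
  have hpos : 0 < ‖r t‖ := by linarith
  have h := (abs_real_inner_le_norm _ w).trans
    (mul_le_mul_of_nonneg_right (H.norm_unit_pos_sub_le ht hr) (norm_nonneg w))
  rw [hw, mul_one] at h
  have heq : ⟪r t, w⟫ + ‖r t‖ * (g * ⟪u t, d⟫ * ⟪e, w⟫) = ‖r t‖ *
      ⟪(1 / ‖r t‖) • r t - (g • cross3 (u t) (cross3 d e) + (1 - g ^ 2) • d), w⟫ := by
    rw [inner_sub_left, inner_add_left, real_inner_smul_left, real_inner_smul_left _ w (1 - g ^ 2),
      real_inner_smul_left _ w g, cross3_cross3, inner_sub_left, real_inner_smul_left,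
      real_inner_smul_left, hdw]
    field_simp
    ring
  rw [heq, abs_mul, abs_of_pos hpos]
  nlinarith [mul_le_mul (H.norm_pos_le ht) h (abs_nonneg _) (by norm_num), H.kappa_nonneg]

lemma abs_inner_normal_le (H : PertKepler r u f d e g κ ε T) {t : ℝ}
    (ht : t ∈ Icc 0 T) (hr : 1 / 4 ≤ ‖r t‖) : |⟪r t, cross3 d e⟫| ≤ 50 * κ := by
  have h := H.abs_inner_pos_add_le ht hr H.norm_cross3_dir (inner_cross3_self_left d e)
  rwa [inner_cross3_self_right, mul_zero, mul_zero, add_zero] at h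

lemma abs_inner_vel_dir_add_le (H : PertKepler r u f d e g κ ε T) {t B : ℝ}
    (ht : t ∈ Icc 0 T) (hr : 1 / 4 ≤ ‖r t‖) (hu : |⟪u t, d⟫| ≤ B * g) :
    |⟪r t, e⟫ + g * ⟪u t, d⟫| ≤ 4 * B ^ 3 * g ^ 4 + (62 * B + 50) * κ := by
  have hg := H.g_pos
  have hB : 0 ≤ B := nonneg_of_mul_nonneg_left ((abs_nonneg _).trans hu) hg
  have h := H.abs_inner_pos_add_le ht hr H.norm_vel_dir H.inner_dir
  rw [real_inner_self_eq_norm_sq, H.norm_vel_dir, one_pow, mul_one] at h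
  have hradius : |g * ⟪u t, d⟫ * (‖r t‖ - 1)| ≤ B * (4 * B ^ 2 * g ^ 4 + 62 * κ) := by
    calc _ = g * |⟪u t, d⟫| * |‖r t‖ - 1| := by rw [abs_mul, abs_mul, abs_of_pos hg]
      _ ≤ g * (B * g) * |‖r t‖ - 1| := by gcongr
      _ = B * (g ^ 2 * |‖r t‖ - 1|) := by ring
      _ ≤ _ := by gcongr; exact H.sq_mul_abs_norm_pos_sub_one_le ht hr hu
  have heq : ⟪r t, e⟫ + g * ⟪u t, d⟫
      = (⟪r t, e⟫ + ‖r t‖ * (g * ⟪u t, d⟫)) - g * ⟪u t, d⟫ * (‖r t‖ - 1) := by ring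
  rw [heq]
  linarith [abs_sub (⟪r t, e⟫ + ‖r t‖ * (g * ⟪u t, d⟫)) (g * ⟪u t, d⟫ * (‖r t‖ - 1))]

end PertKepler

/-! ### Two binaries -/

lemma Mtot1_pos {m : Fin 4 → ℝ} (hm : ∀ j, 0 < m j) : 0 < Mtot1 m := add_pos (hm 0) (hm 1)

lemma Mtot2_pos {m : Fin 4 → ℝ} (hm : ∀ j, 0 < m j) : 0 < Mtot2 m :=
  add_pos (Mtot1_pos hm) (hm 2)

lemma Mtot3_pos {m : Fin 4 → ℝ} (hm : ∀ j, 0 < m j) : 0 < Mtot3 m :=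
  add_pos (Mtot2_pos hm) (hm 3)

/-- The centre of mass of two points `x`, `y` of masses `a`, `b`. -/
def pairCom (a b : ℝ) (x y : V3) : V3 := (a / (a + b)) • x + (b / (a + b)) • y

lemma norm_left_sub_pairCom_le {a b : ℝ} (ha : 0 < a) (hb : 0 < b) (x y : V3) :
    ‖x - pairCom a b x y‖ ≤ ‖y - x‖ := by
  have hdiff : x - pairCom a b x y = -((b / (a + b)) • (y - x)) := by
    rw [pairCom]
    match_scalars
    · field_simp
      ring
    · field_simp
  rw [hdiff, norm_neg, norm_smul, Real.norm_of_nonneg (by positivity)]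
  refine mul_le_of_le_one_left (norm_nonneg _) ?_
  rw [div_le_one (by positivity)]
  linarith

lemma pairCom_comm (a b : ℝ) (x y : V3) : pairCom a b x y = pairCom b a y x := by
  rw [pairCom, pairCom, add_comm, add_comm a b]

lemma norm_right_sub_pairCom_le {a b : ℝ} (ha : 0 < a) (hb : 0 < b) (x y : V3) :
    ‖y - pairCom a b x y‖ ≤ ‖y - x‖ := by
  rw [pairCom_comm, norm_sub_rev y x]
  exact norm_left_sub_pairCom_le hb ha y x

/-- The masses of the three relative Kepler motions: the binary `0, 2`, the binary `1, 3`, and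
the motion of their centres of mass. -/
def relMass (m : Fin 4 → ℝ) : Fin 3 → ℝ := ![m 0 + m 2, m 1 + m 3, Mtot3 m]

/-- The three relative vectors: of the binary `0, 2`, of the binary `1, 3`, and from the centre of
mass of the first binary to that of the second. -/
def rel (m : Fin 4 → ℝ) (p : Fin 4 → V3) : Fin 3 → V3 :=
  ![p 2 - p 0, p 3 - p 1,
    pairCom (m 1) (m 3) (p 1) (p 3) - pairCom (m 0) (m 2) (p 0) (p 2)]

/-- The centre of mass of the four bodies. -/
def com (m : Fin 4 → ℝ) (p : Fin 4 → V3) : V3 :=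
  (1 / Mtot3 m) • (m 0 • p 0 + m 1 • p 1 + m 2 • p 2 + m 3 • p 3)

/-- The configuration with relative vectors `y` and centre of mass `c`. -/
def assemble (m : Fin 4 → ℝ) (y : Fin 3 → V3) (c : V3) : Fin 4 → V3 :=
  ![c - ((m 1 + m 3) / Mtot3 m) • y 2 - (m 2 / (m 0 + m 2)) • y 0,
    c + ((m 0 + m 2) / Mtot3 m) • y 2 - (m 3 / (m 1 + m 3)) • y 1,
    c - ((m 1 + m 3) / Mtot3 m) • y 2 + (m 0 / (m 0 + m 2)) • y 0,
    c + ((m 0 + m 2) / Mtot3 m) • y 2 + (m 1 / (m 1 + m 3)) • y 1]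

lemma relMass_pos {m : Fin 4 → ℝ} (hm : ∀ j, 0 < m j) (i : Fin 3) : 0 < relMass m i := by
  fin_cases i
  exacts [add_pos (hm 0) (hm 2), add_pos (hm 1) (hm 3), Mtot3_pos hm]

lemma relMass_zero_add_one (m : Fin 4 → ℝ) : relMass m 0 + relMass m 1 = Mtot3 m := by
  simp only [relMass, Matrix.cons_val, Mtot3]
  ring

lemma relMass_le {m : Fin 4 → ℝ} (hm : ∀ j, 0 < m j) (i : Fin 3) : relMass m i ≤ Mtot3 m := by
  have h0 := relMass_pos hm 0
  have h1 := relMass_pos hm 1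
  have hsum := relMass_zero_add_one m
  fin_cases i
  · exact hsum ▸ le_add_of_nonneg_right h1.le
  · exact hsum ▸ le_add_of_nonneg_left h0.le
  · exact le_rfl

lemma rel_assemble {m : Fin 4 → ℝ} (hm : ∀ j, 0 < m j) (y : Fin 3 → V3) (c : V3) :
    rel m (assemble m y c) = y := by
  have hA := (relMass_pos hm 0).ne'
  have hB := (relMass_pos hm 1).ne'
  have hM := (Mtot3_pos hm).ne'
  simp only [relMass, Matrix.cons_val] at hA hB
  funext i
  fin_cases i <;>
  simp only [rel, pairCom, assemble, Matrix.cons_val, Fin.zero_eta, Fin.mk_one,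
    Fin.reduceFinMk] <;>
  match_scalars <;> field_simp <;> (try simp only [Mtot3]) <;> ring

lemma com_assemble {m : Fin 4 → ℝ} (hm : ∀ j, 0 < m j) (y : Fin 3 → V3) (c : V3) :
    com m (assemble m y c) = c := by
  have hA := (relMass_pos hm 0).ne'
  have hB := (relMass_pos hm 1).ne'
  have hM := (Mtot3_pos hm).ne'
  simp only [relMass, Matrix.cons_val] at hA hB
  simp only [com, assemble, Matrix.cons_val]
  match_scalars <;> field_simp <;> (try simp only [Mtot3]) <;> ring

lemma hasDerivAt_rel {m : Fin 4 → ℝ} {x : ℝ → Fin 4 → V3} {x' : Fin 4 → V3} {t : ℝ}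
    (h : HasDerivAt x x' t) (i : Fin 3) :
    HasDerivAt (fun s => rel m (x s) i) (rel m x' i) t := by
  have hx := hasDerivAt_pi.1 h
  fin_cases i
  · exact (hx 2).sub (hx 0)
  · exact (hx 3).sub (hx 1)
  · exact (((hx 1).const_smul (m 1 / (m 1 + m 3))).add ((hx 3).const_smul (m 3 / (m 1 + m 3)))).sub
      (((hx 0).const_smul (m 0 / (m 0 + m 2))).add ((hx 2).const_smul (m 2 / (m 0 + m 2))))

lemma hasDerivAt_com {m : Fin 4 → ℝ} {x : ℝ → Fin 4 → V3} {x' : Fin 4 → V3} {t : ℝ}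
    (h : HasDerivAt x x' t) : HasDerivAt (fun s => com m (x s)) (com m x') t := by
  have hx := hasDerivAt_pi.1 h
  exact (((((hx 0).const_smul (m 0)).add ((hx 1).const_smul (m 1))).add
    ((hx 2).const_smul (m 2))).add ((hx 3).const_smul (m 3))).const_smul (1 / Mtot3 m)

/-- The Newtonian accelerations of the four bodies. -/
def newtonAcc (m : Fin 4 → ℝ) (p : Fin 4 → V3) (j : Fin 4) : V3 :=
  ∑ i ∈ Finset.univ.filter (fun i => i ≠ j), (m i / ‖p i - p j‖ ^ 3) • (p i - p j)

/-- The attraction of a unit mass, up to sign. -/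
def keplerField (x : V3) : V3 := (1 / ‖x‖ ^ 3) • x

lemma keplerField_zero : keplerField 0 = 0 := smul_zero _

lemma keplerField_sub_comm (x y : V3) : keplerField (x - y) = -keplerField (y - x) := by
  rw [← neg_sub, keplerField, keplerField, norm_neg, smul_neg]

lemma newtonAcc_eq (m : Fin 4 → ℝ) (p : Fin 4 → V3) (j : Fin 4) :
    newtonAcc m p j = ∑ i, m i • keplerField (p i - p j) := by
  have hself : ∀ i ∈ Finset.univ, (m i / ‖p i - p j‖ ^ 3) • (p i - p j) ≠ 0 → i ≠ j :=
    fun i _ hi hij => hi (by rw [hij, sub_self, smul_zero])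
  rw [newtonAcc, Finset.sum_filter_of_ne hself]
  exact Finset.sum_congr rfl fun i _ => by rw [keplerField, smul_smul, mul_one_div]

lemma newtonAcc_eq_softNewton {m : Fin 4 → ℝ} {p : Fin 4 → V3} {r : ℝ}
    (hr : ∀ i j, i ≠ j → r ≤ ‖p i - p j‖) : newtonAcc m p = softNewton m r p := by
  funext j
  rw [newtonAcc_eq]
  refine Finset.sum_congr rfl fun i _ => ?_
  rcases eq_or_ne i j with rfl | hij
  · simp [keplerField, softKepler]
  · rw [softKepler_of_le (hr i j hij), keplerField]

lemma com_newtonAcc (m : Fin 4 → ℝ) (p : Fin 4 → V3) : com m (newtonAcc m p) = 0 := by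
  simp only [com, newtonAcc_eq, Fin.sum_univ_four, keplerField_sub_comm (p 0) (p 1),
    keplerField_sub_comm (p 0) (p 2), keplerField_sub_comm (p 0) (p 3),
    keplerField_sub_comm (p 2) (p 1), keplerField_sub_comm (p 2) (p 3),
    keplerField_sub_comm (p 1) (p 3), sub_self, keplerField_zero]
  module

/-! ### Tidal forces -/

/-- The tidal accelerations: what the relative accelerations add to the Kepler attractions. -/
def tide (m : Fin 4 → ℝ) (p : Fin 4 → V3) (i : Fin 3) : V3 :=
  rel m (newtonAcc m p) i + relMass m i • keplerField (rel m p i)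

/-- The difference between the attraction of body `j` on body `i` and that of the two centres of
mass, for `i` in the binary `0, 2` and `j` in the binary `1, 3`. -/
def crossDefect (m : Fin 4 → ℝ) (p : Fin 4 → V3) (i j : Fin 4) : V3 :=
  keplerField (p j - p i) - keplerField (rel m p 2)

lemma rel_newtonAcc (m : Fin 4 → ℝ) (p : Fin 4 → V3) (i : Fin 3) :
    rel m (newtonAcc m p) i = -relMass m i • keplerField (rel m p i) + tide m p i := by
  rw [tide]
  module

lemma tide_zero (m : Fin 4 → ℝ) (p : Fin 4 → V3) : tide m p 0 =
    m 1 • (crossDefect m p 2 1 - crossDefect m p 0 1)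
      + m 3 • (crossDefect m p 2 3 - crossDefect m p 0 3) := by
  simp only [tide, crossDefect, sub_sub_sub_cancel_right]
  simp only [rel, relMass, Matrix.cons_val, newtonAcc_eq, Fin.sum_univ_four, sub_self,
    keplerField_zero,
    keplerField_sub_comm (p 0) (p 2)]
  module

lemma tide_one (m : Fin 4 → ℝ) (p : Fin 4 → V3) : tide m p 1 =
    m 0 • (crossDefect m p 0 1 - crossDefect m p 0 3)
      + m 2 • (crossDefect m p 2 1 - crossDefect m p 2 3) := by
  simp only [tide, crossDefect, sub_sub_sub_cancel_right]
  simp only [rel, relMass, Matrix.cons_val, newtonAcc_eq, Fin.sum_univ_four, sub_self,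
    keplerField_zero,
    keplerField_sub_comm (p 0) (p 1), keplerField_sub_comm (p 0) (p 3),
    keplerField_sub_comm (p 2) (p 1), keplerField_sub_comm (p 2) (p 3),
    keplerField_sub_comm (p 1) (p 3)]
  module

lemma tide_two {m : Fin 4 → ℝ} (hm : ∀ j, 0 < m j) (p : Fin 4 → V3) : tide m p 2 =
    -(Mtot3 m / ((m 0 + m 2) * (m 1 + m 3))) •
      ((m 0 * m 1) • crossDefect m p 0 1 + (m 0 * m 3) • crossDefect m p 0 3
        + (m 2 * m 1) • crossDefect m p 2 1 + (m 2 * m 3) • crossDefect m p 2 3) := by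
  have hA := (relMass_pos hm 0).ne'
  have hB := (relMass_pos hm 1).ne'
  simp only [relMass, Matrix.cons_val] at hA hB
  simp only [tide, crossDefect]
  generalize keplerField (rel m p 2) = K
  simp only [rel, relMass, pairCom, Matrix.cons_val, newtonAcc_eq, Fin.sum_univ_four, sub_self,
    keplerField_zero,
    keplerField_sub_comm (p 0) (p 1), keplerField_sub_comm (p 0) (p 2),
    keplerField_sub_comm (p 0) (p 3), keplerField_sub_comm (p 2) (p 1),
    keplerField_sub_comm (p 2) (p 3), keplerField_sub_comm (p 1) (p 3)]
  match_scalars <;> field_simp <;> (try simp only [Mtot3]) <;> ring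

lemma norm_cross_sub_rel_two_le {m : Fin 4 → ℝ} (hm : ∀ j, 0 < m j) (p : Fin 4 → V3)
    {i j : Fin 4} (hi : i = 0 ∨ i = 2) (hj : j = 1 ∨ j = 3) :
    ‖p j - p i - rel m p 2‖ ≤ ‖rel m p 0‖ + ‖rel m p 1‖ := by
  have hfirst : ‖p i - pairCom (m 0) (m 2) (p 0) (p 2)‖ ≤ ‖rel m p 0‖ := by
    rcases hi with rfl | rfl
    exacts [norm_left_sub_pairCom_le (hm 0) (hm 2) _ _,
      norm_right_sub_pairCom_le (hm 0) (hm 2) _ _]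
  have hsecond : ‖p j - pairCom (m 1) (m 3) (p 1) (p 3)‖ ≤ ‖rel m p 1‖ := by
    rcases hj with rfl | rfl
    exacts [norm_left_sub_pairCom_le (hm 1) (hm 3) _ _,
      norm_right_sub_pairCom_le (hm 1) (hm 3) _ _]
  simp only [rel, Matrix.cons_val] at hfirst hsecond ⊢
  rw [sub_sub_sub_comm, add_comm]
  exact (norm_sub_le _ _).trans (add_le_add hsecond hfirst)

section Hierarchy

variable {m : Fin 4 → ℝ} {p : Fin 4 → V3} {D : ℝ}

lemma le_cross_dist (hm : ∀ j, 0 < m j) (hp : D + ‖rel m p 0‖ + ‖rel m p 1‖ ≤ ‖rel m p 2‖)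
    {i j : Fin 4} (hi : i = 0 ∨ i = 2) (hj : j = 1 ∨ j = 3) : D ≤ ‖p j - p i‖ := by
  have hdiff := norm_cross_sub_rel_two_le hm p hi hj
  have htri := norm_sub_norm_le (rel m p 2) (p j - p i)
  rw [norm_sub_rev (rel m p 2)] at htri
  linarith

lemma le_dist_of_hierarchy (hm : ∀ j, 0 < m j) {ρ : ℝ}
    (hp : D + ‖rel m p 0‖ + ‖rel m p 1‖ ≤ ‖rel m p 2‖) (hD : ρ ≤ D) (h0 : ρ ≤ ‖rel m p 0‖)
    (h1 : ρ ≤ ‖rel m p 1‖) (i j : Fin 4) (hij : i ≠ j) : ρ ≤ ‖p i - p j‖ := by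
  wlog hlt : i < j generalizing i j
  · rw [norm_sub_rev]
    exact this j i hij.symm (lt_of_le_of_ne (not_lt.1 hlt) hij.symm)
  have hcross {i j : Fin 4} (hi : i = 0 ∨ i = 2) (hj : j = 1 ∨ j = 3) : ρ ≤ ‖p i - p j‖ := by
    rw [norm_sub_rev]
    exact hD.trans (le_cross_dist hm hp hi hj)
  fin_cases i <;> fin_cases j <;> first
    | exact absurd hlt (by decide)
    | exact hcross (by decide) (by decide)
    | (rw [norm_sub_rev]; first | exact h0 | exact h1 | exact hcross (by decide) (by decide))

lemma norm_crossDefect_le (hm : ∀ j, 0 < m j) (hD : 0 < D)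
    (hp : D + ‖rel m p 0‖ + ‖rel m p 1‖ ≤ ‖rel m p 2‖) {i j : Fin 4} (hi : i = 0 ∨ i = 2)
    (hj : j = 1 ∨ j = 3) :
    ‖crossDefect m p i j‖ ≤ 4 * D⁻¹ ^ 3 * (‖rel m p 0‖ + ‖rel m p 1‖) := by
  have hsep : D ≤ ‖rel m p 2‖ := by linarith [norm_nonneg (rel m p 0), norm_nonneg (rel m p 1)]
  exact (norm_kepler_sub_le hD (le_cross_dist hm hp hi hj) hsep).trans
    (mul_le_mul_of_nonneg_left (norm_cross_sub_rel_two_le hm p hi hj) (by positivity))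

lemma norm_smul_sub_add_smul_sub_le {E : Type*} [NormedAddCommGroup E] [NormedSpace ℝ E]
    {a b L M : ℝ} {x y z w : E} (ha : 0 ≤ a) (hb : 0 ≤ b) (hab : a + b ≤ M) (hx : ‖x‖ ≤ L)
    (hy : ‖y‖ ≤ L) (hz : ‖z‖ ≤ L) (hw : ‖w‖ ≤ L) : ‖a • (x - y) + b • (z - w)‖ ≤ 2 * M * L := by
  have hL : 0 ≤ L := (norm_nonneg x).trans hx
  calc ‖a • (x - y) + b • (z - w)‖ ≤ a * ‖x - y‖ + b * ‖z - w‖ := by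
        refine (norm_add_le _ _).trans_eq ?_
        rw [norm_smul, norm_smul, Real.norm_of_nonneg ha, Real.norm_of_nonneg hb]
    _ ≤ a * (L + L) + b * (L + L) := by
        gcongr
        exacts [norm_sub_le_of_le hx hy, norm_sub_le_of_le hz hw]
    _ = 2 * (a + b) * L := by ring
    _ ≤ 2 * M * L := by gcongr

lemma norm_tide_two_le (hm : ∀ j, 0 < m j) {L : ℝ} (h01 : ‖crossDefect m p 0 1‖ ≤ L)
    (h03 : ‖crossDefect m p 0 3‖ ≤ L) (h21 : ‖crossDefect m p 2 1‖ ≤ L)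
    (h23 : ‖crossDefect m p 2 3‖ ≤ L) : ‖tide m p 2‖ ≤ Mtot3 m * L := by
  have hm0 := hm 0
  have hm1 := hm 1
  have hm2 := hm 2
  have hm3 := hm 3
  have hM := Mtot3_pos hm
  have hsmul {a : ℝ} (ha : 0 < a) {y : V3} (hy : ‖y‖ ≤ L) : ‖a • y‖ ≤ a * L := by
    rw [norm_smul, Real.norm_of_nonneg ha.le]
    gcongr
  have hsum := norm_add_le_of_le (norm_add_le_of_le (norm_add_le_of_le
    (hsmul (mul_pos hm0 hm1) h01) (hsmul (mul_pos hm0 hm3) h03))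
    (hsmul (mul_pos hm2 hm1) h21)) (hsmul (mul_pos hm2 hm3) h23)
  rw [tide_two hm, norm_smul, norm_neg, Real.norm_of_nonneg (by positivity)]
  refine (mul_le_mul_of_nonneg_left hsum (by positivity)).trans_eq ?_
  field_simp
  ring

lemma norm_tide_le (hm : ∀ j, 0 < m j) (hD : 0 < D)
    (hp : D + ‖rel m p 0‖ + ‖rel m p 1‖ ≤ ‖rel m p 2‖) (i : Fin 3) :
    ‖tide m p i‖ ≤ 8 * Mtot3 m * D⁻¹ ^ 3 * (‖rel m p 0‖ + ‖rel m p 1‖) := by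
  have h01 := norm_crossDefect_le hm hD hp (i := 0) (j := 1) (by decide) (by decide)
  have h03 := norm_crossDefect_le hm hD hp (i := 0) (j := 3) (by decide) (by decide)
  have h21 := norm_crossDefect_le hm hD hp (i := 2) (j := 1) (by decide) (by decide)
  have h23 := norm_crossDefect_le hm hD hp (i := 2) (j := 3) (by decide) (by decide)
  have hM := Mtot3_pos hm
  suffices h : ‖tide m p i‖ ≤ 2 * Mtot3 m * (4 * D⁻¹ ^ 3 * (‖rel m p 0‖ + ‖rel m p 1‖)) by
    linarith
  fin_cases i
  · exact (tide_zero m p).symm ▸ norm_smul_sub_add_smul_sub_le (hm 1).le (hm 3).le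
      (relMass_le hm 1) h21 h01 h23 h03
  · exact (tide_one m p).symm ▸ norm_smul_sub_add_smul_sub_le (hm 0).le (hm 2).le
      (relMass_le hm 0) h01 h03 h21 h23
  · refine (norm_tide_two_le hm h01 h03 h21 h23).trans ?_
    gcongr
    linarith

end Hierarchy

/-! ### Rescaled arcs and hierarchical solutions -/

/-- Parameters of a nearly rectilinear Kepler arc: the mass `k`, the scale `l`, the dimensionless
initial speed `g`, the tolerance `κ`, and the unit directions `d`, `e` of the initial position and
velocity. The initial position is `k l² d` and the initial velocity `(g / l) e`. -/
structure ArcParam where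
  k : ℝ
  l : ℝ
  g : ℝ
  κ : ℝ
  d : V3
  e : V3

namespace ArcParam

/-- The unit of length of an arc. -/
def size (P : ArcParam) : ℝ := P.k * P.l ^ 2

/-- The unit of time of an arc, its size divided by its unit of velocity `1 / l`. -/
def period (P : ArcParam) : ℝ := P.k * P.l ^ 3

/-- The position in the units of the arc. -/
def pos (P : ArcParam) (r : ℝ → V3) (s : ℝ) : V3 := (1 / P.size) • r (P.period * s)

/-- The velocity in the units of the arc. -/
def vel (P : ArcParam) (u : ℝ → V3) (s : ℝ) : V3 := P.l • u (P.period * s)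

/-- The perturbing acceleration in the units of the arc. -/
def force (P : ArcParam) (f : ℝ → V3) (s : ℝ) : V3 := (P.k * P.l ^ 4) • f (P.period * s)

/-- The parameters are normalised and small enough for the arc to tolerate a perturbing acceleration
of size `F` during a time `T`. -/
structure Admissible (P : ArcParam) (F T : ℝ) : Prop where
  k_pos : 0 < P.k
  l_pos : 0 < P.l
  g_pos : 0 < P.g
  g_le : P.g ≤ 1 / 100
  kappa_nonneg : 0 ≤ P.κ
  kappa_le : P.κ ≤ 1 / 10000
  norm_d : ‖P.d‖ = 1
  norm_e : ‖P.e‖ = 1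
  inner_d_e : ⟪P.d, P.e⟫ = 0
  F_nonneg : 0 ≤ F
  force_le : P.k * P.l ^ 4 * F ≤ 1 / 100
  force_mul_le : P.l * F * T ≤ P.κ * P.g

/-- The state `(r, u)` satisfies the a priori bounds when this is nonpositive. -/
def slack (P : ArcParam) (r u : V3) : ℝ :=
  max (max (‖r‖ - 2 * P.size) (P.size * P.g ^ 2 / 4 - ‖r‖)) (‖u‖ - 6 / (P.g * P.l))

variable {P : ArcParam} {F T τ : ℝ} {r u f : ℝ → V3}

lemma slack_le_iff {a b : V3} : P.slack a b ≤ 0 ↔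
    ‖a‖ ≤ 2 * P.size ∧ P.size * P.g ^ 2 / 4 ≤ ‖a‖ ∧ ‖b‖ ≤ 6 / (P.g * P.l) := by
  simp only [slack, max_le_iff, sub_nonpos, and_assoc]

lemma slack_lt_iff {a b : V3} : P.slack a b < 0 ↔
    ‖a‖ < 2 * P.size ∧ P.size * P.g ^ 2 / 4 < ‖a‖ ∧ ‖b‖ < 6 / (P.g * P.l) := by
  simp only [slack, max_lt_iff, sub_neg, and_assoc]

lemma continuousAt_slack {t : ℝ} (hr : ContinuousAt r t) (hu : ContinuousAt u t) :
    ContinuousAt (fun s => P.slack (r s) (u s)) t := by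
  unfold slack
  fun_prop

lemma size_pos (hk : 0 < P.k) (hl : 0 < P.l) : 0 < P.size := by
  unfold size
  positivity

lemma period_pos (hk : 0 < P.k) (hl : 0 < P.l) : 0 < P.period := by
  unfold period
  positivity

lemma period_mul_mem_Icc (hk : 0 < P.k) (hl : 0 < P.l) {s : ℝ} (hs : s ∈ Icc 0 (τ / P.period)) :
    P.period * s ∈ Icc 0 τ :=
  ⟨mul_nonneg (period_pos hk hl).le hs.1, (le_div_iff₀' (period_pos hk hl)).1 hs.2⟩

lemma norm_pos_eq (hk : 0 < P.k) (hl : 0 < P.l) (s : ℝ) :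
    ‖P.pos r s‖ = ‖r (P.period * s)‖ / P.size := by
  rw [pos, norm_smul, Real.norm_of_nonneg (one_div_nonneg.2 (size_pos hk hl).le)]
  ring

lemma norm_vel_eq (hl : 0 < P.l) (s : ℝ) : ‖P.vel u s‖ = P.l * ‖u (P.period * s)‖ := by
  rw [vel, norm_smul, Real.norm_of_nonneg hl.le]

lemma hasDerivAt_comp_period_mul {r' : V3} {s : ℝ} (h : HasDerivAt r r' (P.period * s)) :
    HasDerivAt (fun s => r (P.period * s)) (P.period • r') s := by
  have hlin : HasDerivAt (fun s : ℝ => P.period * s) P.period s := by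
    simpa using (hasDerivAt_id s).const_mul P.period
  exact h.scomp s hlin

lemma hasDerivAt_pos (hk : 0 < P.k) (hl : 0 < P.l) {s : ℝ}
    (h : HasDerivAt r (u (P.period * s)) (P.period * s)) :
    HasDerivAt (P.pos r) (P.vel u s) s := by
  refine ((hasDerivAt_comp_period_mul h).const_smul (1 / P.size)).congr_deriv ?_
  rw [vel, smul_smul, size, period]
  congr 1
  field_simp

lemma hasDerivAt_vel (hk : 0 < P.k) (hl : 0 < P.l) {s : ℝ}
    (h : HasDerivAt u (-P.k • keplerField (r (P.period * s)) + f (P.period * s)) (P.period * s)) :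
    HasDerivAt (P.vel u) (-(1 / ‖P.pos r s‖ ^ 3) • P.pos r s + P.force f s) s := by
  refine ((hasDerivAt_comp_period_mul h).const_smul P.l).congr_deriv ?_
  rw [norm_pos_eq hk hl, pos, force, keplerField]
  generalize P.period * s = t
  rw [size, period]
  match_scalars <;> field_simp

lemma Admissible.pertKepler (hP : P.Admissible F T) (hτ : τ ≤ T)
    (hr : ∀ t ∈ Icc 0 τ, HasDerivAt r (u t) t)
    (hu : ∀ t ∈ Icc 0 τ, HasDerivAt u (-P.k • keplerField (r t) + f t) t)
    (hf : ∀ t ∈ Icc 0 τ, ‖f t‖ ≤ F) (hs : ∀ t ∈ Icc 0 τ, P.slack (r t) (u t) ≤ 0)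
    (hr0 : r 0 = P.size • P.d) (hu0 : u 0 = (P.g / P.l) • P.e) :
    PertKepler (P.pos r) (P.vel u) (P.force f) P.d P.e P.g P.κ (P.k * P.l ^ 4 * F)
      (τ / P.period) := by
  obtain ⟨hk, hl, hg, hgle, hκ, hκle, hd, he, hde, hF, hFle, hFT⟩ := hP
  have hsize := size_pos hk hl
  have hmem {s : ℝ} (hs : s ∈ Icc 0 (τ / P.period)) := period_mul_mem_Icc hk hl hs
  refine ⟨fun s hsI => hasDerivAt_pos hk hl (hr _ (hmem hsI)),
    fun s hsI => hasDerivAt_vel hk hl (hu _ (hmem hsI)), fun s hsI => ?_, fun s hsI => ?_,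
    fun s hsI => ?_, fun s hsI => ?_, ?_, ?_, hd, he, hde, hg, hgle, hκ, hκle, hFle, ?_⟩
  · have hlower := (slack_le_iff.1 (hs _ (hmem hsI))).2.1
    rw [← norm_pos_iff, norm_pos_eq hk hl]
    exact div_pos (hlower.trans_lt' (by positivity)) hsize
  · rw [force, norm_smul, Real.norm_of_nonneg (by positivity)]
    exact mul_le_mul_of_nonneg_left (hf _ (hmem hsI)) (by positivity)
  · rw [norm_pos_eq hk hl, div_le_iff₀ hsize]
    exact (slack_le_iff.1 (hs _ (hmem hsI))).1
  · rw [norm_vel_eq hl]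
    calc P.l * ‖u (P.period * s)‖ ≤ P.l * (6 / (P.g * P.l)) := by
          gcongr
          exact (slack_le_iff.1 (hs _ (hmem hsI))).2.2
      _ = 6 / P.g := by field_simp
  · rw [pos, mul_zero, hr0, smul_smul, one_div, inv_mul_cancel₀ hsize.ne', one_smul]
  · rw [vel, mul_zero, hu0, smul_smul, mul_div_cancel₀ _ hl.ne']
  · calc P.k * P.l ^ 4 * F * (τ / P.period) = P.l * F * τ := by
          rw [period]
          field_simp
      _ ≤ P.l * F * T := by gcongr
      _ ≤ P.κ * P.g := hFT

lemma slack_neg_of_pertKepler {ε : ℝ} (hk : 0 < P.k) (hl : 0 < P.l) (hτ : 0 ≤ τ)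
    (H : PertKepler (P.pos r) (P.vel u) f P.d P.e P.g P.κ ε (τ / P.period)) :
    P.slack (r τ) (u τ) < 0 := by
  have hg := H.g_pos
  have hsize := size_pos hk hl
  have hperiod := period_pos hk hl
  have hmem : τ / P.period ∈ Icc 0 (τ / P.period) := ⟨by positivity, le_rfl⟩
  have hupper := H.norm_pos_le hmem
  have hlower := H.le_norm_pos hmem
  have hvel := H.norm_vel_lt hmem
  rw [norm_pos_eq hk hl, mul_div_cancel₀ _ hperiod.ne'] at hupper hlower
  rw [norm_vel_eq hl, mul_div_cancel₀ _ hperiod.ne', lt_div_iff₀ hg] at hvel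
  rw [div_le_iff₀ hsize] at hupper
  rw [le_div_iff₀ hsize] at hlower
  refine slack_lt_iff.2 ⟨by linarith, ?_, ?_⟩
  · have : 0 < P.g ^ 2 * P.size := by positivity
    linarith
  · rw [lt_div_iff₀ (by positivity)]
    linarith

lemma Admissible.slack_init_neg (hP : P.Admissible F T) :
    P.slack (P.size • P.d) ((P.g / P.l) • P.e) < 0 := by
  have hl := hP.l_pos
  have hg := hP.g_pos
  have hsize := size_pos hP.k_pos hl
  have hg2 : P.g ^ 2 < 1 := by nlinarith [hP.g_le]
  rw [slack_lt_iff, norm_smul, norm_smul, hP.norm_d, hP.norm_e, mul_one, mul_one,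
    Real.norm_of_nonneg hsize.le, Real.norm_of_nonneg (by positivity),
    div_lt_div_iff₀ hl (by positivity)]
  exact ⟨by linarith, by nlinarith, by nlinarith⟩

end ArcParam

/-- Three arcs are compatible with a hierarchical motion on `[0, T]` of the masses `m`, the two
binaries staying at distance at least `D` from each other. -/
structure Hierarchical (m : Fin 4 → ℝ) (P : Fin 3 → ArcParam) (D T : ℝ) : Prop where
  k_eq : ∀ i, (P i).k = relMass m i
  dist_pos : 0 < D
  dist_add_le : D + 2 * (P 0).size + 2 * (P 1).size ≤ (P 2).size * (P 2).g ^ 2 / 4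
  admissible : ∀ i,
    (P i).Admissible (8 * Mtot3 m * D⁻¹ ^ 3 * (2 * (P 0).size + 2 * (P 1).size)) T

namespace Hierarchical

variable {m : Fin 4 → ℝ} {P : Fin 3 → ArcParam} {D T : ℝ}

lemma dist_add_norm_le (H : Hierarchical m P D T) {p q : Fin 4 → V3}
    (hs : ∀ i, (P i).slack (rel m p i) (rel m q i) ≤ 0) :
    D + ‖rel m p 0‖ + ‖rel m p 1‖ ≤ ‖rel m p 2‖ := by
  have h0 := (ArcParam.slack_le_iff.1 (hs 0)).1
  have h1 := (ArcParam.slack_le_iff.1 (hs 1)).1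
  have h2 := (ArcParam.slack_le_iff.1 (hs 2)).2.1
  linarith [H.dist_add_le]

lemma norm_tide_le (H : Hierarchical m P D T) (hm : ∀ j, 0 < m j) {p q : Fin 4 → V3}
    (hs : ∀ i, (P i).slack (rel m p i) (rel m q i) ≤ 0) (i : Fin 3) :
    ‖tide m p i‖ ≤ 8 * Mtot3 m * D⁻¹ ^ 3 * (2 * (P 0).size + 2 * (P 1).size) := by
  have hM := Mtot3_pos hm
  have hD := H.dist_pos
  refine (_root_.norm_tide_le hm hD (H.dist_add_norm_le hs) i).trans ?_
  gcongr
  · exact (ArcParam.slack_le_iff.1 (hs 0)).1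
  · exact (ArcParam.slack_le_iff.1 (hs 1)).1

lemma size_mul_pos (H : Hierarchical m P D T) (i : Fin 3) : 0 < (P i).size * (P i).g ^ 2 / 4 := by
  have hsize := ArcParam.size_pos (H.admissible i).k_pos (H.admissible i).l_pos
  have hg := (H.admissible i).g_pos
  positivity

lemma exists_le_dist (H : Hierarchical m P D T) (hm : ∀ j, 0 < m j) :
    ∃ ρ > 0, ∀ p q : Fin 4 → V3, (∀ i, (P i).slack (rel m p i) (rel m q i) ≤ 0) →
      ∀ i j, i ≠ j → ρ ≤ ‖p i - p j‖ := by
  refine ⟨min D (min ((P 0).size * (P 0).g ^ 2 / 4) ((P 1).size * (P 1).g ^ 2 / 4)),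
    lt_min H.dist_pos (lt_min (H.size_mul_pos 0) (H.size_mul_pos 1)), fun p q hs => ?_⟩
  refine le_dist_of_hierarchy hm (H.dist_add_norm_le hs) (min_le_left _ _) ?_ ?_
  · exact ((min_le_right _ _).trans (min_le_left _ _)).trans (ArcParam.slack_le_iff.1 (hs 0)).2.1
  · exact ((min_le_right _ _).trans (min_le_right _ _)).trans (ArcParam.slack_le_iff.1 (hs 1)).2.1

lemma exists_pertKepler (H : Hierarchical m P D T) (hm : ∀ j, 0 < m j)
    {x v : ℝ → Fin 4 → V3} {τ : ℝ} (hτ : τ ≤ T) (hx : ∀ t ∈ Icc 0 τ, HasDerivAt x (v t) t)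
    (hv : ∀ t ∈ Icc 0 τ, HasDerivAt v (newtonAcc m (x t)) t)
    (hs : ∀ t ∈ Icc 0 τ, ∀ i, (P i).slack (rel m (x t) i) (rel m (v t) i) ≤ 0)
    (hx0 : ∀ i, rel m (x 0) i = (P i).size • (P i).d)
    (hv0 : ∀ i, rel m (v 0) i = ((P i).g / (P i).l) • (P i).e) (i : Fin 3) :
    ∃ f ε, PertKepler ((P i).pos fun t => rel m (x t) i) ((P i).vel fun t => rel m (v t) i) f
      (P i).d (P i).e (P i).g (P i).κ ε (τ / (P i).period) := by
  refine ⟨_, _, (H.admissible i).pertKepler (f := fun t => tide m (x t) i) hτ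
    (fun t ht => hasDerivAt_rel (hx t ht) i) (fun t ht => ?_)
    (fun t ht => H.norm_tide_le hm (hs t ht) i) (fun t ht => hs t ht i) (hx0 i) (hv0 i)⟩
  rw [H.k_eq, ← rel_newtonAcc]
  exact hasDerivAt_rel (hv t ht) i

end Hierarchical

lemma com_eq_of_hasDerivAt {m : Fin 4 → ℝ} {x v : ℝ → Fin 4 → V3} {T : ℝ}
    (hv : ∀ t ∈ Icc 0 T, HasDerivAt v (newtonAcc m (x t)) t) {t : ℝ} (ht : t ∈ Icc 0 T) :
    com m (v t) = com m (v 0) := by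
  have h := norm_image_sub_le_of_hasDerivAt (C := 0) (fun s hs => hasDerivAt_com (hv s hs))
    (fun s _ => by rw [com_newtonAcc, norm_zero]) ht
  rwa [zero_mul, norm_le_zero_iff, sub_eq_zero] at h

/-- The solution of the softened problem satisfies the a priori bounds, by a bootstrap; they keep
the bodies apart, so it solves the Newtonian problem. -/
lemma Hierarchical.exists_newton_solution {m : Fin 4 → ℝ} {P : Fin 3 → ArcParam} {D T : ℝ}
    (H : Hierarchical m P D T) (hm : ∀ j, 0 < m j) (hT : 0 ≤ T) (w : V3) :
    ∃ x v : ℝ → Fin 4 → V3,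
      (∀ t ∈ Icc 0 T, (∀ i j, i ≠ j → x t i ≠ x t j) ∧ HasDerivAt x (v t) t ∧
        HasDerivAt v (newtonAcc m (x t)) t) ∧
      com m (v 0) = w ∧
      ∀ i, ∃ f ε, PertKepler ((P i).pos fun t => rel m (x t) i)
        ((P i).vel fun t => rel m (v t) i) f
        (P i).d (P i).e (P i).g (P i).κ ε (T / (P i).period) := by
  obtain ⟨ρ, hρ, hdist⟩ := H.exists_le_dist hm
  obtain ⟨x, v, hx0, hv0, hxv⟩ := exists_softNewton_solution (fun j => (hm j).le) hρ
    (assemble m (fun i => (P i).size • (P i).d) 0)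
    (assemble m (fun i => ((P i).g / (P i).l) • (P i).e) w) hT
  have hrx0 (i : Fin 3) : rel m (x 0) i = (P i).size • (P i).d := by rw [hx0, rel_assemble hm]
  have hrv0 (i : Fin 3) : rel m (v 0) i = ((P i).g / (P i).l) • (P i).e := by
    rw [hv0, rel_assemble hm]
  have hnewton {t : ℝ} (ht : t ∈ Icc 0 T)
      (hs : ∀ i, (P i).slack (rel m (x t) i) (rel m (v t) i) ≤ 0) :
      HasDerivAt v (newtonAcc m (x t)) t := by
    rw [newtonAcc_eq_softNewton (hdist _ _ hs)]
    exact (hxv t ht).2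
  have hslack : ∀ t ∈ Icc 0 T, ∀ i, (P i).slack (rel m (x t) i) (rel m (v t) i) < 0 := by
    refine forall_neg_of_bootstrap (fun i t ht => ArcParam.continuousAt_slack
      (hasDerivAt_rel (hxv t ht).1 i).continuousAt (hasDerivAt_rel (hxv t ht).2 i).continuousAt)
      (fun i => ?_) fun t ht hs i => ?_
    · rw [hrx0, hrv0]
      exact (H.admissible i).slack_init_neg
    · have hsub {s : ℝ} (hst : s ∈ Icc 0 t) : s ∈ Icc 0 T := ⟨hst.1, hst.2.trans ht.2⟩
      obtain ⟨_, _, harc⟩ := H.exists_pertKepler hm ht.2 (fun s hst => (hxv s (hsub hst)).1)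
        (fun s hst => hnewton (hsub hst) (hs s hst)) hs hrx0 hrv0 i
      exact ArcParam.slack_neg_of_pertKepler (r := fun t => rel m (x t) i)
        (u := fun t => rel m (v t) i) (H.admissible i).k_pos (H.admissible i).l_pos ht.1 harc
  have hslack_le (t : ℝ) (ht : t ∈ Icc 0 T) (i : Fin 3) := (hslack t ht i).le
  have hv (t : ℝ) (ht : t ∈ Icc 0 T) := hnewton ht (hslack_le t ht)
  refine ⟨x, v, fun t ht => ⟨fun i j hij => ?_, (hxv t ht).1, hv t ht⟩, ?_,
    H.exists_pertKepler hm le_rfl (fun t ht => (hxv t ht).1) hv hslack_le hrx0 hrv0⟩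
  · have hpos := hρ.trans_le (hdist _ _ (hslack_le t ht) i j hij)
    exact sub_ne_zero.1 (norm_pos_iff.1 hpos)
  · rw [hv0, com_assemble hm]

lemma Hierarchical.exists_solution {m : Fin 4 → ℝ} {P : Fin 3 → ArcParam} {D T : ℝ}
    (H : Hierarchical m P D T) (hm : ∀ j, 0 < m j) (hT : 0 ≤ T) (w : V3) :
    ∃ x v : Fin 4 → ℝ → V3, IsFourBodySolution m (Icc 0 T) x v ∧
      (∀ t ∈ Icc 0 T, com m (posAt v t) = w) ∧
      ∀ i, ∃ f ε, PertKepler ((P i).pos fun t => rel m (posAt x t) i)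
        ((P i).vel fun t => rel m (posAt v t) i) f
        (P i).d (P i).e (P i).g (P i).κ ε (T / (P i).period) := by
  obtain ⟨x, v, hxv, hcom, harcs⟩ := H.exists_newton_solution hm hT w
  refine ⟨fun j t => x t j, fun j t => v t j, ⟨fun t ht => (hxv t ht).1,
    fun j t ht => hasDerivAt_pi.1 (hxv t ht).2.1 j,
    fun j t ht => hasDerivAt_pi.1 (hxv t ht).2.2 j⟩, fun t ht => ?_, harcs⟩
  exact (com_eq_of_hasDerivAt (fun s hs => (hxv s hs).2.2) ht).trans hcom

/-! ### Choice of scales -/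

/-- The vector of `V3` with the given coordinates. -/
def vec3 (a b c : ℝ) : V3 := !₂[a, b, c]

@[simp] lemma vec3_zero_coord (a b c : ℝ) : vec3 a b c 0 = a := rfl

@[simp] lemma vec3_one_coord (a b c : ℝ) : vec3 a b c 1 = b := rfl

@[simp] lemma vec3_two_coord (a b c : ℝ) : vec3 a b c 2 = c := rfl

lemma norm_vec3_eq_one {a b c : ℝ} (h : a ^ 2 + b ^ 2 + c ^ 2 = 1) : ‖vec3 a b c‖ = 1 := by
  refine (pow_eq_one_iff_of_nonneg (norm_nonneg _) two_ne_zero).1 ?_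
  rw [V3.norm_sq, vec3_zero_coord, vec3_one_coord, vec3_two_coord, h]

/-- Direction of the arcs of the two binaries, slightly tilted out of the horizontal plane. -/
def tiltDir (g : ℝ) : V3 := vec3 0 √(1 - (g ^ 2) ^ 2) (g ^ 2)

lemma norm_tiltDir {g : ℝ} (hg : 0 < g) (hg1 : g ≤ 1 / 100) : ‖tiltDir g‖ = 1 := by
  refine norm_vec3_eq_one ?_
  have hsq : g ^ 2 ≤ 1 := pow_le_one₀ hg.le (by linarith)
  rw [Real.sq_sqrt (sub_nonneg.2 (pow_le_one₀ (sq_nonneg g) hsq))]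
  ring

/-- The arcs of the binary `0, 2`, of the binary `1, 3` and of their relative motion. The exponents
of the large parameter `X` separate the three time scales, make the initial speeds of the binaries
negligible and keep the tides negligible for a multiple of the longest time scale. -/
def arc (m : Fin 4 → ℝ) (g X : ℝ) : Fin 3 → ArcParam :=
  ![⟨m 0 + m 2, 1, X⁻¹ ^ 8, X⁻¹ ^ 8, tiltDir g, vec3 1 0 0⟩,
    ⟨m 1 + m 3, X ^ 2, X⁻¹ ^ 6, X⁻¹ ^ 6, tiltDir g, vec3 1 0 0⟩,
    ⟨Mtot3 m, X ^ 7, g, X⁻¹, vec3 1 0 0, vec3 0 0 1⟩]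

/-- Length of the time interval for `n` periods of the relative motion of the two binaries. -/
def horizon (m : Fin 4 → ℝ) (n X : ℝ) : ℝ := n * (Mtot3 m * (X ^ 7) ^ 3)

section arc

variable {m : Fin 4 → ℝ} {g X : ℝ}

lemma arc_k (m : Fin 4 → ℝ) (g X : ℝ) (i : Fin 3) : (arc m g X i).k = relMass m i := by
  fin_cases i <;> rfl

lemma arc_l_pos (hX : 0 < X) (i : Fin 3) : 0 < (arc m g X i).l := by
  fin_cases i
  · exact one_pos
  · exact pow_pos hX 2
  · exact pow_pos hX 7

lemma arc_l_le (hX : 1 ≤ X) (i : Fin 3) : (arc m g X i).l ≤ X ^ 7 := by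
  fin_cases i
  · exact one_le_pow₀ hX
  · exact pow_le_pow_right₀ hX (by norm_num)
  · exact le_rfl

lemma arc_kappa (hX : 0 < X) (i : Fin 3) : (arc m g X i).κ = (arc m g X i).l * X⁻¹ ^ 8 := by
  fin_cases i <;> simp only [arc, Fin.reduceFinMk, Fin.zero_eta, Matrix.cons_val] <;> field_simp

lemma arc_kappa_le (hX : 1 ≤ X) (i : Fin 3) : (arc m g X i).κ ≤ X⁻¹ := by
  have hX0 : 0 < X := one_pos.trans_le hX
  rw [arc_kappa hX0]
  calc (arc m g X i).l * X⁻¹ ^ 8 ≤ X ^ 7 * X⁻¹ ^ 8 := by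
        gcongr
        exact arc_l_le hX i
    _ = X⁻¹ := by field_simp

lemma le_arc_g (hX : 1 ≤ X) (hg : 0 < g) (hg1 : g ≤ 1) (i : Fin 3) :
    g * X⁻¹ ^ 8 ≤ (arc m g X i).g := by
  have hXinv : X⁻¹ ≤ 1 := inv_le_one_of_one_le₀ hX
  fin_cases i
  · exact mul_le_of_le_one_left (by positivity) hg1
  · exact (mul_le_of_le_one_left (by positivity) hg1).trans
      (pow_le_pow_of_le_one (by positivity) hXinv (by norm_num))
  · exact mul_le_of_le_one_right hg.le (pow_le_one₀ (by positivity) hXinv)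

lemma arc_g_le (hX : 100 ≤ X) (hg1 : g ≤ 1 / 100) (i : Fin 3) : (arc m g X i).g ≤ 1 / 100 := by
  have hXinv : X⁻¹ ≤ 1 / 100 := by
    rw [one_div]
    gcongr
  have hpow (n : ℕ) (hn : n ≠ 0) : X⁻¹ ^ n ≤ 1 / 100 :=
    (pow_le_of_le_one (by positivity) (hXinv.trans (by norm_num)) hn).trans hXinv
  fin_cases i
  · exact hpow 8 (by norm_num)
  · exact hpow 6 (by norm_num)
  · exact hg1

lemma arc_d_e (hg : 0 < g) (hg1 : g ≤ 1 / 100) (i : Fin 3) :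
    ‖(arc m g X i).d‖ = 1 ∧ ‖(arc m g X i).e‖ = 1 ∧ ⟪(arc m g X i).d, (arc m g X i).e⟫ = 0 := by
  have hhor : ‖vec3 1 0 0‖ = 1 := norm_vec3_eq_one (by norm_num)
  have htilt := norm_tiltDir hg hg1
  have hinner : ⟪tiltDir g, vec3 1 0 0⟫ = 0 := by simp [V3.inner_eq, tiltDir]
  fin_cases i
  · exact ⟨htilt, hhor, hinner⟩
  · exact ⟨htilt, hhor, hinner⟩
  · exact ⟨hhor, norm_vec3_eq_one (by norm_num), by simp [V3.inner_eq, arc]⟩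

lemma arc_admissible (hm : ∀ j, 0 < m j) {n K F : ℝ} (hg : 0 < g) (hg1 : g ≤ 1 / 100)
    (hn : 0 ≤ n) (hX : 10000 ≤ X) (hKX : K ≤ 1 / 100 * X) (hKn : K * n ≤ g * X) (hF0 : 0 ≤ F)
    (hF : F ≤ K / Mtot3 m * X⁻¹ ^ 38) (i : Fin 3) :
    (arc m g X i).Admissible F (horizon m n X) := by
  have hX0 : 0 < X := by linarith
  have hX1 : 1 ≤ X := by linarith
  have hM := Mtot3_pos hm
  have hl := arc_l_pos (m := m) (g := g) hX0 i
  have hk := relMass_pos hm i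
  have hκ := arc_kappa (m := m) (g := g) hX0 i
  have hgle := le_arc_g (m := m) hX1 hg (by linarith) i
  obtain ⟨hd, he, hde⟩ := arc_d_e (m := m) (X := X) hg hg1 i
  have hgpos : 0 < (arc m g X i).g := hgle.trans_lt' (by positivity)
  refine ⟨(arc_k m g X i).symm ▸ hk, hl, hgpos, arc_g_le (by linarith) hg1 i,
    hκ.symm ▸ by positivity, (arc_kappa_le hX1 i).trans ?_, hd, he, hde, hF0, ?_, ?_⟩
  · rw [one_div]
    gcongr
  · calc (arc m g X i).k * (arc m g X i).l ^ 4 * F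
        ≤ Mtot3 m * (X ^ 7) ^ 4 * (K / Mtot3 m * X⁻¹ ^ 38) := by
          rw [arc_k]
          gcongr
          exacts [relMass_le hm i, arc_l_le hX1 i]
      _ = K * X⁻¹ ^ 10 := by field_simp
      _ ≤ 1 / 100 * X * X⁻¹ ^ 10 := by gcongr
      _ = 1 / 100 * X⁻¹ ^ 9 := by field_simp
      _ ≤ 1 / 100 := mul_le_of_le_one_right (by norm_num)
          (pow_le_one₀ (by positivity) (inv_le_one_of_one_le₀ hX1))
  · calc (arc m g X i).l * F * horizon m n X
        ≤ (arc m g X i).l * (K / Mtot3 m * X⁻¹ ^ 38) * horizon m n X := by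
          rw [horizon]
          gcongr
      _ = (arc m g X i).l * (K * n) * X⁻¹ ^ 17 := by
          rw [horizon]
          field_simp
      _ ≤ (arc m g X i).l * (g * X) * X⁻¹ ^ 17 := by gcongr
      _ = (arc m g X i).l * X⁻¹ ^ 8 * (g * X⁻¹ ^ 8) := by field_simp
      _ ≤ (arc m g X i).κ * (arc m g X i).g := by
          rw [hκ]
          gcongr

lemma arc_hierarchical (hm : ∀ j, 0 < m j) {n : ℝ} (hg : 0 < g) (hg1 : g ≤ 1 / 100)
    (hn : 0 ≤ n) (hX : 10000 ≤ X) (hKX : 8192 / g ^ 6 ≤ 1 / 100 * X)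
    (hKn : 8192 / g ^ 6 * n ≤ g * X) (hsep : 16 ≤ g ^ 2 * X) :
    Hierarchical m (arc m g X) (Mtot3 m * X ^ 14 * g ^ 2 / 8) (horizon m n X) := by
  have hX1 : 1 ≤ X := by linarith
  have hM := Mtot3_pos hm
  have hk0 : 0 < m 0 + m 2 := add_pos (hm 0) (hm 2)
  have hk1 : 0 < m 1 + m 3 := add_pos (hm 1) (hm 3)
  have hsizes : 2 * (arc m g X 0).size + 2 * (arc m g X 1).size ≤ 2 * Mtot3 m * X ^ 4 := by
    simp only [arc, ArcParam.size, Matrix.cons_val]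
    have : (m 0 + m 2) * 1 ^ 2 ≤ (m 0 + m 2) * X ^ 4 := by
      gcongr
      rw [one_pow]
      exact one_le_pow₀ hX1
    rw [Mtot3]
    linarith
  have hsize_nonneg : 0 ≤ 2 * (arc m g X 0).size + 2 * (arc m g X 1).size := by
    simp only [arc, ArcParam.size, Matrix.cons_val]
    positivity
  refine ⟨arc_k m g X, by positivity, ?_, arc_admissible hm hg hg1 hn hX hKX hKn (by positivity) ?_⟩
  · have hX4 : Mtot3 m * X ^ 4 * 16 ≤ Mtot3 m * X ^ 13 * (g ^ 2 * X) := by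
      gcongr
      norm_num
    calc _ ≤ Mtot3 m * X ^ 14 * g ^ 2 / 8 + 2 * Mtot3 m * X ^ 4 := by
          rw [add_assoc]
          gcongr
      _ ≤ Mtot3 m * X ^ 14 * g ^ 2 / 8 + Mtot3 m * X ^ 14 * g ^ 2 / 8 := by
          gcongr
          linarith
      _ = (arc m g X 2).size * (arc m g X 2).g ^ 2 / 4 := by
          simp only [arc, ArcParam.size, Matrix.cons_val]
          ring
  · calc _ ≤ 8 * Mtot3 m * (Mtot3 m * X ^ 14 * g ^ 2 / 8)⁻¹ ^ 3 * (2 * Mtot3 m * X ^ 4) := by gcongr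
      _ = 8192 / g ^ 6 / Mtot3 m * X⁻¹ ^ 38 := by
          field_simp
          norm_num

end arc

lemma eventually_le_const_mul (C : ℝ) {c : ℝ} (hc : 0 < c) : ∀ᶠ X : ℝ in atTop, C ≤ c * X :=
  (tendsto_id.const_mul_atTop hc).eventually_ge_atTop C

/-- Each of the three motions `r t i` with velocity `u t i` is, up to time `T` and in the units of
the `i`-th arc, a perturbed Kepler motion started along this arc. -/
def FollowsArcs (m : Fin 4 → ℝ) (g X T : ℝ) (r u : ℝ → Fin 3 → V3) : Prop :=
  ∀ i, ∃ f ε, PertKepler ((arc m g X i).pos fun t => r t i) ((arc m g X i).vel fun t => u t i) f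
    (arc m g X i).d (arc m g X i).e (arc m g X i).g (arc m g X i).κ ε (T / (arc m g X i).period)

lemma eventually_exists_solution {m : Fin 4 → ℝ} (hm : ∀ j, 0 < m j) {g n : ℝ} (hg : 0 < g)
    (hg1 : g ≤ 1 / 100) (hn : 0 ≤ n) : ∀ᶠ X : ℝ in atTop, ∀ w : V3,
    ∃ x v : Fin 4 → ℝ → V3, IsFourBodySolution m (Icc 0 (horizon m n X)) x v ∧
      (∀ t ∈ Icc 0 (horizon m n X), com m (posAt v t) = w) ∧
      FollowsArcs m g X (horizon m n X) (fun t => rel m (posAt x t))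
        (fun t => rel m (posAt v t)) := by
  filter_upwards [eventually_ge_atTop 10000,
    eventually_le_const_mul (8192 / g ^ 6) (c := 1 / 100) (by norm_num),
    eventually_le_const_mul (8192 / g ^ 6 * n) hg,
    eventually_le_const_mul 16 (pow_pos hg 2)] with X hX hKX hKn hsep w
  refine (arc_hierarchical hm hg hg1 hn hX hKX hKn hsep).exists_solution hm ?_ w
  have hM := Mtot3_pos hm
  rw [horizon]
  positivity

/-! ### Simultaneous passages -/

namespace PertKepler

variable {r u f : ℝ → V3} {d e : V3} {g κ ε T p : ℝ}

lemma exists_passage (H : PertKepler r u f d e g κ ε (T / p)) (hp : 0 < p) {a c : ℝ} (ha : 0 ≤ a)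
    (haT : a + 105 * p ≤ T) (hc : |c| ≤ 1 / 2100) :
    ∃ t ∈ Icc a (a + 105 * p), ⟪u (t / p), d⟫ = c ∧ 1 / 4 ≤ ‖r (t / p)‖ := by
  obtain ⟨s, ⟨has, hsa⟩, hc, hr⟩ := H.exists_inner_vel_eq (a := a / p) (by positivity)
    (by rwa [le_div_iff₀ hp, add_mul, div_mul_cancel₀ _ hp.ne']) hc
  rw [div_le_iff₀ hp] at has
  rw [← sub_le_iff_le_add, le_div_iff₀ hp] at hsa
  refine ⟨s * p, ⟨has, by linarith⟩, ?_⟩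
  rw [mul_div_cancel_right₀ _ hp.ne']
  exact ⟨hc, hr⟩

lemma norm_drift_div_le (H : PertKepler r u f d e g κ ε (T / p)) (hp : 0 < p) {a t b : ℝ}
    (ha : 0 ≤ a) (hat : a ≤ t) (htT : t ≤ T) (hta : t ≤ a + b) (hb : b / p ≤ 1 / 200)
    (hr : 1 / 4 ≤ ‖r (a / p)‖) :
    ‖r (t / p) - r (a / p)‖ ≤ 4 * (b / p) ∧ ‖u (t / p) - u (a / p)‖ ≤ 26 * (b / p) := by
  have hwait : t / p - a / p ≤ b / p := by
    rw [← sub_div]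
    gcongr
    linarith
  obtain ⟨hpos, hvel⟩ := H.norm_drift_le (a := a / p) (t := t / p) (by positivity) (by gcongr)
    (by gcongr) (hwait.trans hb) hr
  exact ⟨hpos.trans (by linarith), hvel.trans (by linarith)⟩

end PertKepler

/-- The periods satisfy `p₀ ≪ p₁ ≪ p₂`: wait for a passage of the slowest motion first, then of the
next one, since each barely moves while the faster ones are awaited. -/
lemma exists_simultaneous_passage {r₀ u₀ f₀ r₁ u₁ f₁ r₂ u₂ f₂ : ℝ → V3} {d₀ e₀ d₁ e₁ d₂ e₂ : V3}
    {g₀ κ₀ ε₀ g₁ κ₁ ε₁ g₂ κ₂ ε₂ T p₀ p₁ p₂ a c₀ c₁ c₂ : ℝ}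
    (H₀ : PertKepler r₀ u₀ f₀ d₀ e₀ g₀ κ₀ ε₀ (T / p₀))
    (H₁ : PertKepler r₁ u₁ f₁ d₁ e₁ g₁ κ₁ ε₁ (T / p₁))
    (H₂ : PertKepler r₂ u₂ f₂ d₂ e₂ g₂ κ₂ ε₂ (T / p₂))
    (hp₀ : 0 < p₀) (hp₁ : 0 < p₁) (hp₂ : 0 < p₂) (ha : 0 ≤ a)
    (haT : a + 105 * p₂ + 105 * (p₀ + p₁) ≤ T) (h01 : 105 * p₀ / p₁ ≤ 1 / 200)
    (h12 : 105 * (p₀ + p₁) / p₂ ≤ 1 / 200)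
    (hc₀ : |c₀| ≤ 1 / 2100) (hc₁ : |c₁| ≤ 1 / 2100) (hc₂ : |c₂| ≤ 1 / 2100) :
    ∃ t ∈ Icc a (a + 105 * p₂ + 105 * (p₀ + p₁)),
      ‖u₀ (t / p₀) - c₀ • d₀‖ ≤ 17 * g₀ + 150 * κ₀ ∧
      ‖u₁ (t / p₁) - c₁ • d₁‖ ≤ 17 * g₁ + 150 * κ₁ + 26 * (105 * p₀ / p₁) ∧
      ∃ s ∈ Icc 0 (T / p₂), ⟪u₂ s, d₂⟫ = c₂ ∧ 1 / 4 ≤ ‖r₂ s‖ ∧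
        ‖r₂ (t / p₂) - r₂ s‖ ≤ 4 * (105 * (p₀ + p₁) / p₂) ∧
        ‖u₂ (t / p₂) - u₂ s‖ ≤ 26 * (105 * (p₀ + p₁) / p₂) := by
  obtain ⟨s₂, ⟨has₂, hs₂a⟩, hus₂, hrs₂⟩ := H₂.exists_passage hp₂ ha (by linarith) hc₂
  have hs₂ : 0 ≤ s₂ := ha.trans has₂
  obtain ⟨s₁, ⟨hs₂₁, hs₁₂⟩, hus₁, hrs₁⟩ := H₁.exists_passage hp₁ hs₂ (by linarith) hc₁
  have hs₁ : 0 ≤ s₁ := hs₂.trans hs₂₁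
  obtain ⟨t, ⟨hs₁t, hts₁⟩, hut, hrt⟩ := H₀.exists_passage hp₀ hs₁ (by linarith) hc₀
  have htT : t ≤ T := by linarith
  refine ⟨t, ⟨by linarith, by linarith⟩, ?_, ?_, s₂ / p₂, ⟨by positivity, ?_⟩, hus₂, hrs₂,
    H₂.norm_drift_div_le hp₂ hs₂ (hs₂₁.trans hs₁t) htT (by linarith) h12 hrs₂⟩
  · rw [← hut]
    exact H₀.norm_vel_sub_le ⟨div_nonneg (hs₁.trans hs₁t) hp₀.le, by gcongr⟩ hrt
  · have hvel := H₁.norm_vel_sub_le (t := s₁ / p₁) ⟨by positivity, by gcongr; linarith⟩ hrs₁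
    rw [hus₁] at hvel
    have hdrift := (H₁.norm_drift_div_le hp₁ hs₁ hs₁t htT hts₁ h01 hrs₁).2
    have htri := norm_sub_le_norm_sub_add_norm_sub (u₁ (t / p₁)) (u₁ (s₁ / p₁)) (c₁ • d₁)
    linarith
  · gcongr
    linarith

/-- The state `(r, u)` is within `E` of that, at radial velocity `-κ g`, of a nearly rectilinear
Kepler motion started at `(1, 0, 0)` with velocity `(0, 0, g)`, up to higher order terms in `g`. -/
structure NearApocentre (g κ B E : ℝ) (r u : V3) : Prop where
  pos_zero : |r 0 - 1| ≤ 8 * B ^ 2 * g ^ 2 + E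
  pos_one : |r 1| ≤ E
  pos_two : |r 2 - κ * g ^ 2| ≤ 4 * B ^ 3 * g ^ 4 + E
  angMom : ‖cross3 r u - g • cross3 (vec3 1 0 0) (vec3 0 0 1)‖ ≤ E
  vel : ‖u‖ ≤ (17 + B) * g + E

lemma NearApocentre.mono {g κ B E E' : ℝ} {r u : V3} (h : NearApocentre g κ B E r u)
    (hE : E ≤ E') : NearApocentre g κ B E' r u where
  pos_zero := h.pos_zero.trans (by gcongr)
  pos_one := h.pos_one.trans hE
  pos_two := h.pos_two.trans (by gcongr)
  angMom := h.angMom.trans hE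
  vel := h.vel.trans (by gcongr)

lemma PertKepler.nearApocentre {r u f : ℝ → V3} {g κ ε T b B s t w : ℝ}
    (H : PertKepler r u f (vec3 1 0 0) (vec3 0 0 1) g κ ε T) (hs : s ∈ Icc 0 T) (ht : t ∈ Icc 0 T)
    (hr : 1 / 4 ≤ ‖r s‖) (hu : ⟪u s, vec3 1 0 0⟫ = -(b * g)) (hb : |b| ≤ B) (hw : 0 ≤ w)
    (hrt : ‖r t - r s‖ ≤ 4 * w) (hut : ‖u t - u s‖ ≤ 26 * w) :
    NearApocentre g b B ((100 / g ^ 2 + 62 * B + 150) * κ + 26 * w) (r t) (u t) := by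
  have hg := H.g_pos
  have hB : 0 ≤ B := (abs_nonneg b).trans hb
  have hκ := H.kappa_nonneg
  have hκg : 0 ≤ 100 / g ^ 2 * κ := by positivity
  have hκB : 0 ≤ 62 * B * κ := by positivity
  have hubg : |⟪u s, vec3 1 0 0⟫| ≤ B * g := by
    rw [hu, abs_neg, abs_mul, abs_of_pos hg]
    gcongr
  have hcoord (i : Fin 3) : |r t i - r s i| ≤ 4 * w := (V3.abs_apply_le (r t - r s) i).trans hrt
  have hpos₀ := H.abs_inner_dir_sub_one_le hs hr hubg
  have hpos₁ := H.abs_inner_normal_le hs hr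
  have hpos₂ := H.abs_inner_vel_dir_add_le hs hr hubg
  rw [hu] at hpos₂
  simp only [V3.inner_eq, cross3_zero_coord, cross3_one_coord, cross3_two_coord, vec3_zero_coord,
    vec3_one_coord, vec3_two_coord, mul_zero, mul_one, add_zero, zero_add, sub_zero, zero_sub,
    mul_neg, abs_neg] at hpos₀ hpos₁ hpos₂
  refine ⟨?_, ?_, ?_, ?_, ?_⟩
  · have htri := abs_sub_le (r t 0) (r s 0) 1
    rw [mul_div_right_comm] at hpos₀
    linarith [hcoord 0]
  · have htri := abs_sub_abs_le_abs_sub (r t 1) (r s 1)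
    linarith [hcoord 1]
  · have htri := abs_sub_le (r t 2) (r s 2) (b * g ^ 2)
    rw [show r s 2 + -(g * (b * g)) = r s 2 - b * g ^ 2 by ring] at hpos₂
    linarith [hcoord 2]
  · have hgκ : 2 * κ * g ≤ 2 * κ * 1 := by
      gcongr
      linarith [H.g_le]
    linarith [H.angMom_sub_le ht]
  · have hvel := H.norm_vel_sub_le hs hr
    have hnorm : ‖⟪u s, vec3 1 0 0⟫ • vec3 1 0 0‖ ≤ B * g := by
      rwa [norm_smul, H.norm_dir, mul_one]
    have htri := norm_le_norm_sub_add (u t) (u s)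
    have htri' := norm_le_norm_sub_add (u s) (⟪u s, vec3 1 0 0⟫ • vec3 1 0 0)
    linarith

section arc

variable {m : Fin 4 → ℝ} {g X : ℝ}

lemma arc_period_zero : (arc m g X 0).period = m 0 + m 2 := by
  rw [ArcParam.period]
  exact (congrArg _ (one_pow 3)).trans (mul_one _)

lemma arc_period_one : (arc m g X 1).period = (m 1 + m 3) * (X ^ 2) ^ 3 := rfl

lemma arc_period_two : (arc m g X 2).period = Mtot3 m * (X ^ 7) ^ 3 := rfl

lemma Mtot3_eq (m : Fin 4 → ℝ) : Mtot3 m = (m 0 + m 2) + (m 1 + m 3) := by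
  rw [Mtot3]
  ring

lemma arc_period_add_le (hm : ∀ j, 0 < m j) (hX : 1 ≤ X) :
    (arc m g X 0).period + (arc m g X 1).period ≤ X⁻¹ * (arc m g X 2).period := by
  have hk₀ := add_pos (hm 0) (hm 2)
  have hk₁ := add_pos (hm 1) (hm 3)
  have hpow : X⁻¹ * (X ^ 7) ^ 3 = X ^ 20 := by field_simp
  rw [arc_period_zero, arc_period_one, arc_period_two, Mtot3_eq, mul_left_comm, hpow,
    add_mul (m 0 + m 2)]
  gcongr
  · exact le_mul_of_one_le_right hk₀.le (one_le_pow₀ hX)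
  · rw [← pow_mul]
    exact pow_le_pow_right₀ hX (by norm_num)

lemma arc_size_le (hm : ∀ j, 0 < m j) (hX : 1 ≤ X) {i : Fin 3} (hi : i ≠ 2) :
    (arc m g X i).size ≤ X⁻¹ * (arc m g X 2).size := by
  have hM := Mtot3_pos hm
  have hl : (arc m g X i).l ^ 2 ≤ X⁻¹ * (X ^ 7) ^ 2 := by
    have hpow : X⁻¹ * (X ^ 7) ^ 2 = X ^ 13 := by field_simp
    rw [hpow]
    fin_cases i
    · exact (one_pow 2).trans_le (one_le_pow₀ hX)
    · exact (pow_mul X 2 2).symm.trans_le (pow_le_pow_right₀ hX (by norm_num))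
    · exact absurd rfl hi
  calc (arc m g X i).k * (arc m g X i).l ^ 2
      ≤ Mtot3 m * (X⁻¹ * (X ^ 7) ^ 2) := by
        gcongr
        rw [arc_k]
        exact relMass_le hm i
    _ = X⁻¹ * (Mtot3 m * (X ^ 7) ^ 2) := by ring

end arc

/-- In the units of the third arc, the binaries have size at most `E` and relative velocities
within `E` of `c₀` and `c₁` times the tilted direction, while their relative motion passes near its
apocentre. -/
structure NearPassage (g κ B c₀ c₁ E : ℝ) (r u : Fin 3 → V3) : Prop extends
    NearApocentre g κ B E (r 2) (u 2) where
  pos_binary_zero : ‖r 0‖ ≤ E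
  pos_binary_one : ‖r 1‖ ≤ E
  vel_binary_zero : ‖u 0 - c₀ • tiltDir g‖ ≤ E
  vel_binary_one : ‖u 1 - c₁ • tiltDir g‖ ≤ E

section passage

variable {m : Fin 4 → ℝ} {g B κ c₀ c₁ X T a : ℝ} {r u : ℝ → Fin 3 → V3}

lemma arc_period_pos (hm : ∀ j, 0 < m j) (hX : 0 < X) (i : Fin 3) : 0 < (arc m g X i).period :=
  ArcParam.period_pos (by rw [arc_k]; exact relMass_pos hm i) (arc_l_pos hX i)

lemma arc_pos_div (hm : ∀ j, 0 < m j) (hX : 0 < X) (i : Fin 3) (r : ℝ → V3) (t : ℝ) :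
    (arc m g X i).pos r (t / (arc m g X i).period) = (1 / (arc m g X i).size) • r t := by
  rw [ArcParam.pos, mul_div_cancel₀ _ (arc_period_pos hm hX i).ne']

lemma arc_vel_div (hm : ∀ j, 0 < m j) (hX : 0 < X) (i : Fin 3) (u : ℝ → V3) (t : ℝ) :
    (arc m g X i).vel u (t / (arc m g X i).period) = (arc m g X i).l • u t := by
  rw [ArcParam.vel, mul_div_cancel₀ _ (arc_period_pos hm hX i).ne']

lemma FollowsArcs.norm_binary_pos_le (H : FollowsArcs m g X T r u) (hm : ∀ j, 0 < m j) (hX : 1 ≤ X)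
    {i : Fin 3} (hi : i ≠ 2) {t : ℝ} (ht : t ∈ Icc 0 T) :
    ‖(1 / (arc m g X 2).size) • r t i‖ ≤ 2 * X⁻¹ := by
  have hX0 : 0 < X := one_pos.trans_le hX
  have hp := arc_period_pos (g := g) hm hX0 i
  have hS j : 0 < (arc m g X j).size := by
    exact ArcParam.size_pos (by rw [arc_k]; exact relMass_pos hm j) (arc_l_pos hX0 j)
  obtain ⟨f, ε, H⟩ := H i
  have hpos := H.pos_le _ ⟨div_nonneg ht.1 hp.le, div_le_div_of_nonneg_right ht.2 hp.le⟩
  rw [arc_pos_div hm hX0, norm_smul, Real.norm_of_nonneg (one_div_nonneg.2 (hS i).le),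
    one_div_mul_eq_div, div_le_iff₀ (hS i)] at hpos
  rw [norm_smul, Real.norm_of_nonneg (one_div_nonneg.2 (hS 2).le), one_div_mul_eq_div,
    div_le_iff₀ (hS 2)]
  linarith [arc_size_le (g := g) hm hX hi]

lemma arc_period_zero_div_one (hX : 0 < X) : 105 * (arc m g X 0).period / (arc m g X 1).period
    = 105 * ((m 0 + m 2) / (m 1 + m 3)) * X⁻¹ ^ 6 := by
  rw [arc_period_zero, arc_period_one]
  field_simp

lemma exists_passage_of_followsArcs (hm : ∀ j, 0 < m j) (hκ : |κ| ≤ B) (hκg : |κ * g| ≤ 1 / 2100)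
    (hX : 0 < X) (h01 : 105 * (arc m g X 0).period / (arc m g X 1).period ≤ 1 / 200)
    (h12 : 105 * ((arc m g X 0).period + (arc m g X 1).period) / (arc m g X 2).period ≤ 105 * X⁻¹)
    (hXinv : 105 * X⁻¹ ≤ 1 / 200) (hc₀ : |c₀| ≤ 1 / 2100) (hc₁ : |c₁| ≤ 1 / 2100)
    (H : FollowsArcs m g X T r u) (ha : 0 ≤ a) (haT : (a + 106) * (arc m g X 2).period ≤ T) :
    ∃ t ∈ Icc (a * (arc m g X 2).period) ((a + 106) * (arc m g X 2).period),
      ‖(arc m g X 0).l • u t 0 - c₀ • tiltDir g‖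
        ≤ 17 * (arc m g X 0).g + 150 * (arc m g X 0).κ ∧
      ‖(arc m g X 1).l • u t 1 - c₁ • tiltDir g‖ ≤ 17 * (arc m g X 1).g +
        150 * (arc m g X 1).κ + 26 * (105 * (arc m g X 0).period / (arc m g X 1).period) ∧
      NearApocentre g κ B ((100 / g ^ 2 + 62 * B + 150) * (arc m g X 2).κ + 26 * (105 * X⁻¹))
        ((1 / (arc m g X 2).size) • r t 2) ((arc m g X 2).l • u t 2) := by
  have hp := arc_period_pos (g := g) hm hX
  have hwindow : a * (arc m g X 2).period + 105 * (arc m g X 2).period +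
      105 * ((arc m g X 0).period + (arc m g X 1).period) ≤ (a + 106) * (arc m g X 2).period := by
    have hshort := (div_le_iff₀ (hp 2)).1 (h12.trans hXinv)
    linarith [hp 2]
  obtain ⟨f₀, ε₀, H₀⟩ := H 0
  obtain ⟨f₁, ε₁, H₁⟩ := H 1
  obtain ⟨f₂, ε₂, H₂⟩ := H 2
  have ha₀ : 0 ≤ a * (arc m g X 2).period := mul_nonneg ha (hp 2).le
  obtain ⟨t, ⟨hat, hta⟩, hu₀, hu₁, s, hs, hus, hrs, hrt, hut⟩ :=
    exists_simultaneous_passage (c₂ := -(κ * g)) H₀ H₁ H₂ (hp 0) (hp 1) (hp 2) ha₀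
      (hwindow.trans haT) h01 (h12.trans hXinv) hc₀ hc₁ ((abs_neg _).trans_le hκg)
  have ht : t / (arc m g X 2).period ∈ Icc 0 (T / (arc m g X 2).period) :=
    ⟨div_nonneg (ha₀.trans hat) (hp 2).le,
      div_le_div_of_nonneg_right ((hta.trans hwindow).trans haT) (hp 2).le⟩
  have hnear := H₂.nearApocentre hs ht hrs hus hκ (w := 105 * X⁻¹) (by positivity)
    (hrt.trans (by gcongr)) (hut.trans (by gcongr))
  rw [arc_vel_div hm hX] at hu₀ hu₁ hnear
  rw [arc_pos_div hm hX] at hnear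
  exact ⟨t, ⟨hat, hta.trans hwindow⟩, hu₀, hu₁, hnear⟩

lemma abs_mul_le_of_le_inv {c q C : ℝ} (hq : 0 ≤ q) (hqX : q ≤ X⁻¹) (hX : 0 < X)
    (hc : |c| ≤ C * X) : |c * q| ≤ C := by
  rw [abs_mul, abs_of_nonneg hq]
  calc |c| * q ≤ |c| * X⁻¹ := by gcongr
    _ ≤ C := by rwa [← div_eq_mul_inv, div_le_iff₀ hX]

lemma norm_smul_sub_smul_le_of_mul {w d : V3} {q l c A : ℝ} (hq : 0 < q)
    (h : ‖(q * l) • w - (c * q) • d‖ ≤ q * A) : ‖l • w - c • d‖ ≤ A := by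
  rw [mul_comm c, mul_smul, mul_smul, ← smul_sub, norm_smul, Real.norm_of_nonneg hq.le] at h
  exact le_of_mul_le_mul_left h hq

lemma norm_binary_vel_zero_le {w d : V3} {c : ℝ} (hX : 0 < X)
    (h : ‖(arc m g X 0).l • w - (c * X⁻¹ ^ 7) • d‖
      ≤ 17 * (arc m g X 0).g + 150 * (arc m g X 0).κ) :
    ‖(arc m g X 2).l • w - c • d‖ ≤ 167 * X⁻¹ := by
  refine norm_smul_sub_smul_le_of_mul (q := X⁻¹ ^ 7) (by positivity) ?_
  have hl : X⁻¹ ^ 7 * (arc m g X 2).l = (arc m g X 0).l := by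
    change X⁻¹ ^ 7 * X ^ 7 = 1
    field_simp
  rw [hl]
  refine h.trans (le_of_eq ?_)
  change 17 * X⁻¹ ^ 8 + 150 * X⁻¹ ^ 8 = X⁻¹ ^ 7 * (167 * X⁻¹)
  ring

lemma norm_binary_vel_one_le {w d : V3} {c D : ℝ} (hX : 0 < X)
    (h : ‖(arc m g X 1).l • w - (c * X⁻¹ ^ 5) • d‖
      ≤ 17 * (arc m g X 1).g + 150 * (arc m g X 1).κ + D * X⁻¹ ^ 6) :
    ‖(arc m g X 2).l • w - c • d‖ ≤ (167 + D) * X⁻¹ := by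
  refine norm_smul_sub_smul_le_of_mul (q := X⁻¹ ^ 5) (by positivity) ?_
  have hl : X⁻¹ ^ 5 * (arc m g X 2).l = (arc m g X 1).l := by
    change X⁻¹ ^ 5 * X ^ 7 = X ^ 2
    field_simp
  rw [hl]
  refine h.trans (le_of_eq ?_)
  change 17 * X⁻¹ ^ 6 + 150 * X⁻¹ ^ 6 + D * X⁻¹ ^ 6 = X⁻¹ ^ 5 * ((167 + D) * X⁻¹)
  ring

/-- Error of the simultaneous passages of the three arcs with parameter `X`, relative to `1 / X`. -/
def passageError (m : Fin 4 → ℝ) (g B : ℝ) : ℝ :=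
  100 / g ^ 2 + 62 * B + 3000 + 2730 * ((m 0 + m 2) / (m 1 + m 3))

lemma le_passageError (hm : ∀ j, 0 < m j) (hB : 0 ≤ B) : 2 ≤ passageError m g B ∧
    100 / g ^ 2 + 62 * B + 2880 ≤ passageError m g B ∧
    167 + 2730 * ((m 0 + m 2) / (m 1 + m 3)) ≤ passageError m g B := by
  have hratio := div_pos (add_pos (hm 0) (hm 2)) (add_pos (hm 1) (hm 3))
  have hgsq : 0 ≤ 100 / g ^ 2 := by positivity
  refine ⟨?_, ?_, ?_⟩ <;> rw [passageError] <;> linarith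

lemma exists_nearPassage (hm : ∀ j, 0 < m j) (hκ : |κ| ≤ B) (hκg : |κ * g| ≤ 1 / 2100)
    (hX : 21000 ≤ X) (hc₀ : |c₀| ≤ 1 / 2100 * X) (hc₁ : |c₁| ≤ 1 / 2100 * X)
    (hk : |105 * ((m 0 + m 2) / (m 1 + m 3))| ≤ 1 / 200 * X)
    (H : FollowsArcs m g X T r u) (ha : 0 ≤ a) (haT : (a + 106) * (arc m g X 2).period ≤ T) :
    ∃ t ∈ Icc (a * (arc m g X 2).period) ((a + 106) * (arc m g X 2).period),
      NearPassage g κ B c₀ c₁ (passageError m g B * X⁻¹)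
        (fun i => (1 / (arc m g X 2).size) • r t i) (fun i => (arc m g X 2).l • u t i) := by
  have hX0 : 0 < X := by linarith
  have hX1 : 1 ≤ X := by linarith
  have hinv {j : ℕ} (hj : j ≠ 0) : X⁻¹ ^ j ≤ X⁻¹ :=
    pow_le_of_le_one (by positivity) (inv_le_one_of_one_le₀ hX1) hj
  have h01 := arc_period_zero_div_one (m := m) (g := g) hX0
  obtain ⟨t, ht, hu₀, hu₁, hnear⟩ := exists_passage_of_followsArcs hm hκ hκg hX0
    (c₀ := c₀ * X⁻¹ ^ 7) (c₁ := c₁ * X⁻¹ ^ 5) (by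
      rw [h01]
      exact (le_abs_self _).trans
        (abs_mul_le_of_le_inv (by positivity) (hinv (by norm_num)) hX0 hk))
    (by rw [div_le_iff₀ (arc_period_pos hm hX0 2)]; linarith [arc_period_add_le (g := g) hm hX1])
    (by rw [← div_eq_mul_inv, div_le_iff₀ hX0]; linarith)
    (abs_mul_le_of_le_inv (by positivity) (hinv (by norm_num)) hX0 hc₀)
    (abs_mul_le_of_le_inv (by positivity) (hinv (by norm_num)) hX0 hc₁) H ha haT
  have htT : t ∈ Icc 0 T :=
    ⟨(mul_nonneg ha (arc_period_pos hm hX0 2).le).trans ht.1, ht.2.trans haT⟩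
  have hratio := div_pos (add_pos (hm 0) (hm 2)) (add_pos (hm 1) (hm 3))
  obtain ⟨hpos_le, hnear_le, hvel_le⟩ := le_passageError (g := g) hm ((abs_nonneg κ).trans hκ)
  have hXinv : 0 ≤ X⁻¹ := by positivity
  refine ⟨t, ht, hnear.mono ?_, (H.norm_binary_pos_le hm hX1 (by decide) htT).trans (by gcongr),
    (H.norm_binary_pos_le hm hX1 (by decide) htT).trans (by gcongr), ?_, ?_⟩
  · refine le_trans (le_of_eq ?_) (mul_le_mul_of_nonneg_right hnear_le hXinv)
    change (100 / g ^ 2 + 62 * B + 150) * X⁻¹ + 26 * (105 * X⁻¹) = _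
    ring
  · refine (norm_binary_vel_zero_le hX0 hu₀).trans ?_
    gcongr
    linarith
  · rw [h01, ← mul_assoc] at hu₁
    refine (norm_binary_vel_one_le hX0 hu₁).trans ?_
    gcongr
    linarith

end passage

lemma NearPassage.mono {g κ B c₀ c₁ E E' : ℝ} {r u : Fin 3 → V3}
    (h : NearPassage g κ B c₀ c₁ E r u) (hE : E ≤ E') : NearPassage g κ B c₀ c₁ E' r u where
  toNearApocentre := h.toNearApocentre.mono hE
  pos_binary_zero := h.pos_binary_zero.trans hE
  pos_binary_one := h.pos_binary_one.trans hE
  vel_binary_zero := h.vel_binary_zero.trans hE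
  vel_binary_one := h.vel_binary_one.trans hE

lemma eventually_exists_nearPassage {m : Fin 4 → ℝ} (hm : ∀ j, 0 < m j) {g κ B E : ℝ}
    (c₀ c₁ : ℝ) (hκ : |κ| ≤ B) (hκg : |κ * g| ≤ 1 / 2100) (hE : 0 < E) :
    ∀ᶠ X : ℝ in atTop, ∀ (T : ℝ) (r u : ℝ → Fin 3 → V3), FollowsArcs m g X T r u →
      ∀ a, 0 ≤ a → (a + 106) * (arc m g X 2).period ≤ T →
        ∃ t ∈ Icc (a * (arc m g X 2).period) ((a + 106) * (arc m g X 2).period),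
          NearPassage g κ B c₀ c₁ E (fun i => (1 / (arc m g X 2).size) • r t i)
            (fun i => (arc m g X 2).l • u t i) := by
  filter_upwards [eventually_ge_atTop 21000,
    eventually_le_const_mul |c₀| (c := 1 / 2100) (by norm_num),
    eventually_le_const_mul |c₁| (c := 1 / 2100) (by norm_num),
    eventually_le_const_mul |105 * ((m 0 + m 2) / (m 1 + m 3))| (c := 1 / 200) (by norm_num),
    eventually_le_const_mul (passageError m g B) hE] with X hX hc₀ hc₁ hk hXE T r u H a ha haT
  obtain ⟨t, ht, hnear⟩ := exists_nearPassage hm hκ hκg hX hc₀ hc₁ hk H ha haT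
  refine ⟨t, ht, hnear.mono ?_⟩
  rwa [← div_eq_mul_inv, div_le_iff₀ (by linarith)]

/-! ### Jacobi coordinates near a passage -/

/-- The weight of the centre of mass in the momentum of planet 2. -/
def comWeight (m : Fin 4 → ℝ) : ℝ := m 2 + sig22 m * m 3

/-- The weight of the relative motion of the two binaries in the momentum of planet 2. -/
def sepWeight (m : Fin 4 → ℝ) : ℝ := m 1 * m 2 / Mtot2 m

/-- Component along `-(0, 1, 0)` of the rescaled angular momentum of planet 3 at a passage, up to
the factor `(m₀ + m₂) / M₂`. -/
def angMomWeight (m : Fin 4 → ℝ) : ℝ :=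
  m 3 * (sepWeight m / comWeight m + (m 0 + m 2) / Mtot3 m)

section jacobi

variable {m : Fin 4 → ℝ}

lemma comWeight_pos (hm : ∀ j, 0 < m j) : 0 < comWeight m := by
  have hM := Mtot2_pos hm
  have hm₂ := hm 2
  have hm₃ := hm 3
  rw [comWeight, sig22]
  positivity

lemma sepWeight_pos (hm : ∀ j, 0 < m j) : 0 < sepWeight m :=
  div_pos (mul_pos (hm 1) (hm 2)) (Mtot2_pos hm)

lemma angMomWeight_pos (hm : ∀ j, 0 < m j) : 0 < angMomWeight m := by
  have hm₀ := hm 0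
  have hm₂ := hm 2
  have hm₃ := hm 3
  have hM := Mtot3_pos hm
  have hc := comWeight_pos hm
  have hs : 0 < sepWeight m := sepWeight_pos hm
  unfold angMomWeight
  positivity

lemma exists_jq2_eq (hm : ∀ j, 0 < m j) : ∃ α β : ℝ, ∀ p,
    jq2 m p = α • rel m p 0 + β • rel m p 1 - sig11 m • rel m p 2 := by
  have hM := Mtot1_pos hm
  have hk₀ := add_pos (hm 0) (hm 2)
  have hk₁ := add_pos (hm 1) (hm 3)
  refine ⟨m 0 / (m 0 + m 2) + sig01 m * (m 2 / (m 0 + m 2)), sig11 m * (m 3 / (m 1 + m 3)),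
    fun p => ?_⟩
  simp only [jq2, rel, pairCom, Matrix.cons_val, sig01, sig11, Mtot1] at hM ⊢
  match_scalars <;> field_simp <;> ring

lemma exists_jq3_eq (hm : ∀ j, 0 < m j) : ∃ γ : ℝ, ∀ p,
    jq3 m p = γ • rel m p 1 + ((m 0 + m 2) / Mtot2 m) • rel m p 2 := by
  have hM := Mtot2_pos hm
  have hk₀ := add_pos (hm 0) (hm 2)
  have hk₁ := add_pos (hm 1) (hm 3)
  refine ⟨m 1 / (m 1 + m 3) + sig12 m * (m 3 / (m 1 + m 3)), fun p => ?_⟩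
  simp only [jq3, rel, pairCom, Matrix.cons_val, sig02, sig12, sig22, Mtot2] at hM ⊢
  match_scalars <;> field_simp <;> ring

lemma exists_jp2_eq (hm : ∀ j, 0 < m j) : ∃ α : ℝ, α ≠ 0 ∧ ∃ β : ℝ, ∀ q,
    jp2 m q = α • rel m q 0 + β • rel m q 1 + comWeight m • com m q
      - sepWeight m • rel m q 2 := by
  have hM := Mtot2_pos hm
  have hM₃ := Mtot3_pos hm
  have hk₀ := add_pos (hm 0) (hm 2)
  have hk₁ := add_pos (hm 1) (hm 3)
  refine ⟨m 2 * m 0 / (m 0 + m 2), (div_pos (mul_pos (hm 2) (hm 0)) hk₀).ne',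
    sig22 m * (m 3 * m 1 / (m 1 + m 3)), fun q => ?_⟩
  simp only [jp2, lmom, rel, com, pairCom, Matrix.cons_val, comWeight, sepWeight, sig22, Mtot2,
    Mtot3] at hM hM₃ ⊢
  match_scalars <;> field_simp <;> ring

lemma exists_jp3_eq (hm : ∀ j, 0 < m j) : ∃ γ : ℝ, γ ≠ 0 ∧ ∀ q,
    jp3 m q = γ • rel m q 1 + m 3 • com m q + (m 3 * ((m 0 + m 2) / Mtot3 m)) • rel m q 2 := by
  have hM := Mtot3_pos hm
  have hk₀ := add_pos (hm 0) (hm 2)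
  have hk₁ := add_pos (hm 1) (hm 3)
  refine ⟨m 3 * m 1 / (m 1 + m 3), (div_pos (mul_pos (hm 3) (hm 1)) hk₁).ne', fun q => ?_⟩
  simp only [jp3, lmom, rel, com, pairCom, Matrix.cons_val, Mtot3] at hM ⊢
  match_scalars <;> field_simp <;> ring

end jacobi

/-- The rescaled Jacobi positions `Q₂, Q₃` and momenta `P₂, P₃` of planets 2 and 3 are within `E`
of those determined by the relative state `(r, u)` of the binaries near its apocentre and by
parameters `τ` and `ν`, the momenta that the binaries contribute along the tilted direction. -/
structure NearState (m : Fin 4 → ℝ) (g κ ν τ B E : ℝ) (r u Q₂ P₂ Q₃ P₃ : V3) : Prop extends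
    NearApocentre g κ B E r u where
  jacobi_pos_two : ‖Q₂ + sig11 m • r‖ ≤ E
  jacobi_mom_two :
    ‖P₂ - (τ • tiltDir g + (sepWeight m * g) • vec3 0 0 1 - sepWeight m • u)‖ ≤ E
  jacobi_pos_three : ‖Q₃ - ((m 0 + m 2) / Mtot2 m) • r‖ ≤ E
  jacobi_mom_three :
    ‖P₃ - ((g * ν) • tiltDir g + (m 3 * (sepWeight m / comWeight m * g)) • vec3 0 0 1
      + (m 3 * ((m 0 + m 2) / Mtot3 m)) • u)‖ ≤ E

lemma norm_smul_add_smul_le {a b A : ℝ} {x y : V3} (hx : ‖x‖ ≤ A) (hy : ‖y‖ ≤ A) :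
    ‖a • x + b • y‖ ≤ (|a| + |b|) * A :=
  calc ‖a • x + b • y‖ ≤ ‖a • x‖ + ‖b • y‖ := norm_add_le _ _
    _ = |a| * ‖x‖ + |b| * ‖y‖ := by rw [norm_smul, norm_smul, Real.norm_eq_abs, Real.norm_eq_abs]
    _ ≤ (|a| + |b|) * A := by
      rw [add_mul]
      gcongr

section jacobi

variable {m : Fin 4 → ℝ}

lemma exists_jacobi_pos_two_le (hm : ∀ j, 0 < m j) : ∃ C : ℝ, ∀ {a E : ℝ} {p : Fin 4 → V3},
    ‖a • rel m p 0‖ ≤ E → ‖a • rel m p 1‖ ≤ E →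
      ‖a • jq2 m p + sig11 m • (a • rel m p 2)‖ ≤ C * E := by
  obtain ⟨α, β, hq⟩ := exists_jq2_eq hm
  refine ⟨|α| + |β|, fun {a E p} h₀ h₁ => ?_⟩
  have hsplit : a • jq2 m p + sig11 m • (a • rel m p 2)
      = α • (a • rel m p 0) + β • (a • rel m p 1) := by
    rw [hq]
    module
  rw [hsplit]
  exact norm_smul_add_smul_le h₀ h₁

lemma exists_jacobi_pos_three_le (hm : ∀ j, 0 < m j) : ∃ C : ℝ, ∀ {a E : ℝ} {p : Fin 4 → V3},
    ‖a • rel m p 1‖ ≤ E →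
      ‖a • jq3 m p - ((m 0 + m 2) / Mtot2 m) • (a • rel m p 2)‖ ≤ C * E := by
  obtain ⟨γ, hq⟩ := exists_jq3_eq hm
  refine ⟨|γ|, fun {a E p} h₁ => ?_⟩
  have hsplit : a • jq3 m p - ((m 0 + m 2) / Mtot2 m) • (a • rel m p 2)
      = γ • (a • rel m p 1) := by
    rw [hq]
    module
  rw [hsplit, norm_smul, Real.norm_eq_abs]
  gcongr

lemma exists_jacobi_mom_three_le (hm : ∀ j, 0 < m j) (ν : ℝ) : ∃ c₁ C : ℝ,
    ∀ {b E : ℝ} {q : Fin 4 → V3} {d w : V3}, b • com m q = w → ‖b • rel m q 1 - c₁ • d‖ ≤ E →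
      ‖b • jp3 m q - (ν • d + m 3 • w + (m 3 * ((m 0 + m 2) / Mtot3 m)) • (b • rel m q 2))‖
        ≤ C * E := by
  obtain ⟨γ, hγ, hp⟩ := exists_jp3_eq hm
  refine ⟨ν / γ, |γ|, fun {b E q d w} hw h₁ => ?_⟩
  have hν : γ • (ν / γ) • d = ν • d := by rw [smul_smul, mul_div_cancel₀ _ hγ]
  have hsplit : b • jp3 m q
      - (ν • d + m 3 • w + (m 3 * ((m 0 + m 2) / Mtot3 m)) • (b • rel m q 2))
        = γ • (b • rel m q 1 - (ν / γ) • d) := by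
    rw [hp, ← hw, smul_sub, hν]
    module
  rw [hsplit, norm_smul, Real.norm_eq_abs]
  gcongr

lemma exists_jacobi_mom_two_le (hm : ∀ j, 0 < m j) (c₁ τ : ℝ) : ∃ c₀ C : ℝ,
    ∀ {b E : ℝ} {q : Fin 4 → V3} {d w : V3}, b • com m q = w → ‖b • rel m q 0 - c₀ • d‖ ≤ E →
      ‖b • rel m q 1 - c₁ • d‖ ≤ E →
        ‖b • jp2 m q - (τ • d + comWeight m • w - sepWeight m • (b • rel m q 2))‖ ≤ C * E := by
  obtain ⟨α, hα, β, hp⟩ := exists_jp2_eq hm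
  refine ⟨(τ - β * c₁) / α, |α| + |β|, fun {b E q d w} hw h₀ h₁ => ?_⟩
  have hτ : α • ((τ - β * c₁) / α) • d = (τ - β * c₁) • d := by
    rw [smul_smul, mul_div_cancel₀ _ hα]
  have hsplit : b • jp2 m q - (τ • d + comWeight m • w - sepWeight m • (b • rel m q 2))
      = α • (b • rel m q 0 - ((τ - β * c₁) / α) • d) + β • (b • rel m q 1 - c₁ • d) := by
    rw [hp, ← hw, smul_sub α, hτ]
    module
  rw [hsplit]
  exact norm_smul_add_smul_le h₀ h₁

lemma eventually_const_mul_le (C : ℝ) {E : ℝ} (hE : 0 < E) : ∀ᶠ x : ℝ in 𝓝[>] 0, C * x ≤ E := by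
  have hlim : Tendsto (fun x : ℝ => C * x) (𝓝 0) (𝓝 (C * 0)) := tendsto_id.const_mul C
  rw [mul_zero] at hlim
  exact (hlim.mono_left nhdsWithin_le_nhds).eventually_le_const hE

lemma exists_nearState_of_nearPassage (hm : ∀ j, 0 < m j) (g ν τ : ℝ) {E : ℝ} (hE : 0 < E) :
    ∃ c₀ c₁ : ℝ, ∃ E' > 0, ∀ {κ B a b : ℝ} {p q : Fin 4 → V3},
      b • com m q = (sepWeight m / comWeight m * g) • vec3 0 0 1 →
      NearPassage g κ B c₀ c₁ E' (fun i => a • rel m p i) (fun i => b • rel m q i) →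
      NearState m g κ ν τ B E (a • rel m p 2) (b • rel m q 2)
        (a • jq2 m p) (b • jp2 m q) (a • jq3 m p) (b • jp3 m q) := by
  obtain ⟨C₂, hq₂⟩ := exists_jacobi_pos_two_le hm
  obtain ⟨C₃, hq₃⟩ := exists_jacobi_pos_three_le hm
  obtain ⟨c₁, D₃, hp₃⟩ := exists_jacobi_mom_three_le hm (g * ν)
  obtain ⟨c₀, D₂, hp₂⟩ := exists_jacobi_mom_two_le hm c₁ τ
  obtain ⟨E', hE', h₁, hC₂, hC₃, hD₂, hD₃⟩ :=
    ((eventually_mem_nhdsWithin (s := Ioi (0 : ℝ)) (a := 0)).and <|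
    (eventually_const_mul_le 1 hE).and <| (eventually_const_mul_le C₂ hE).and <|
    (eventually_const_mul_le C₃ hE).and <| (eventually_const_mul_le D₂ hE).and <|
    eventually_const_mul_le D₃ hE).exists
  refine ⟨c₀, c₁, E', hE', fun {κ B a b p q} hcom h => ?_⟩
  have hcw := (comWeight_pos hm).ne'
  have hmom₂ := hp₂ hcom h.vel_binary_zero h.vel_binary_one
  have hmom₃ := hp₃ hcom h.vel_binary_one
  rw [smul_smul, ← mul_assoc, mul_div_cancel₀ _ hcw] at hmom₂
  rw [smul_smul] at hmom₃
  exact ⟨h.toNearApocentre.mono (by linarith),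
    (hq₂ h.pos_binary_zero h.pos_binary_one).trans hC₂, hmom₂.trans hD₂,
    (hq₃ h.pos_binary_one).trans hC₃, hmom₃.trans hD₃⟩

end jacobi

lemma exists_itinerary {m : Fin 4 → ℝ} (hm : ∀ j, 0 < m j) {N : ℕ} (κ ν τ : Fin (N + 1) → ℝ)
    {g B E : ℝ} (hg : 0 < g) (hg1 : g ≤ 1 / 100) (hκ : ∀ k, |κ k| ≤ B) (hBg : B * g ≤ 1 / 2100)
    (hE : 0 < E) : ∃ T > 0, ∃ x v : Fin 4 → ℝ → V3, IsFourBodySolution m (Icc 0 T) x v ∧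
      ∃ t : Fin (N + 1) → ℝ, StrictMono t ∧ (∀ k, t k ∈ Icc 0 T) ∧
        ∃ a > 0, ∃ b > 0, a * b ^ 2 * Mtot3 m = 1 ∧ ∀ k, ∃ r u : V3,
          NearState m g (κ k) (ν k) (τ k) B E r u (a • jq2 m (posAt x (t k)))
            (b • jp2 m (posAt v (t k))) (a • jq3 m (posAt x (t k)))
            (b • jp3 m (posAt v (t k))) := by
  have hM := Mtot3_pos hm
  choose c₀ c₁ E' hE' hstate using fun k => exists_nearState_of_nearPassage hm g (ν k) (τ k) hE
  have hκg k : |κ k * g| ≤ 1 / 2100 := by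
    rw [abs_mul, abs_of_pos hg]
    exact (mul_le_mul_of_nonneg_right (hκ k) hg.le).trans hBg
  obtain ⟨X, hX, hsol, hpass⟩ := ((eventually_gt_atTop (0 : ℝ)).and
    ((eventually_exists_solution hm hg hg1 (n := 210 * (N + 1)) (by positivity)).and
      (eventually_all.2 fun k =>
        eventually_exists_nearPassage hm (c₀ k) (c₁ k) (hκ k) (hκg k) (hE' k)))).exists
  have hp : 0 < (arc m g X 2).period := arc_period_pos hm hX 2
  have hl : 0 < (arc m g X 2).l := arc_l_pos hX 2
  obtain ⟨x, v, hxv, hcom, H⟩ :=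
    hsol ((arc m g X 2).l⁻¹ • (sepWeight m / comWeight m * g) • vec3 0 0 1)
  have hfit (k : Fin (N + 1)) : (210 * (k : ℝ) + 106) * (arc m g X 2).period
      ≤ horizon m (210 * (N + 1)) X := by
    have hk : (k : ℝ) ≤ N := by exact_mod_cast Nat.le_of_lt_succ k.2
    refine mul_le_mul_of_nonneg_right ?_ hp.le
    linarith
  choose t ht hnear using fun k =>
    hpass k _ _ _ H (210 * (k : ℝ)) (by positivity) (hfit k)
  have ht_mem k : t k ∈ Icc 0 (horizon m (210 * (N + 1)) X) :=
    ⟨le_trans (by positivity) (ht k).1, (ht k).2.trans (hfit k)⟩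
  refine ⟨horizon m (210 * (N + 1)) X, by rw [horizon]; positivity, x, v, hxv, t,
    fun i j hij => ?_, ht_mem, 1 / (arc m g X 2).size, ?_, (arc m g X 2).l, hl, ?_,
    fun k => ⟨_, _, hstate k ?_ (hnear k)⟩⟩
  · have hij' : (i : ℝ) + 1 ≤ j := by exact_mod_cast hij
    refine (ht i).2.trans_lt (lt_of_lt_of_le ?_ (ht j).1)
    gcongr
    linarith
  · exact one_div_pos.2 (ArcParam.size_pos hM hl)
  · rw [ArcParam.size]
    change 1 / (Mtot3 m * (X ^ 7) ^ 2) * (X ^ 7) ^ 2 * Mtot3 m = 1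
    field_simp
  · rw [hcom _ (ht_mem k), smul_smul, mul_inv_cancel₀ hl.ne', one_smul]

/-! ### Limits along families of passages -/

section limits

variable {ι : Type*} {F : Filter ι}

lemma V3.tendsto_of_coords {f : ι → V3} {a : V3} (h₀ : Tendsto (fun i => f i 0) F (𝓝 (a 0)))
    (h₁ : Tendsto (fun i => f i 1) F (𝓝 (a 1))) (h₂ : Tendsto (fun i => f i 2) F (𝓝 (a 2))) :
    Tendsto f F (𝓝 a) := by
  have hsum : Tendsto (fun i => |f i 0 - a 0| + |f i 1 - a 1| + |f i 2 - a 2|) F (𝓝 0) := by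
    simpa using ((h₀.sub_const (a 0)).abs.add (h₁.sub_const (a 1)).abs).add
      (h₂.sub_const (a 2)).abs
  exact tendsto_iff_norm_sub_tendsto_zero.2
    (squeeze_zero (fun _ => norm_nonneg _) (fun _ => V3.norm_le_sum _) hsum)

lemma V3.tendsto_apply {f : ι → V3} {a : V3} (h : Tendsto f F (𝓝 a)) (j : Fin 3) :
    Tendsto (fun i => f i j) F (𝓝 (a j)) :=
  ((EuclideanSpace.proj (𝕜 := ℝ) j).continuous.tendsto a).comp h

lemma tendsto_cross3 {f f' : ι → V3} {a a' : V3} (h : Tendsto f F (𝓝 a))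
    (h' : Tendsto f' F (𝓝 a')) : Tendsto (fun i => cross3 (f i) (f' i)) F (𝓝 (cross3 a a')) :=
  (cross3CLM.continuous₂.tendsto (a, a')).comp (h.prodMk_nhds h')

lemma tendsto_inv_smul_of_norm_sub_le {V : Type*} [NormedAddCommGroup V] [NormedSpace ℝ V]
    {x : ι → V} {c : V} {y φ : ι → ℝ} (hy : ∀ᶠ i in F, 0 < y i) (hφ : Tendsto φ F (𝓝 0))
    (hx : ∀ᶠ i in F, ‖x i - y i • c‖ ≤ φ i * y i) :
    Tendsto (fun i => (y i)⁻¹ • x i) F (𝓝 c) := by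
  refine tendsto_iff_norm_sub_tendsto_zero.2 (squeeze_zero_norm' ?_ hφ)
  filter_upwards [hy, hx] with i hyi hxi
  have hsub : (y i)⁻¹ • x i - c = (y i)⁻¹ • (x i - y i • c) := by
    rw [smul_sub, inv_smul_smul₀ hyi.ne']
  rw [norm_norm, hsub, norm_smul, norm_inv, Real.norm_of_nonneg hyi.le, inv_mul_le_iff₀ hyi,
    mul_comm]
  exact hxi

end limits

/-- A family of near states whose parameter `g` tends to `0⁺`. The tolerance `g ^ 4` is negligible
compared with `g ^ 2`, the size of the horizontal part of the angular momentum of planet 2. -/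
structure NearFamily {ι : Type*} (F : Filter ι) (m : Fin 4 → ℝ) (κ ν τ B : ℝ) (g : ι → ℝ)
    (r u Q₂ P₂ Q₃ P₃ : ι → V3) : Prop where
  tendsto : Tendsto g F (𝓝[>] 0)
  near : ∀ᶠ i in F, NearState m (g i) κ ν τ B (g i ^ 4) (r i) (u i) (Q₂ i) (P₂ i) (Q₃ i) (P₃ i)

namespace NearFamily

variable {ι : Type*} {F : Filter ι} {m : Fin 4 → ℝ} {κ ν τ B : ℝ} {g : ι → ℝ}
  {r u Q₂ P₂ Q₃ P₃ : ι → V3}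

lemma tendsto_zero (H : NearFamily F m κ ν τ B g r u Q₂ P₂ Q₃ P₃) : Tendsto g F (𝓝 0) :=
  H.tendsto.mono_right nhdsWithin_le_nhds

lemma eventually_pos (H : NearFamily F m κ ν τ B g r u Q₂ P₂ Q₃ P₃) : ∀ᶠ i in F, 0 < g i :=
  H.tendsto eventually_mem_nhdsWithin

lemma eventually_pow_pos (H : NearFamily F m κ ν τ B g r u Q₂ P₂ Q₃ P₃) (n : ℕ) :
    ∀ᶠ i in F, 0 < g i ^ n :=
  H.eventually_pos.mono fun _ hg => pow_pos hg n

lemma tendsto_pow (H : NearFamily F m κ ν τ B g r u Q₂ P₂ Q₃ P₃) {n : ℕ} (hn : n ≠ 0) :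
    Tendsto (fun i => g i ^ n) F (𝓝 0) := by
  simpa [hn] using H.tendsto_zero.pow n

lemma tendsto_inv_pow_smul (H : NearFamily F m κ ν τ B g r u Q₂ P₂ Q₃ P₃) {n : ℕ} (hn : n < 4)
    {w : ι → V3} (hw : ∀ᶠ i in F, ‖w i‖ ≤ g i ^ 4) :
    Tendsto (fun i => (g i ^ n)⁻¹ • w i) F (𝓝 0) := by
  refine tendsto_inv_smul_of_norm_sub_le (H.eventually_pow_pos n)
    (H.tendsto_pow (Nat.sub_ne_zero_of_lt hn)) (hw.mono fun i hi => ?_)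
  rwa [smul_zero, sub_zero, pow_sub_mul_pow _ hn.le]

lemma tendsto_of_norm_le (H : NearFamily F m κ ν τ B g r u Q₂ P₂ Q₃ P₃) {w : ι → V3}
    (hw : ∀ᶠ i in F, ‖w i‖ ≤ g i ^ 4) : Tendsto w F (𝓝 0) :=
  squeeze_zero_norm' hw (H.tendsto_pow four_ne_zero)

lemma tendsto_tiltDir (H : NearFamily F m κ ν τ B g r u Q₂ P₂ Q₃ P₃) :
    Tendsto (fun i => tiltDir (g i)) F (𝓝 (vec3 0 1 0)) := by
  have hsq := H.tendsto_pow two_ne_zero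
  apply V3.tendsto_of_coords <;>
    simp only [tiltDir, vec3_zero_coord, vec3_one_coord, vec3_two_coord]
  · exact tendsto_const_nhds
  · simpa using ((hsq.pow 2).const_sub 1).sqrt
  · exact hsq

lemma tendsto_pos_zero_div (H : NearFamily F m κ ν τ B g r u Q₂ P₂ Q₃ P₃) :
    Tendsto (fun i => (r i 0 - 1) / g i) F (𝓝 0) := by
  have hφ : Tendsto (fun i => 8 * B ^ 2 * g i + g i ^ 3) F (𝓝 0) := by
    simpa using (H.tendsto_zero.const_mul (8 * B ^ 2)).add (H.tendsto_pow three_ne_zero)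
  simp only [div_eq_inv_mul]
  refine tendsto_inv_smul_of_norm_sub_le H.eventually_pos hφ (H.near.mono fun i hi => ?_)
  rw [smul_zero, sub_zero]
  exact hi.pos_zero.trans_eq (by ring)

lemma tendsto_pos_one_div (H : NearFamily F m κ ν τ B g r u Q₂ P₂ Q₃ P₃) :
    Tendsto (fun i => r i 1 / g i) F (𝓝 0) := by
  simp only [div_eq_inv_mul]
  refine tendsto_inv_smul_of_norm_sub_le H.eventually_pos (H.tendsto_pow three_ne_zero)
    (H.near.mono fun i hi => ?_)
  rw [smul_zero, sub_zero]
  exact hi.pos_one.trans_eq (by ring)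

lemma tendsto_pos_two_div (H : NearFamily F m κ ν τ B g r u Q₂ P₂ Q₃ P₃) :
    Tendsto (fun i => r i 2 / g i ^ 2) F (𝓝 κ) := by
  have hφ : Tendsto (fun i => (4 * B ^ 3 + 1) * g i ^ 2) F (𝓝 0) := by
    simpa using (H.tendsto_pow two_ne_zero).const_mul (4 * B ^ 3 + 1)
  simp only [div_eq_inv_mul]
  refine tendsto_inv_smul_of_norm_sub_le (H.eventually_pow_pos 2) hφ (H.near.mono fun i hi => ?_)
  rw [smul_eq_mul, mul_comm _ κ]
  exact hi.pos_two.trans_eq (by ring)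

lemma tendsto_pos (H : NearFamily F m κ ν τ B g r u Q₂ P₂ Q₃ P₃) :
    Tendsto r F (𝓝 (vec3 1 0 0)) := by
  refine V3.tendsto_of_coords ?_ ?_ ?_
  · have h := (H.tendsto_pos_zero_div.mul H.tendsto_zero).add_const 1
    rw [zero_mul, zero_add] at h
    exact h.congr' (H.eventually_pos.mono fun i hg => by
      rw [div_mul_cancel₀ _ hg.ne', sub_add_cancel])
  · exact squeeze_zero_norm' (H.near.mono fun i hi => hi.pos_one) (H.tendsto_pow four_ne_zero)
  · have h := H.tendsto_pos_two_div.mul (H.tendsto_pow two_ne_zero)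
    rw [mul_zero] at h
    exact h.congr' ((H.eventually_pow_pos 2).mono fun i hg => div_mul_cancel₀ _ hg.ne')

lemma tendsto_vel (H : NearFamily F m κ ν τ B g r u Q₂ P₂ Q₃ P₃) : Tendsto u F (𝓝 0) := by
  have hφ : Tendsto (fun i => (17 + B) * g i + g i ^ 4) F (𝓝 0) := by
    simpa using (H.tendsto_zero.const_mul (17 + B)).add (H.tendsto_pow four_ne_zero)
  exact squeeze_zero_norm' (H.near.mono fun i hi => hi.vel) hφ

lemma tendsto_jacobi_pos_two (H : NearFamily F m κ ν τ B g r u Q₂ P₂ Q₃ P₃) :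
    Tendsto Q₂ F (𝓝 (-(sig11 m • vec3 1 0 0))) := by
  simpa using (H.tendsto_of_norm_le (H.near.mono fun i hi => hi.jacobi_pos_two)).sub
    (H.tendsto_pos.const_smul (sig11 m))

lemma tendsto_jacobi_mom_two (H : NearFamily F m κ ν τ B g r u Q₂ P₂ Q₃ P₃) :
    Tendsto P₂ F (𝓝 (τ • vec3 0 1 0)) := by
  simpa using (H.tendsto_of_norm_le (H.near.mono fun i hi => hi.jacobi_mom_two)).add
    (((H.tendsto_tiltDir.const_smul τ).add ((H.tendsto_zero.const_mul (sepWeight m)).smul_const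
      (vec3 0 0 1))).sub (H.tendsto_vel.const_smul (sepWeight m)))

lemma tendsto_jacobi_mom_three (H : NearFamily F m κ ν τ B g r u Q₂ P₂ Q₃ P₃) :
    Tendsto P₃ F (𝓝 0) := by
  simpa using (H.tendsto_of_norm_le (H.near.mono fun i hi => hi.jacobi_mom_three)).add
    ((((H.tendsto_zero.mul_const ν).smul H.tendsto_tiltDir).add
      (((H.tendsto_zero.const_mul (sepWeight m / comWeight m)).const_mul (m 3)).smul_const
        (vec3 0 0 1))).add (H.tendsto_vel.const_smul (m 3 * ((m 0 + m 2) / Mtot3 m))))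

end NearFamily

lemma cross3_jacobi_two (Q P r u d e x : V3) (s τ b g : ℝ) :
    cross3 Q P = -((s * τ) • cross3 r d) - (s * b * g) • cross3 (r - x) e
      + ((s * b) • (cross3 r u - g • cross3 x e)
        - s • cross3 r (P - (τ • d + (b * g) • e - b • u)) + cross3 (Q + s • r) P) := by
  simp only [cross3_add_left, cross3_add_right, cross3_sub_left, cross3_sub_right,
    cross3_smul_right, cross3_smul_left]
  module

lemma cross3_jacobi_three (Q P r u d e x : V3) (k ν c l g : ℝ) :
    cross3 Q P = (k * (g * ν)) • cross3 r d + (k * c) • cross3 r e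
      + (k * l * g) • cross3 x e
      + ((k * l) • (cross3 r u - g • cross3 x e)
        + k • cross3 r (P - ((g * ν) • d + c • e + l • u)) + cross3 (Q - k • r) P) := by
  simp only [cross3_add_right, cross3_sub_right, cross3_sub_left, cross3_smul_right,
    cross3_smul_left]
  module

namespace NearFamily

variable {ι : Type*} {F : Filter ι} {m : Fin 4 → ℝ} {κ ν τ B : ℝ} {g : ι → ℝ}
  {r u Q₂ P₂ Q₃ P₃ : ι → V3}

lemma tendsto_angMom_two (H : NearFamily F m κ ν τ B g r u Q₂ P₂ Q₃ P₃) :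
    Tendsto (fun i => cross3 (Q₂ i) (P₂ i)) F (𝓝 (-(sig11 m * τ) • vec3 0 0 1)) := by
  have hlim : cross3 (-(sig11 m • vec3 1 0 0)) (τ • vec3 0 1 0) = -(sig11 m * τ) • vec3 0 0 1 := by
    apply V3.ext <;> simp
  rw [← hlim]
  exact tendsto_cross3 H.tendsto_jacobi_pos_two H.tendsto_jacobi_mom_two

lemma tendsto_angMom_two_sub (H : NearFamily F m κ ν τ B g r u Q₂ P₂ Q₃ P₃) :
    Tendsto (fun i => (g i ^ 2)⁻¹ • (cross3 (Q₂ i) (P₂ i)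
      - (-((sig11 m * τ) • cross3 (r i) (tiltDir (g i)))
        - (sig11 m * sepWeight m * g i) • cross3 (r i - vec3 1 0 0) (vec3 0 0 1)))) F (𝓝 0) := by
  have hw := H.tendsto_inv_pow_smul (n := 2) (by norm_num) (H.near.mono fun i hi => hi.angMom)
  have hp := tendsto_cross3 H.tendsto_pos (H.tendsto_inv_pow_smul (n := 2) (by norm_num)
    (H.near.mono fun i hi => hi.jacobi_mom_two))
  have hq := tendsto_cross3 (H.tendsto_inv_pow_smul (n := 2) (by norm_num)
    (H.near.mono fun i hi => hi.jacobi_pos_two)) H.tendsto_jacobi_mom_two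
  have hlim := ((hw.const_smul (sig11 m * sepWeight m)).sub (hp.const_smul (sig11 m))).add hq
  have hval : (sig11 m * sepWeight m) • 0 - sig11 m • cross3 (vec3 1 0 0) 0
      + cross3 0 (τ • vec3 0 1 0) = 0 := by
    apply V3.ext <;> simp
  rw [hval] at hlim
  refine hlim.congr fun i => ?_
  rw [cross3_jacobi_two (Q₂ i) (P₂ i) (r i) (u i) (tiltDir (g i)) (vec3 0 0 1) (vec3 1 0 0)
    (sig11 m) τ (sepWeight m) (g i), add_sub_cancel_left, cross3_smul_left, cross3_smul_right]
  module

lemma tendsto_angMom_two_zero (H : NearFamily F m κ ν τ B g r u Q₂ P₂ Q₃ P₃) :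
    Tendsto (fun i => cross3 (Q₂ i) (P₂ i) 0 / g i ^ 2) F (𝓝 (sig11 m * τ * κ)) := by
  have hmain := ((V3.tendsto_apply H.tendsto_pos 1).sub
    (H.tendsto_pos_two_div.mul (V3.tendsto_apply H.tendsto_tiltDir 1))).const_mul (-(sig11 m * τ))
  have hlim := (hmain.sub (H.tendsto_pos_one_div.const_mul (sig11 m * sepWeight m))).add
    (V3.tendsto_apply H.tendsto_angMom_two_sub 0)
  simp only [vec3_one_coord, PiLp.zero_apply, zero_sub, mul_one, mul_zero, sub_zero, add_zero,
    neg_mul_neg] at hlim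
  refine hlim.congr' (H.eventually_pos.mono fun i hg => ?_)
  simp only [cross3_zero_coord, PiLp.sub_apply, PiLp.neg_apply, PiLp.smul_apply, smul_eq_mul,
    tiltDir, vec3_one_coord, vec3_two_coord]
  field_simp
  ring

lemma tendsto_angMom_two_one (H : NearFamily F m κ ν τ B g r u Q₂ P₂ Q₃ P₃) :
    Tendsto (fun i => cross3 (Q₂ i) (P₂ i) 1 / g i ^ 2) F (𝓝 (sig11 m * τ)) := by
  have hmain := (V3.tendsto_apply H.tendsto_pos 0).const_mul (sig11 m * τ)
  have hlim := (hmain.add (H.tendsto_pos_zero_div.const_mul (sig11 m * sepWeight m))).add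
    (V3.tendsto_apply H.tendsto_angMom_two_sub 1)
  simp only [vec3_zero_coord, PiLp.zero_apply, mul_one, mul_zero, add_zero] at hlim
  refine hlim.congr' (H.eventually_pos.mono fun i hg => ?_)
  simp only [cross3_one_coord, PiLp.sub_apply, PiLp.neg_apply, PiLp.smul_apply, smul_eq_mul,
    tiltDir, vec3_zero_coord, vec3_two_coord]
  field_simp
  ring

lemma tendsto_angMom_three (H : NearFamily F m κ ν τ B g r u Q₂ P₂ Q₃ P₃) :
    Tendsto (fun i => (g i)⁻¹ • cross3 (Q₃ i) (P₃ i)) F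
      (𝓝 (((m 0 + m 2) / Mtot2 m) • vec3 0 (-angMomWeight m) ν)) := by
  have hw := H.tendsto_inv_pow_smul (n := 1) (by norm_num) (H.near.mono fun i hi => hi.angMom)
  have hp := tendsto_cross3 H.tendsto_pos (H.tendsto_inv_pow_smul (n := 1) (by norm_num)
    (H.near.mono fun i hi => hi.jacobi_mom_three))
  have hq := tendsto_cross3 (H.tendsto_inv_pow_smul (n := 1) (by norm_num)
    (H.near.mono fun i hi => hi.jacobi_pos_three)) H.tendsto_jacobi_mom_three
  set k := (m 0 + m 2) / Mtot2 m
  set c := sepWeight m / comWeight m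
  set l := (m 0 + m 2) / Mtot3 m
  have hd := tendsto_cross3 H.tendsto_pos H.tendsto_tiltDir
  have he := tendsto_cross3 H.tendsto_pos (tendsto_const_nhds (x := vec3 0 0 1))
  have hlim := (((hd.const_smul (k * ν)).add (he.const_smul (k * (m 3 * c)))).add_const
    ((k * (m 3 * l)) • cross3 (vec3 1 0 0) (vec3 0 0 1))).add
      (((hw.const_smul (k * (m 3 * l))).add (hp.const_smul k)).add hq)
  have hval : (k * ν) • cross3 (vec3 1 0 0) (vec3 0 1 0)
      + (k * (m 3 * c)) • cross3 (vec3 1 0 0) (vec3 0 0 1)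
      + (k * (m 3 * l)) • cross3 (vec3 1 0 0) (vec3 0 0 1)
      + ((k * (m 3 * l)) • 0 + k • cross3 (vec3 1 0 0) 0 + cross3 0 0)
        = k • vec3 0 (-(m 3 * (c + l))) ν := by
    apply V3.ext <;> simp
    ring
  rw [hval] at hlim
  refine hlim.congr' (H.eventually_pos.mono fun i hg => ?_)
  beta_reduce
  rw [cross3_jacobi_three (Q₃ i) (P₃ i) (r i) (u i) (tiltDir (g i)) (vec3 0 0 1) (vec3 1 0 0) k ν
    (m 3 * (c * g i)) (m 3 * l) (g i)]
  simp only [cross3_smul_left, cross3_smul_right, pow_one]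
  match_scalars <;> field_simp

end NearFamily

/-! ### Orbital elements of planet 2 in rescaled Jacobi coordinates -/

lemma mu2_pos {m : Fin 4 → ℝ} (hm : ∀ j, 0 < m j) : 0 < mu2 m := by
  have hm₂ := hm 2
  have hM₁ := Mtot1_pos hm
  have hM₂ := Mtot2_pos hm
  unfold mu2
  positivity

lemma sig11_pos {m : Fin 4 → ℝ} (hm : ∀ j, 0 < m j) : 0 < sig11 m :=
  div_pos (hm 1) (Mtot1_pos hm)

lemma inv_mul_smul_cross3_smul_smul {a b : ℝ} (ha : 0 < a) (hb : 0 < b) (q p : V3) :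
    (a * b)⁻¹ • cross3 (a • q) (b • p) = cross3 q p := by
  rw [cross3_smul_left, cross3_smul_right, smul_smul a, inv_smul_smul₀ (mul_pos ha hb).ne']

/-- The Kepler energy of planet 2 in rescaled Jacobi coordinates `a • q₂` and `b • p₂`, the units
being such that `a * b ^ 2 * M₃ = 1`. -/
def rescaledKepE2 (m : Fin 4 → ℝ) (Q P : V3) : ℝ :=
  ‖P‖ ^ 2 / (2 * mu2 m) - mu2 m * Mtot2 m / (Mtot3 m * ‖Q‖)

section rescale

variable {m : Fin 4 → ℝ} {pos vel : Fin 4 → V3} {a b : ℝ}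

lemma rescaledKepE2_smul_smul (ha : 0 < a) (hb : 0 < b)
    (hab : a * b ^ 2 * Mtot3 m = 1) :
    rescaledKepE2 m (a • jq2 m pos) (b • jp2 m vel) = b ^ 2 * kepE2 m pos vel := by
  have hscale : Mtot3 m * a = (b ^ 2)⁻¹ := eq_inv_of_mul_eq_one_left (by linarith)
  rw [rescaledKepE2, kepE2, norm_smul, norm_smul, Real.norm_of_nonneg ha.le,
    Real.norm_of_nonneg hb.le, ← mul_assoc, hscale,
    div_mul_eq_div_div _ (b ^ 2)⁻¹, div_inv_eq_mul]
  ring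

lemma ecc2_eq_sqrt (hm : ∀ j, 0 < m j) (ha : 0 < a) (hb : 0 < b)
    (hab : a * b ^ 2 * Mtot3 m = 1) (hE : kepE2 m pos vel < 0) :
    ecc2 m pos vel = √(1 + 2 * rescaledKepE2 m (a • jq2 m pos) (b • jp2 m vel) *
      (Mtot3 m ^ 2 * ‖cross3 (a • jq2 m pos) (b • jp2 m vel)‖ ^ 2) /
        (mu2 m ^ 3 * Mtot2 m ^ 2)) := by
  have hM₂ := Mtot2_pos hm
  have hμ := mu2_pos hm
  have hE' : 0 < -kepE2 m pos vel := neg_pos.2 hE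
  have hsma : sma2 m pos vel = mu2 m * Mtot2 m / (2 * -kepE2 m pos vel) := by
    rw [sma2, mul_neg, div_neg, neg_div]
  have hsma_pos : 0 < sma2 m pos vel := by
    rw [hsma]
    positivity
  have hscale : Mtot3 m = (a * b ^ 2)⁻¹ := eq_inv_of_mul_eq_one_right hab
  rw [ecc2, Lact2, mul_pow, Real.sq_sqrt (by positivity), hsma,
    rescaledKepE2_smul_smul ha hb hab, angC2, ← inv_mul_smul_cross3_smul_smul ha hb, norm_smul,
    Real.norm_of_nonneg (by positivity), hscale]
  congr 1
  field_simp
  ring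

end rescale

lemma abs_toReal_eq_arccos_cos (φ : Real.Angle) : |φ.toReal| = Real.arccos φ.cos := by
  rw [← Real.Angle.cos_toReal, ← Real.cos_abs,
    Real.arccos_cos (abs_nonneg _) (Real.Angle.abs_toReal_le_pi φ)]

lemma exists_cos_add_coe_ne_zero (φ : Real.Angle) {δ : ℝ} (hδ : 0 < δ) :
    ∃ η : ℝ, |(η : Real.Angle).toReal| < δ ∧ (φ + (η : Real.Angle)).cos ≠ 0 := by
  by_cases hc : φ.cos = 0
  · set η := min (δ / 2) 1
    have hη : 0 < η := by positivity
    have hηπ : η < π := (min_le_right _ _).trans_lt (by linarith [Real.pi_gt_three])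
    refine ⟨η, ?_, ?_⟩
    · rw [Real.Angle.abs_toReal_coe_eq_self_iff.2 ⟨hη.le, hηπ.le⟩]
      exact (min_le_left _ _).trans_lt (half_lt_self hδ)
    · have hs : φ.sin ≠ 0 := fun hs => by
        have hone := Real.Angle.cos_sq_add_sin_sq φ
        norm_num [hc, hs] at hone
      rw [Real.Angle.cos_add, hc, zero_mul, zero_sub, neg_ne_zero, Real.Angle.sin_coe]
      exact mul_ne_zero hs (Real.sin_pos_of_pos_of_lt_pi hη hηπ).ne'
  · exact ⟨0, by simpa using hδ, by simpa using hc⟩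

lemma coe_arg_mul_tan {φ : Real.Angle} (hφ : φ.cos ≠ 0) {t : ℝ} (ht : 0 < t) :
    ((Complex.arg ⟨t * (φ.cos / |φ.cos|), t * (φ.cos / |φ.cos|) * (φ.sin / φ.cos)⟩ : ℝ) :
      Real.Angle) = φ := by
  have hpolar : (⟨t * (φ.cos / |φ.cos|), t * (φ.cos / |φ.cos|) * (φ.sin / φ.cos)⟩ : ℂ)
      = ((t / |φ.cos| : ℝ) : ℂ) * ((φ.cos : ℂ) + (φ.sin : ℂ) * Complex.I) := by
    apply Complex.ext
    · simp
      ring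
    · simp
      field_simp
  rw [hpolar, Complex.arg_mul_cos_add_sin_mul_I_coe_angle (by positivity)]

lemma angle_smul_vec3_smul_vec3 {s w θ k : ℝ} (hs : s ≠ 0) (hw : 0 < w) (hk : 0 < k)
    (hθ : θ ∈ Ioo 0 π) : InnerProductGeometry.angle (s • vec3 0 0 1)
      (k • vec3 0 (-w) (s / |s| * (w * Real.cos θ / Real.sin θ))) = θ := by
  have hsin : 0 < Real.sin θ := Real.sin_pos_of_mem_Ioo hθ
  have hs' : 0 < |s| := abs_pos.2 hs
  have hsign : (s / |s|) ^ 2 = 1 := by rw [div_pow, sq_abs, div_self (by positivity)]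
  have hfst : s • vec3 0 0 1 = |s| • vec3 0 0 (s / |s|) := by
    apply V3.ext <;> simp
    field_simp
  have hsnd : vec3 0 (-w) (s / |s| * (w * Real.cos θ / Real.sin θ))
      = (w / Real.sin θ) • vec3 0 (-Real.sin θ) (s / |s| * Real.cos θ) := by
    apply V3.ext <;> simp
    · field_simp
    · ring
  have hnorm_fst : ‖vec3 0 0 (s / |s|)‖ = 1 := norm_vec3_eq_one (by linarith)
  have hnorm_snd : ‖vec3 0 (-Real.sin θ) (s / |s| * Real.cos θ)‖ = 1 := norm_vec3_eq_one (by
    rw [mul_pow, hsign]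
    linarith [Real.sin_sq_add_cos_sq θ])
  have hinner : ⟪vec3 0 0 (s / |s|), vec3 0 (-Real.sin θ) (s / |s| * Real.cos θ)⟫ = Real.cos θ := by
    rw [V3.inner_eq]
    simp only [vec3_zero_coord, vec3_one_coord, vec3_two_coord]
    linear_combination Real.cos θ * hsign
  rw [InnerProductGeometry.angle_smul_right_of_pos _ _ hk, hfst, hsnd,
    InnerProductGeometry.angle_smul_right_of_pos _ _ (by positivity),
    InnerProductGeometry.angle_smul_left_of_pos _ _ hs', InnerProductGeometry.angle, hnorm_fst,
    hnorm_snd, hinner, mul_one, div_one, Real.arccos_cos hθ.1.le hθ.2.le]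

/-! ### Drift along an itinerary -/

/-- A near family realised by configurations `pos` and velocities `vel`, with units of length and
of velocity `(a i)⁻¹` and `(b i)⁻¹` in which the total mass is `1`. -/
structure RealisedFamily {ι : Type*} (F : Filter ι) (m : Fin 4 → ℝ) (κ ν τ B : ℝ) (g a b : ι → ℝ)
    (r u : ι → V3) (pos vel : ι → Fin 4 → V3) : Prop extends
    NearFamily F m κ ν τ B g r u (fun i => a i • jq2 m (pos i)) (fun i => b i • jp2 m (vel i))
      (fun i => a i • jq3 m (pos i)) (fun i => b i • jp3 m (vel i)) where
  scale : ∀ᶠ i in F, 0 < a i ∧ 0 < b i ∧ a i * b i ^ 2 * Mtot3 m = 1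

namespace RealisedFamily

variable {ι : Type*} {F : Filter ι} {m : Fin 4 → ℝ} {κ ν τ B e θ t : ℝ} {g a b : ι → ℝ}
  {r u : ι → V3} {pos vel : ι → Fin 4 → V3}

lemma tendsto_rescaledKepE2 (hm : ∀ j, 0 < m j)
    (H : RealisedFamily F m κ ν τ B g a b r u pos vel)
    (hτ : τ ^ 2 = mu2 m ^ 2 * Mtot2 m * (1 - e) / (sig11 m * Mtot3 m)) :
    Tendsto (fun i => rescaledKepE2 m (a i • jq2 m (pos i)) (b i • jp2 m (vel i))) F
      (𝓝 (-(mu2 m * Mtot2 m * (1 + e) / (2 * (Mtot3 m * sig11 m))))) := by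
  have hσ := sig11_pos hm
  have hM := Mtot3_pos hm
  have hμ := mu2_pos hm
  have hQ := H.tendsto_jacobi_pos_two.norm
  have hP := H.tendsto_jacobi_mom_two.norm.pow 2
  rw [norm_neg, norm_smul, norm_vec3_eq_one (by norm_num), mul_one,
    Real.norm_of_nonneg hσ.le] at hQ
  rw [norm_smul, norm_vec3_eq_one (by norm_num), mul_one, Real.norm_eq_abs, sq_abs, hτ] at hP
  have hval : mu2 m ^ 2 * Mtot2 m * (1 - e) / (sig11 m * Mtot3 m) / (2 * mu2 m)
      - mu2 m * Mtot2 m / (Mtot3 m * sig11 m)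
        = -(mu2 m * Mtot2 m * (1 + e) / (2 * (Mtot3 m * sig11 m))) := by
    field_simp
    ring
  rw [← hval]
  exact (hP.div_const _).sub (tendsto_const_nhds.div (hQ.const_mul (Mtot3 m)) (by positivity))

lemma eventually_kepE2_neg (hm : ∀ j, 0 < m j)
    (H : RealisedFamily F m κ ν τ B g a b r u pos vel) (he : 0 < e)
    (hτ : τ ^ 2 = mu2 m ^ 2 * Mtot2 m * (1 - e) / (sig11 m * Mtot3 m)) :
    ∀ᶠ i in F, kepE2 m (pos i) (vel i) < 0 := by
  have hσ := sig11_pos hm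
  have hM₂ := Mtot2_pos hm
  have hM₃ := Mtot3_pos hm
  have hμ := mu2_pos hm
  have hlim : -(mu2 m * Mtot2 m * (1 + e) / (2 * (Mtot3 m * sig11 m))) < 0 := by
    rw [neg_lt_zero]
    positivity
  filter_upwards [(H.tendsto_rescaledKepE2 hm hτ).eventually_lt_const hlim, H.scale]
    with i hi ⟨ha, hb, hab⟩
  rw [rescaledKepE2_smul_smul ha hb hab] at hi
  exact neg_of_mul_neg_right hi (sq_nonneg _)

lemma tendsto_ecc2 (hm : ∀ j, 0 < m j) (H : RealisedFamily F m κ ν τ B g a b r u pos vel)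
    (he : 0 < e) (hτ : τ ^ 2 = mu2 m ^ 2 * Mtot2 m * (1 - e) / (sig11 m * Mtot3 m)) :
    Tendsto (fun i => ecc2 m (pos i) (vel i)) F (𝓝 e) := by
  have hσ := sig11_pos hm
  have hM₂ := Mtot2_pos hm
  have hM₃ := Mtot3_pos hm
  have hμ := mu2_pos hm
  have hC := H.tendsto_angMom_two.norm.pow 2
  rw [norm_smul, norm_vec3_eq_one (by norm_num), mul_one, Real.norm_eq_abs, sq_abs, neg_sq,
    mul_pow, hτ] at hC
  have hlim := ((((H.tendsto_rescaledKepE2 hm hτ).const_mul 2).mul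
    (hC.const_mul (Mtot3 m ^ 2))).div_const (mu2 m ^ 3 * Mtot2 m ^ 2)).const_add 1 |>.sqrt
  have hval : 1 + 2 * -(mu2 m * Mtot2 m * (1 + e) / (2 * (Mtot3 m * sig11 m))) *
      (Mtot3 m ^ 2 * (sig11 m ^ 2 * (mu2 m ^ 2 * Mtot2 m * (1 - e) / (sig11 m * Mtot3 m)))) /
        (mu2 m ^ 3 * Mtot2 m ^ 2) = e ^ 2 := by
    field_simp
    ring
  rw [hval, Real.sqrt_sq he.le] at hlim
  refine hlim.congr' ?_
  filter_upwards [H.eventually_kepE2_neg hm he hτ, H.scale] with i hE ⟨ha, hb, hab⟩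
  rw [ecc2_eq_sqrt hm ha hb hab hE]

lemma eventually_angC2_one_ne_zero (hm : ∀ j, 0 < m j)
    (H : RealisedFamily F m κ ν τ B g a b r u pos vel) (hτ : τ ≠ 0) :
    ∀ᶠ i in F, angC2 m (pos i) (vel i) 1 ≠ 0 := by
  filter_upwards [H.scale, H.tendsto_angMom_two_one.eventually_ne
    (mul_ne_zero (sig11_pos hm).ne' hτ)] with i ⟨ha, hb, _⟩ hC hzero
  rw [angC2, ← inv_mul_smul_cross3_smul_smul ha hb, PiLp.smul_apply, smul_eq_mul] at hzero
  refine hC ?_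
  rw [(mul_eq_zero.1 hzero).resolve_left (by positivity), zero_div]

lemma angMom_three_limit_ne_zero (hm : ∀ j, 0 < m j) (ν : ℝ) :
    ((m 0 + m 2) / Mtot2 m) • vec3 0 (-angMomWeight m) ν ≠ 0 := fun hzero => by
  have hk : 0 < (m 0 + m 2) / Mtot2 m := div_pos (add_pos (hm 0) (hm 2)) (Mtot2_pos hm)
  have hcoord := congrArg (fun w : V3 => w 1) hzero
  simp only [PiLp.smul_apply, vec3_one_coord, smul_eq_mul, PiLp.zero_apply, mul_neg,
    neg_eq_zero] at hcoord
  exact (mul_pos hk (angMomWeight_pos hm)).ne' hcoord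

lemma eventually_angC3_ne_zero (hm : ∀ j, 0 < m j)
    (H : RealisedFamily F m κ ν τ B g a b r u pos vel) :
    ∀ᶠ i in F, angC3 m (pos i) (vel i) ≠ 0 := by
  filter_upwards [H.scale, H.tendsto_angMom_three.eventually_ne
    (angMom_three_limit_ne_zero hm ν)] with i ⟨ha, hb, _⟩ hC hzero
  rw [angC3, ← inv_mul_smul_cross3_smul_smul ha hb] at hzero
  refine hC ?_
  rw [(smul_eq_zero.1 hzero).resolve_left (by positivity), smul_zero]

lemma tendsto_incl23 (hm : ∀ j, 0 < m j) (H : RealisedFamily F m κ ν τ B g a b r u pos vel)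
    (hτ : τ ≠ 0) (hθ : θ ∈ Ioo 0 π)
    (hν : ν = -(τ / |τ|) * (angMomWeight m * Real.cos θ / Real.sin θ)) :
    Tendsto (fun i => incl23 m (pos i) (vel i)) F (𝓝 θ) := by
  have hσ := sig11_pos hm
  have hk : 0 < (m 0 + m 2) / Mtot2 m := div_pos (add_pos (hm 0) (hm 2)) (Mtot2_pos hm)
  have hs : -(sig11 m * τ) ≠ 0 := neg_ne_zero.2 (mul_ne_zero hσ.ne' hτ)
  have hsign : -(sig11 m * τ) / |-(sig11 m * τ)| = -(τ / |τ|) := by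
    rw [abs_neg, abs_mul, abs_of_pos hσ, neg_div, mul_div_mul_left _ _ hσ.ne']
  have hC₂ : -(sig11 m * τ) • vec3 0 0 1 ≠ 0 :=
    smul_ne_zero hs (norm_ne_zero_iff.1 (by rw [norm_vec3_eq_one (by norm_num)]; norm_num))
  have hangle := angle_smul_vec3_smul_vec3 hs (angMomWeight_pos hm) hk hθ
  rw [hsign, ← hν] at hangle
  have hlim := (InnerProductGeometry.continuousAt_angle (x := (_, _)) hC₂
    (angMom_three_limit_ne_zero hm ν)).tendsto.comp
      (H.tendsto_angMom_two.prodMk_nhds H.tendsto_angMom_three)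
  simp only [hangle] at hlim
  refine hlim.congr' ?_
  filter_upwards [H.eventually_pos, H.scale] with i hg ⟨ha, hb, _⟩
  rw [incl23, ← InnerProductGeometry.angle, angC2, angC3, ← inv_mul_smul_cross3_smul_smul ha hb,
    ← inv_mul_smul_cross3_smul_smul ha hb (jq3 m (pos i)),
    InnerProductGeometry.angle_smul_left_of_pos _ _ (by positivity),
    InnerProductGeometry.angle_smul_right_of_pos _ _ (by positivity)]
  exact InnerProductGeometry.angle_smul_right_of_pos _ _ (by positivity)

lemma node2_eq_coe_arg {m : Fin 4 → ℝ} {pos vel : Fin 4 → V3} {a b g : ℝ} (ha : 0 < a) (hb : 0 < b)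
    (hg : 0 < g) : node2 m pos vel =
      ((Complex.arg ⟨-(cross3 (a • jq2 m pos) (b • jp2 m vel) 1 / g ^ 2),
        cross3 (a • jq2 m pos) (b • jp2 m vel) 0 / g ^ 2⟩ : ℝ) : Real.Angle) := by
  rw [node2, angC2, ← Complex.arg_real_mul ⟨-(cross3 (a • jq2 m pos) (b • jp2 m vel) 1 / g ^ 2), _⟩
    (by positivity : 0 < g ^ 2 / (a * b))]
  congr 2
  rw [← inv_mul_smul_cross3_smul_smul ha hb]
  apply Complex.ext
  · rw [Complex.re_ofReal_mul]
    simp only [PiLp.smul_apply, smul_eq_mul]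
    field_simp
  · rw [Complex.im_ofReal_mul]
    simp only [PiLp.smul_apply, smul_eq_mul]
    field_simp

lemma tendsto_node2 (hm : ∀ j, 0 < m j) (H : RealisedFamily F m κ ν τ B g a b r u pos vel)
    {φ : Real.Angle} (hφ : φ.cos ≠ 0) (ht : 0 < t) (hτ : τ = -(t * (φ.cos / |φ.cos|)))
    (hκ : κ = -(φ.sin / φ.cos)) : Tendsto (fun i => node2 m (pos i) (vel i)) F (𝓝 φ) := by
  have hσt := mul_pos (sig11_pos hm) ht
  set s := sig11 m * t * (φ.cos / |φ.cos|) with hs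
  have hs₀ : s ≠ 0 := mul_ne_zero hσt.ne' (div_ne_zero hφ (abs_ne_zero.2 hφ))
  have hone : -(sig11 m * τ) = s := by
    rw [hτ, hs]
    ring
  have hzero : sig11 m * τ * κ = s * (φ.sin / φ.cos) := by
    rw [hτ, hκ, hs]
    ring
  have hz := (Complex.equivRealProdCLM.symm.continuous.tendsto (_, _)).comp
    (H.tendsto_angMom_two_one.neg.prodMk_nhds H.tendsto_angMom_two_zero)
  rw [hone, hzero] at hz
  have hz₀ : (⟨s, s * (φ.sin / φ.cos)⟩ : ℂ) ≠ 0 := fun h => hs₀ (congrArg Complex.re h)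
  have hlim := (Complex.continuousAt_arg_coe_angle hz₀).tendsto.comp hz
  rw [Function.comp_apply, coe_arg_mul_tan hφ hσt] at hlim
  refine hlim.congr' ?_
  filter_upwards [H.eventually_pos, H.scale] with i hg ⟨ha, hb, _⟩
  exact (node2_eq_coe_arg ha hb hg).symm

end RealisedFamily

/-- The conclusion of the theorem for one instant: the orbit of planet 2 is elliptic with
nondegenerate node and mutual inclination, and its elements are within `δ` of `e`, `θ`, `φ`. -/
def IsShadowed (m : Fin 4 → ℝ) (e θ : ℝ) (φ : Real.Angle) (δ : ℝ) (pos vel : Fin 4 → V3) : Prop :=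
  kepE2 m pos vel < 0 ∧ angC2 m pos vel ≠ 0 ∧ angC3 m pos vel ≠ 0 ∧
    (angC2 m pos vel 0, angC2 m pos vel 1) ≠ ((0 : ℝ), (0 : ℝ)) ∧
    |ecc2 m pos vel - e| ≤ δ ∧ |incl23 m pos vel - θ| ≤ δ ∧ |(node2 m pos vel - φ).toReal| ≤ δ

lemma eventually_abs_sub_le {ι : Type*} {F : Filter ι} {f : ι → ℝ} {c δ : ℝ}
    (h : Tendsto f F (𝓝 c)) (hδ : 0 < δ) : ∀ᶠ i in F, |f i - c| ≤ δ :=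
  (h.eventually (Metric.closedBall_mem_nhds c hδ)).mono fun _ hi => hi

lemma eventually_abs_toReal_sub_le {ι : Type*} {F : Filter ι} {f : ι → Real.Angle}
    {φ : Real.Angle} {η δ : ℝ} (h : Tendsto f F (𝓝 (φ + (η : Real.Angle))))
    (hη : |(η : Real.Angle).toReal| < δ) : ∀ᶠ i in F, |(f i - φ).toReal| ≤ δ := by
  have hcos := (Real.Angle.continuous_cos.tendsto _).comp (h.sub_const φ)
  rw [add_sub_cancel_left] at hcos
  rw [abs_toReal_eq_arccos_cos] at hη
  filter_upwards [((Real.continuous_arccos.tendsto _).comp hcos).eventually_le_const hη] with i hi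
  rwa [abs_toReal_eq_arccos_cos]

lemma exists_params_eventually_isShadowed {m : Fin 4 → ℝ} (hm : ∀ j, 0 < m j) {e θ δ : ℝ}
    (he : e ∈ Ioo (0 : ℝ) 1) (hθ : θ ∈ Ioo 0 π) (φ : Real.Angle) (hδ : 0 < δ) :
    ∃ κ ν τ : ℝ, ∀ {B : ℝ} {ι : Type} {F : Filter ι} {g a b : ι → ℝ} {r u : ι → V3}
      {pos vel : ι → Fin 4 → V3}, RealisedFamily F m κ ν τ B g a b r u pos vel →
        ∀ᶠ i in F, IsShadowed m e θ φ δ (pos i) (vel i) := by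
  have hσ := sig11_pos hm
  have hM₂ := Mtot2_pos hm
  have hM₃ := Mtot3_pos hm
  have hμ := mu2_pos hm
  have he₁ : 0 < 1 - e := sub_pos.2 he.2
  obtain ⟨η, hη, hcos⟩ := exists_cos_add_coe_ne_zero φ hδ
  set ψ := φ + (η : Real.Angle)
  have hsign : (ψ.cos / |ψ.cos|) ^ 2 = 1 := by
    rw [div_pow, sq_abs, div_self (pow_ne_zero 2 hcos)]
  set t := √(mu2 m ^ 2 * Mtot2 m * (1 - e) / (sig11 m * Mtot3 m))
  have ht : 0 < t := by positivity
  obtain ⟨τ, hτ⟩ : ∃ τ, τ = -(t * (ψ.cos / |ψ.cos|)) := ⟨_, rfl⟩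
  have hτ_sq : τ ^ 2 = mu2 m ^ 2 * Mtot2 m * (1 - e) / (sig11 m * Mtot3 m) := by
    rw [hτ, neg_sq, mul_pow, hsign, mul_one, Real.sq_sqrt (by positivity)]
  have hτ₀ : τ ≠ 0 := pow_ne_zero_iff two_ne_zero |>.1 (hτ_sq ▸ by positivity)
  refine ⟨-(ψ.sin / ψ.cos), -(τ / |τ|) * (angMomWeight m * Real.cos θ / Real.sin θ), τ,
    fun {B ι F g a b r u pos vel} H => ?_⟩
  filter_upwards [H.eventually_kepE2_neg hm he.1 hτ_sq, H.eventually_angC2_one_ne_zero hm hτ₀,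
    H.eventually_angC3_ne_zero hm, eventually_abs_sub_le (H.tendsto_ecc2 hm he.1 hτ_sq) hδ,
    eventually_abs_sub_le (H.tendsto_incl23 hm hτ₀ hθ rfl) hδ,
    eventually_abs_toReal_sub_le (H.tendsto_node2 hm hcos ht hτ rfl) hη]
    with i hE hC₂ hC₃ hecc hincl hnode
  exact ⟨hE, fun h => hC₂ (by rw [h]; rfl), hC₃, fun h => hC₂ (congrArg Prod.snd h), hecc, hincl,
    hnode⟩

lemma eventually_small_param (B : ℝ) :
    ∀ᶠ g : ℝ in 𝓝[>] 0, 0 < g ∧ g ≤ 1 / 100 ∧ B * g ≤ 1 / 2100 := by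
  filter_upwards [Ioc_mem_nhdsGT (show (0 : ℝ) < 1 / 100 by norm_num),
    eventually_const_mul_le B (show (0 : ℝ) < 1 / 2100 by norm_num)] with g hg hBg
  exact ⟨hg.1, hg.2, hBg⟩

theorem fourBody_drift_ecc_incl_node_general
    (m : Fin 4 → ℝ) (hm : ∀ j, 0 < m j)
    (N : ℕ) (e2itin θ23itin : Fin (N + 1) → ℝ) (h2itin : Fin (N + 1) → Real.Angle)
    (he2 : ∀ k, e2itin k ∈ Set.Ioo (0 : ℝ) 1)
    (hθ23 : ∀ k, θ23itin k ∈ Set.Ioo (0 : ℝ) π)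
    (δ : ℝ) (hδ : 0 < δ) :
    ∃ T > (0 : ℝ), ∃ x v : Fin 4 → ℝ → V3,
      IsFourBodySolution m (Set.Icc 0 T) x v ∧
      ∃ t : Fin (N + 1) → ℝ, StrictMono t ∧ (∀ k, t k ∈ Set.Icc (0 : ℝ) T) ∧
        ∀ k : Fin (N + 1),
          kepE2 m (posAt x (t k)) (posAt v (t k)) < 0 ∧
          angC2 m (posAt x (t k)) (posAt v (t k)) ≠ 0 ∧
          angC3 m (posAt x (t k)) (posAt v (t k)) ≠ 0 ∧
          (angC2 m (posAt x (t k)) (posAt v (t k)) 0,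
            angC2 m (posAt x (t k)) (posAt v (t k)) 1) ≠ ((0 : ℝ), (0 : ℝ)) ∧
          |ecc2 m (posAt x (t k)) (posAt v (t k)) - e2itin k| ≤ δ ∧
          |incl23 m (posAt x (t k)) (posAt v (t k)) - θ23itin k| ≤ δ ∧
          |(node2 m (posAt x (t k)) (posAt v (t k)) - h2itin k).toReal| ≤ δ := by
  choose κ ν τ hshadow using fun k =>
    exists_params_eventually_isShadowed hm (he2 k) (hθ23 k) (h2itin k) hδ
  set B := ∑ k, |κ k|
  have hκ k : |κ k| ≤ B :=
    Finset.single_le_sum (f := fun k => |κ k|) (fun _ _ => abs_nonneg _) (Finset.mem_univ k)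
  have hsmall := eventually_small_param B
  have hitin (g : ℝ) (hg : 0 < g ∧ g ≤ 1 / 100 ∧ B * g ≤ 1 / 2100) :=
    exists_itinerary hm κ ν τ hg.1 hg.2.1 hκ hg.2.2 (pow_pos hg.1 4)
  choose! T hT x v hsol t hmono ht a ha b hb hab r u hnear using hitin
  have hall : ∀ᶠ g : ℝ in 𝓝[>] 0, ∀ k, IsShadowed m (e2itin k) (θ23itin k) (h2itin k) δ
      (posAt (x g) (t g k)) (posAt (v g) (t g k)) := eventually_all.2 fun k =>
    hshadow k (g := id) (r := fun g => r g k) (u := fun g => u g k)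
      { tendsto := tendsto_id
        near := hsmall.mono fun g hg => hnear g hg k
        scale := hsmall.mono fun g hg => ⟨ha g hg, hb g hg, hab g hg⟩ }
  obtain ⟨g, hg, hk⟩ := (hsmall.and hall).exists
  exact ⟨T g, hT g hg, x g, v g, hsol g hg, t g, hmono g hg, ht g hg, hk⟩

/-- **Drift in eccentricity, mutual inclination and node of the second planet.** -/
theorem fourBody_drift_ecc_incl_node
    (m : Fin 4 → ℝ) (hm : ∀ j, 0 < m j) (hm01 : m 0 ≠ m 1)
    (N : ℕ) (e2itin θ23itin : Fin (N + 1) → ℝ) (h2itin : Fin (N + 1) → Real.Angle)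
    (he2 : ∀ k, e2itin k ∈ Set.Ioo (0:ℝ) 1)
    (hθ23 : ∀ k, θ23itin k ∈ Set.Ioo (0:ℝ) π)
    (δ : ℝ) (hδ : 0 < δ) :
    ∃ T > (0:ℝ), ∃ x v : Fin 4 → ℝ → V3,
      IsFourBodySolution m (Set.Icc 0 T) x v ∧
      ∃ t : Fin (N + 1) → ℝ, StrictMono t ∧ (∀ k, t k ∈ Set.Icc (0:ℝ) T) ∧
        ∀ k : Fin (N + 1),
          kepE2 m (posAt x (t k)) (posAt v (t k)) < 0 ∧
          angC2 m (posAt x (t k)) (posAt v (t k)) ≠ 0 ∧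
          angC3 m (posAt x (t k)) (posAt v (t k)) ≠ 0 ∧
          (angC2 m (posAt x (t k)) (posAt v (t k)) 0,
            angC2 m (posAt x (t k)) (posAt v (t k)) 1) ≠ ((0:ℝ), (0:ℝ)) ∧
          |ecc2 m (posAt x (t k)) (posAt v (t k)) - e2itin k| ≤ δ ∧
          |incl23 m (posAt x (t k)) (posAt v (t k)) - θ23itin k| ≤ δ ∧
          |(node2 m (posAt x (t k)) (posAt v (t k)) - h2itin k).toReal| ≤ δ :=
  fourBody_drift_ecc_incl_node_general m hm N e2itin θ23itin h2itin he2 hθ23 δ hδ
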